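/- arXiv:2211.13255 — 3 statements merged into one kernel-verified Lean document; each statement's English description precedes it below -/
import Mathlib

section
/- Let p# denote the primorial of a prime p, i.e. the product of all primes q with q ≤ p, let π denote the prime-counting function and φ Euler's totient function. Then, as p tends to infinity along the primes, π(p#)/φ(p#) = (e^γ · ln p / p)·(1 + o(1)), where γ is the Euler–Mascheroni constant; equivalently, the quantity (π(p#)·p)/(φ(p#)·ln p) tends to e^γ as p → ∞ over primes. -/
/-!
Write `N = p#`. The quantity factors as
`(π(N) log N / N) · (N / φ(N) / log p) · (p / log N)`, and the three factors tend to `1`, `e^γ`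
and `1` respectively.

**Prime number theorem** (`tendsto_psi_div`, `tendsto_theta_div`,
`tendsto_primeCounting_mul_log_div`). The first factor is the prime number theorem at `N`, and the
third is the prime number theorem at `p` in the form `θ(x) ~ x`, because `log p# = θ(p)`. It is
proved by the Wiener–Ikehara method. Let `f(u) = ψ(e^u) e^{-u}`, and subtract from it the
indicator of `u > 0`. The Laplace transform of the difference extends continuously to
`Re s ≥ 0`; this is the nonvanishing of `ζ` on `Re s = 1`, available in Mathlib. Averaging the
difference against a Fejér kernel centred at `y` turns it into the Fourier integral of a
continuous compactly supported function, so the Riemann–Lebesgue lemma makes the averages tend to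
`0` as `y → ∞` (`fejer_limit`). As `e^u f(u)` is monotone, `f` itself tends to `1` (`tauberian`).

**Mertens' third theorem** (`tendsto_primorial_div_totient_div_log`). The second factor is
`∏_{q ≤ p} (1 - 1/q)⁻¹ / log p`. Its logarithm is `∑_{q ≤ p} 1/q - log log p` plus the partial sums
of the convergent series `∑_q (-log (1 - 1/q) - 1/q)`. Mertens' first theorem and Dirichlet's test
show that `∑_{q ≤ x} 1/q - log log x` has some limit `C` (`exists_tendsto_mertens`). To identify
`C`, compare `P(u) = ∑_{q ≤ e^u} 1/q` with the harmonic number `H(⌊u⌋)`: their difference tends to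
`C - γ`, hence so does its Abel mean `ε ∫ (P(u) - H(⌊u⌋)) e^{-εu} du` as `ε → 0⁺`. That mean equals
`∑_q q^{-1-ε} + log (1 - e^{-ε})`, and the Euler product together with the simple pole of `ζ` at `1`
gives it the limit `-∑_q (-log (1 - 1/q) - 1/q)` (`tendsto_primeRecipSum_sub_loglog`).
-/

open Filter Real Nat

section Auxiliary

open MeasureTheory Topology FourierTransform

/-! ### The Fejér kernel -/

/-- The Fejér kernel `v ↦ sin²(π l v) / (π² l v²)`, with value `l` at `v = 0` (as `sinc 0 = 1`). -/
noncomputable def fejer (l v : ℝ) : ℝ := l * Real.sinc (Real.pi * l * v) ^ 2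

/-- The triangle function `max(0, 1 - |t| / l)`, supported on `[-l, l]`, whose Fourier transform is
`fejer l`; complex-valued so that `𝓕` applies to it. -/
noncomputable def tri (l t : ℝ) : ℂ := ((max 0 (1 - |t| / l) : ℝ) : ℂ)

lemma fejer_nonneg {l : ℝ} (hl : 0 < l) (v : ℝ) : 0 ≤ fejer l v := by
  unfold fejer; positivity

lemma continuous_fejer (l : ℝ) : Continuous (fejer l) := by
  unfold fejer
  have := Real.continuous_sinc
  fun_prop

lemma sinc_sq_le (x : ℝ) : Real.sinc x ^ 2 ≤ 2 / (1 + x ^ 2) := by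
  rw [le_div_iff₀ (by positivity)]
  have h1 : Real.sinc x ^ 2 ≤ 1 := by
    rw [sq_le_one_iff_abs_le_one]; exact Real.abs_sinc_le_one x
  have h2 : Real.sinc x ^ 2 * x ^ 2 ≤ 1 := by
    rcases eq_or_ne x 0 with rfl | hx
    · simp
    · rw [Real.sinc_of_ne_zero hx, div_pow, div_mul_cancel₀ _ (by positivity)]
      exact Real.sin_sq_le_one x
  nlinarith

lemma integrable_fejer_one : Integrable (fejer 1) := by
  have h : Integrable (fun v : ℝ => 2 * (1 + (Real.pi * v) ^ 2)⁻¹) :=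
    (integrable_inv_one_add_sq.comp_mul_left' Real.pi_ne_zero).const_mul 2
  refine h.mono' (continuous_fejer 1).aestronglyMeasurable (ae_of_all _ fun v => ?_)
  rw [Real.norm_of_nonneg (fejer_nonneg one_pos v)]
  have := sinc_sq_le (Real.pi * v)
  simpa [fejer, div_eq_mul_inv] using this

lemma fejer_eq (l v : ℝ) : fejer l v = l * fejer 1 (l * v) := by
  simp [fejer, mul_assoc]

lemma integrable_fejer {l : ℝ} (hl : 0 < l) : Integrable (fejer l) := by
  rw [show fejer l = fun v => l * fejer 1 (l * v) from funext (fejer_eq l)]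
  exact (integrable_fejer_one.comp_mul_left' hl.ne').const_mul l

lemma integral_fejer_pos : 0 < ∫ v, fejer 1 v := by
  rw [integral_pos_iff_support_of_nonneg (fejer_nonneg one_pos) integrable_fejer_one]
  refine IsOpen.measure_pos _ (continuous_fejer 1).isOpen_support ⟨0, ?_⟩
  simp [fejer]

lemma continuous_tri (l : ℝ) : Continuous (tri l) := by
  unfold tri; fun_prop

lemma tri_eq_zero {l t : ℝ} (hl : 0 < l) (ht : l ≤ |t|) : tri l t = 0 := by
  have : 1 - |t| / l ≤ 0 := by
    rw [sub_nonpos, le_div_iff₀ hl]; linarith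
  simp [tri, this]

lemma hasCompactSupport_tri {l : ℝ} (hl : 0 < l) : HasCompactSupport (tri l) := by
  refine HasCompactSupport.intro (isCompact_Icc (a := -l) (b := l)) fun t ht => ?_
  apply tri_eq_zero hl
  by_contra! h
  exact ht (abs_le.mp h.le)

lemma integrable_tri {l : ℝ} (hl : 0 < l) : Integrable (tri l) :=
  (continuous_tri l).integrable_of_hasCompactSupport (hasCompactSupport_tri hl)

/-- Excluding `v = 0` keeps the explicit primitive of `e^{-2πitv} (1 - |t| / l)` meaningful; a null set
is irrelevant for the integrals in which this is used. -/
lemma fourier_tri {l v : ℝ} (hl : 0 < l) (hv : v ≠ 0) : 𝓕 (tri l) v = fejer l v := by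
  rw [Real.fourier_real_eq_integral_exp_smul]
  have hpi := Real.pi_ne_zero
  -- `c` is kept opaque to `ring` and `field_simp` until the final trigonometric simplification.
  obtain ⟨c, hc⟩ : ∃ c : ℂ, c = -2 * Real.pi * v * Complex.I := ⟨_, rfl⟩
  have hc0 : c ≠ 0 := by
    rw [hc]; simp [hv, Real.pi_ne_zero]
  have hl0 : (l : ℂ) ≠ 0 := by exact_mod_cast hl.ne'
  have hexp : ∀ t : ℝ, Complex.exp (↑(-2 * Real.pi * t * v) * Complex.I) = Complex.exp (c * t) := by
    intro t; rw [hc]; congr 1; push_cast; ring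
  have hde : ∀ t : ℝ, HasDerivAt (fun t : ℝ => Complex.exp (c * t)) (c * Complex.exp (c * t)) t := by
    intro t
    have h1 : HasDerivAt (fun z : ℂ => Complex.exp (c * z)) (Complex.exp (c * t) * (c * 1)) (t : ℂ) :=
      ((hasDerivAt_id (t : ℂ)).const_mul c).cexp
    convert! h1.comp_ofReal using 1
    ring
  have hdt : ∀ t : ℝ, HasDerivAt (fun t : ℝ => (t : ℂ) / l) (1 / l) t := fun t =>
    ((hasDerivAt_id (t : ℂ)).div_const _).comp_ofReal
  have hsupp : ∫ t : ℝ, Complex.exp (↑(-2 * Real.pi * t * v) * Complex.I) • tri l t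
      = ∫ t in (-l)..l, Complex.exp (c * t) * tri l t := by
    simp_rw [hexp, smul_eq_mul]
    rw [intervalIntegral.integral_of_le (by linarith), setIntegral_eq_integral_of_forall_compl_eq_zero]
    intro t ht
    rw [tri_eq_zero hl, mul_zero]
    by_contra! h
    exact ht ⟨(abs_lt.mp h).1, (abs_lt.mp h).2.le⟩
  have hcont : Continuous fun t : ℝ => Complex.exp (c * t) * tri l t := by
    have := continuous_tri l
    fun_prop
  rw [hsupp, ← intervalIntegral.integral_add_adjacent_intervals (b := 0)
    (hcont.intervalIntegrable _ _) (hcont.intervalIntegrable _ _)]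
  have h1 : ∫ t in (-l)..0, Complex.exp (c * t) * tri l t
      = 1 / c - 1 / (l * c ^ 2) + Complex.exp (-(c * l)) / (l * c ^ 2) := by
    have : ∀ t ∈ Set.uIcc (-l) 0, HasDerivAt
        (fun t : ℝ => (1 + (t : ℂ) / l) * Complex.exp (c * t) / c - Complex.exp (c * t) / (l * c ^ 2))
        (Complex.exp (c * t) * tri l t) t := by
      intro t ht
      rw [Set.uIcc_of_le (by linarith)] at ht
      have e : tri l t = 1 + t / l := by
        have : 0 ≤ 1 + t / l := by
          have : -1 ≤ t / l := by rw [le_div_iff₀ hl]; linarith [ht.1]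
          linarith
        rw [tri, abs_of_nonpos ht.2, max_eq_right (by rw [neg_div]; linarith)]; push_cast; ring
      convert! ((((hdt t).const_add 1).mul (hde t)).div_const c).sub ((hde t).div_const (l * c ^ 2)) using 1
      rw [e]; field_simp; ring
    rw [intervalIntegral.integral_eq_sub_of_hasDerivAt this (hcont.intervalIntegrable _ _)]
    push_cast
    simp only [mul_zero, Complex.exp_zero, mul_neg]
    field_simp
    ring
  have h2 : ∫ t in (0)..l, Complex.exp (c * t) * tri l t
      = - 1 / c - 1 / (l * c ^ 2) + Complex.exp (c * l) / (l * c ^ 2) := by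
    have : ∀ t ∈ Set.uIcc 0 l, HasDerivAt
        (fun t : ℝ => (1 - (t : ℂ) / l) * Complex.exp (c * t) / c + Complex.exp (c * t) / (l * c ^ 2))
        (Complex.exp (c * t) * tri l t) t := by
      intro t ht
      rw [Set.uIcc_of_le (by linarith)] at ht
      have e : tri l t = 1 - t / l := by
        have : 0 ≤ 1 - t / l := by
          have : t / l ≤ 1 := by rw [div_le_iff₀ hl]; linarith [ht.2]
          linarith
        rw [tri, abs_of_nonneg ht.1, max_eq_right this]; push_cast; ring
      convert! ((((hdt t).const_sub 1).mul (hde t)).div_const c).add ((hde t).div_const (l * c ^ 2)) using 1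
      rw [e]; field_simp; ring
    rw [intervalIntegral.integral_eq_sub_of_hasDerivAt this (hcont.intervalIntegrable _ _)]
    push_cast
    simp only [mul_zero, Complex.exp_zero]
    field_simp
    ring
  rw [h1, h2]
  have hv' : (v : ℂ) ≠ 0 := by exact_mod_cast hv
  have hpi' : (Real.pi : ℂ) ≠ 0 := by exact_mod_cast hpi
  have hcos : Complex.exp (c * l) + Complex.exp (-(c * l)) = 2 - 4 * Complex.sin (Real.pi * l * v) ^ 2 := by
    have h := Complex.two_cos (2 * (Real.pi * l * v))
    rw [show c * l = -(2 * (Real.pi * l * v)) * Complex.I by rw [hc]; ring,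
      show -(-(2 * (Real.pi * l * v : ℂ)) * Complex.I) = (2 * (Real.pi * l * v)) * Complex.I by ring,
      add_comm, ← h, Complex.cos_two_mul, Complex.cos_sq']
    ring
  have hc2 : c ^ 2 = - (4 * Real.pi ^ 2 * v ^ 2) := by
    rw [hc]; ring_nf; rw [Complex.I_sq]; ring
  have : (fejer l v : ℂ) = Complex.sin (Real.pi * l * v) ^ 2 / (Real.pi ^ 2 * l * v ^ 2) := by
    rw [fejer, Real.sinc_of_ne_zero (by positivity)]
    push_cast
    field_simp
  rw [this]
  trans (Complex.exp (c * l) + Complex.exp (-(c * l)) - 2) / (l * c ^ 2)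
  · field_simp; ring
  · rw [hcos, hc2]; field_simp; ring

/-- For `σ > 0`, self-adjointness of the Fourier transform rewrites a Fejér mean of `g(u) e^{-σu}` as a
Fourier integral of its Laplace transform `h` on the line `Re s = σ`. -/
lemma fourier_side {g : ℝ → ℝ} {M : ℝ} (hgm : Measurable g) (hgM : ∀ u, |g u| ≤ M)
    (hg0 : ∀ u ≤ 0, g u = 0) {h : ℂ → ℂ}
    (hlap : ∀ s : ℂ, 0 < s.re → ∫ u : ℝ, (g u : ℂ) * Complex.exp (-(s * u)) = h s)
    {l : ℝ} (hl : 0 < l) {σ : ℝ} (hσ : 0 < σ) (y : ℝ) :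
    ((∫ w : ℝ, fejer l w * (g (w + y) * Real.exp (-(σ * (w + y)))) : ℝ) : ℂ) =
      ∫ t : ℝ, Real.fourierChar (y * t) • (tri l t * h (σ + 2 * Real.pi * t * Complex.I)) := by
  have hint0 : Integrable fun u : ℝ => g u * Real.exp (-(σ * u)) := by
    have h1 : IntegrableOn (fun u : ℝ => M * Real.exp (-σ * u)) (Set.Ioi 0) :=
      (integrableOn_exp_mul_Ioi (by linarith) 0).const_mul M
    rw [← integrable_indicator_iff measurableSet_Ioi] at h1
    refine h1.mono' (by fun_prop) (ae_of_all _ fun u => ?_)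
    by_cases hu : u ≤ 0
    · rw [hg0 u hu, Set.indicator_of_notMem (by simpa using hu)]; simp
    · rw [Set.indicator_of_mem (by simpa using hu), norm_mul, Real.norm_eq_abs,
        Real.norm_of_nonneg (Real.exp_pos _).le, neg_mul]
      gcongr
      exact hgM u
  have hint : Integrable fun u : ℝ => ((g u * Real.exp (-(σ * u)) : ℝ) : ℂ) := hint0.ofReal
  have hG : Integrable fun w : ℝ => ((g (w + y) * Real.exp (-(σ * (w + y))) : ℝ) : ℂ) :=
    hint.comp_add_right y
  have key := VectorFourier.integral_fourierIntegral_smul_eq_flip (L := innerₗ ℝ)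
      Real.continuous_fourierChar continuous_inner (integrable_tri hl) hG
  have e1 : ∀ w : ℝ, VectorFourier.fourierIntegral Real.fourierChar volume (innerₗ ℝ) (tri l) w
      = 𝓕 (tri l) w := fun w => rfl
  have e2 : ∀ t : ℝ, VectorFourier.fourierIntegral Real.fourierChar volume (innerₗ ℝ).flip
      (fun w : ℝ => ((g (w + y) * Real.exp (-(σ * (w + y))) : ℝ) : ℂ)) t
      = Real.fourierChar (y * t) • h (σ + 2 * Real.pi * t * Complex.I) := by
    intro t
    rw [← hlap _ (by simpa using hσ)]
    rw [flip_innerₗ]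
    change 𝓕 (fun w : ℝ => ((g (w + y) * Real.exp (-(σ * (w + y))) : ℝ) : ℂ)) t = _
    rw [Real.fourier_real_eq_integral_exp_smul]
    rw [← integral_add_right_eq_self (fun u : ℝ => (g u : ℂ) * _) y,
      Circle.smul_def, smul_eq_mul, ← integral_const_mul]
    congr 1 with w
    rw [Real.fourierChar_apply]
    simp only [smul_eq_mul, Complex.ofReal_mul, Complex.ofReal_exp]
    rw [mul_left_comm, mul_left_comm (Complex.exp _), ← Complex.exp_add, ← Complex.exp_add]
    congr 2
    push_cast; ring
  simp_rw [e1, e2] at key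
  trans ∫ w : ℝ, 𝓕 (tri l) w • ((g (w + y) * Real.exp (-(σ * (w + y))) : ℝ) : ℂ)
  · rw [← integral_complex_ofReal]
    refine integral_congr_ae ?_
    filter_upwards [Measure.ae_ne volume 0] with w hw
    rw [fourier_tri hl hw]; simp
  · rw [key]
    congr 1 with t
    rw [smul_comm, smul_eq_mul]

/-- If the Laplace transform of a bounded `g` on `(0, ∞)` extends continuously to `Re s ≥ 0`, then the
Fejér means of `g` centred at `y` tend to `0` as `y → ∞`: letting `σ → 0` in `fourier_side` leaves a
Fourier integral over `Re s = 0`, to which the Riemann–Lebesgue lemma applies. -/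
lemma fejer_limit {g : ℝ → ℝ} {M : ℝ} (hgm : Measurable g) (hgM : ∀ u, |g u| ≤ M)
    (hg0 : ∀ u ≤ 0, g u = 0) {h : ℂ → ℂ} (hh : ContinuousOn h {s | 0 ≤ s.re})
    (hlap : ∀ s : ℂ, 0 < s.re → ∫ u : ℝ, (g u : ℂ) * Complex.exp (-(s * u)) = h s)
    {l : ℝ} (hl : 0 < l) :
    Tendsto (fun y => ∫ w : ℝ, fejer l w * g (w + y)) atTop (𝓝 0) := by
  have hM : 0 ≤ M := (abs_nonneg _).trans (hgM 0)
  -- Let `σ = 1/(n+1) → 0` in `fourier_side`; both sides converge by domination, the right one since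
  -- `h` is bounded on the compact rectangle over the support of `tri l`.
  have key : ∀ y : ℝ, ((∫ w : ℝ, fejer l w * g (w + y) : ℝ) : ℂ) =
      ∫ t : ℝ, Real.fourierChar (y * t) • (tri l t * h (2 * Real.pi * t * Complex.I)) := by
    intro y
    have hs0 : Tendsto (fun n : ℕ => 1 / ((n : ℝ) + 1)) atTop (𝓝 0) :=
      tendsto_one_div_add_atTop_nhds_zero_nat
    have hspos : ∀ n : ℕ, 0 < 1 / ((n : ℝ) + 1) := fun n => by positivity
    have hs1 : ∀ n : ℕ, 1 / ((n : ℝ) + 1) ≤ 1 := fun n => by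
      rw [div_le_one (by positivity)]; linarith [(Nat.cast_nonneg n : (0 : ℝ) ≤ n)]
    have hL : Tendsto (fun n : ℕ => ((∫ w : ℝ, fejer l w *
        (g (w + y) * Real.exp (-(1 / ((n : ℝ) + 1) * (w + y)))) : ℝ) : ℂ)) atTop
        (𝓝 ((∫ w : ℝ, fejer l w * g (w + y) : ℝ) : ℂ)) := by
      refine (Complex.continuous_ofReal.tendsto _).comp ?_
      refine tendsto_integral_of_dominated_convergence (fun w => fejer l w * M) ?_
        ((integrable_fejer hl).mul_const M) ?_ ?_
      · intro n
        have := (continuous_fejer l).measurable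
        exact Measurable.aestronglyMeasurable (by fun_prop)
      · refine fun n => ae_of_all _ fun w => ?_
        rw [norm_mul, Real.norm_of_nonneg (fejer_nonneg hl w)]
        refine mul_le_mul_of_nonneg_left ?_ (fejer_nonneg hl w)
        rcases le_or_gt (w + y) 0 with hw | hw
        · rw [hg0 _ hw]; simpa using hM
        · rw [norm_mul, Real.norm_eq_abs, Real.norm_of_nonneg (Real.exp_pos _).le]
          calc _ ≤ |g (w + y)| * 1 := by
                gcongr
                rw [Real.exp_le_one_iff]
                have := mul_pos (hspos n) hw
                linarith
            _ ≤ M := by simpa using hgM _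
      · refine ae_of_all _ fun w => ?_
        have : Tendsto (fun n : ℕ => fejer l w *
            (g (w + y) * Real.exp (-(1 / ((n : ℝ) + 1) * (w + y))))) atTop
            (𝓝 (fejer l w * (g (w + y) * Real.exp (-(0 * (w + y)))))) := by
          refine Tendsto.const_mul _ (Tendsto.const_mul _ ?_)
          exact (Real.continuous_exp.tendsto _).comp (hs0.mul_const _).neg
        simpa using this
    have hK : IsCompact (Set.Icc (0 : ℝ) 1 ×ˢ Set.Icc (-l) l) := isCompact_Icc.prod isCompact_Icc
    have hcont : ContinuousOn (fun q : ℝ × ℝ => h (q.1 + 2 * Real.pi * q.2 * Complex.I))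
        (Set.Icc (0 : ℝ) 1 ×ˢ Set.Icc (-l) l) := by
      refine hh.comp (by fun_prop) ?_
      rintro ⟨a, b⟩ ⟨ha, -⟩
      simpa using ha.1
    obtain ⟨B, hB⟩ := hK.exists_bound_of_continuousOn hcont
    have hR : Tendsto (fun n : ℕ => ∫ t : ℝ, Real.fourierChar (y * t) •
        (tri l t * h ((1 / ((n : ℝ) + 1) : ℝ) + 2 * Real.pi * t * Complex.I))) atTop
        (𝓝 (∫ t : ℝ, Real.fourierChar (y * t) • (tri l t * h (2 * Real.pi * t * Complex.I)))) := by
      refine tendsto_integral_of_dominated_convergence (fun t => ‖tri l t‖ * B) ?_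
        ((integrable_tri hl).norm.mul_const B) ?_ ?_
      · intro n
        refine Continuous.aestronglyMeasurable ?_
        have h1 : Continuous fun t : ℝ => h ((1 / ((n : ℝ) + 1) : ℝ) + 2 * Real.pi * t * Complex.I) := by
          refine hh.comp_continuous (by fun_prop) fun t => ?_
          have : ((((1 / ((n : ℝ) + 1) : ℝ) : ℂ) + 2 * Real.pi * t * Complex.I)).re
            = 1 / ((n : ℝ) + 1) := by
            rw [Complex.add_re, Complex.ofReal_re]; simp
          simp only [Set.mem_ofPred_eq]
          rw [this]; exact (hspos n).le
        have h2 := continuous_tri l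
        have h3 := Real.continuous_fourierChar
        exact (h3.comp (continuous_const.mul continuous_id)).smul (h2.mul h1)
      · refine fun n => ae_of_all _ fun t => ?_
        rw [Circle.norm_smul, norm_mul]
        rcases le_or_gt l |t| with ht | ht
        · rw [tri_eq_zero hl ht]; simp
        · refine mul_le_mul_of_nonneg_left ?_ (norm_nonneg _)
          exact hB (1 / ((n : ℝ) + 1), t) ⟨⟨(hspos n).le, hs1 n⟩, abs_le.mp ht.le⟩
      · refine ae_of_all _ fun t => ?_
        refine Tendsto.const_smul (Tendsto.const_mul _ ?_) _
        have hw := hh (2 * Real.pi * t * Complex.I) (by simp)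
        refine hw.tendsto.comp (tendsto_nhdsWithin_iff.mpr ⟨?_, Eventually.of_forall fun n => ?_⟩)
        · have := ((Complex.continuous_ofReal.tendsto 0).comp hs0).add_const (2 * Real.pi * t * Complex.I)
          simpa using this
        · have : ((((1 / ((n : ℝ) + 1) : ℝ) : ℂ) + 2 * Real.pi * t * Complex.I)).re
            = 1 / ((n : ℝ) + 1) := by
            rw [Complex.add_re, Complex.ofReal_re]; simp
          simp only [Set.mem_ofPred_eq]
          rw [this]; exact (hspos n).le
    refine tendsto_nhds_unique hL (hR.congr fun n => ?_)
    rw [fourier_side hgm hgM hg0 hlap hl (hspos n) y]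
  have hRL := (Real.tendsto_integral_exp_smul_cocompact
    (fun t : ℝ => tri l t * h (2 * Real.pi * t * Complex.I))).comp
    (tendsto_neg_atTop_atBot.mono_right atBot_le_cocompact)
  have : Tendsto (fun y : ℝ => ((∫ w : ℝ, fejer l w * g (w + y) : ℝ) : ℂ)) atTop (𝓝 0) := by
    refine hRL.congr fun y => ?_
    rw [key]
    simp only [Function.comp_apply]
    congr 1 with t
    congr 2
    ring_nf
  have := (Complex.continuous_re.tendsto 0).comp this
  simpa [Function.comp_def] using this

/-! ### A Tauberian argument for Fejér means -/

lemma integral_fejer {l : ℝ} (hl : 0 < l) : ∫ w, fejer l w = ∫ w, fejer 1 w := by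
  simp_rw [fejer_eq l]
  rw [integral_const_mul, Measure.integral_comp_mul_left, abs_of_pos (by positivity), smul_eq_mul,
    mul_inv_cancel_left₀ (ne_of_gt hl)]

/-- For large `l`, the kernel `fejer l` has all but `ε` of its mass in `[-δ, δ]`. -/
lemma exists_fejer_conc {δ ε : ℝ} (hδ : 0 < δ) (hε : 0 < ε) :
    ∃ l > 0, (∫ w, fejer 1 w) - ε < ∫ w, (Set.Icc (-δ) δ).indicator (fejer l) w := by
  have h : Tendsto (fun l : ℝ => ∫ v, (Set.Icc (-(l * δ)) (l * δ)).indicator (fejer 1) v) atTop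
      (𝓝 (∫ w, fejer 1 w)) := by
    refine tendsto_integral_filter_of_dominated_convergence (fejer 1) ?_ ?_
      integrable_fejer_one ?_
    · exact Eventually.of_forall fun l =>
        (integrable_fejer_one.indicator measurableSet_Icc).aestronglyMeasurable
    · refine Eventually.of_forall fun l => ae_of_all _ fun v => ?_
      rw [Real.norm_of_nonneg (Set.indicator_nonneg (fun v _ => fejer_nonneg one_pos v) v)]
      exact Set.indicator_le_self' (fun v _ => fejer_nonneg one_pos v) v
    · refine ae_of_all _ fun v => tendsto_const_nhds.congr' ?_
      filter_upwards [eventually_ge_atTop (|v| / δ)] with l hl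
      rw [Set.indicator_of_mem]
      rw [div_le_iff₀ hδ] at hl
      exact abs_le.mp hl
  obtain ⟨l, hl, hl0⟩ := ((h.eventually_const_lt (sub_lt_self _ hε)).and
    (eventually_gt_atTop 0)).exists
  refine ⟨l, hl0, hl.trans_eq ?_⟩
  have e : ∀ w, (Set.Icc (-δ) δ).indicator (fejer l) w
      = l * (Set.Icc (-(l * δ)) (l * δ)).indicator (fejer 1) (l * w) := by
    intro w
    by_cases hw : w ∈ Set.Icc (-δ) δ
    · rw [Set.indicator_of_mem hw, Set.indicator_of_mem, fejer_eq]
      constructor <;> nlinarith [hw.1, hw.2]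
    · rw [Set.indicator_of_notMem hw, Set.indicator_of_notMem, mul_zero]
      contrapose! hw
      rw [← mul_neg] at hw
      exact ⟨le_of_mul_le_mul_left hw.1 hl0, le_of_mul_le_mul_left hw.2 hl0⟩
  simp_rw [e]
  rw [integral_const_mul, Measure.integral_comp_mul_left
    (fun v => (Set.Icc (-(l * δ)) (l * δ)).indicator (fejer 1) v), abs_of_pos (by positivity),
    smul_eq_mul, mul_inv_cancel_left₀ (ne_of_gt hl0)]

/-- If the Fejér means of `f` agree asymptotically with those of the indicator of `(0, ∞)`, and
`e^u f(u)` is monotone, then `f → 1`. Monotonicity bounds `f y` from above and below, up to a factor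
`e^{±2δ}`, by the values of `f` on `[y, y + 2δ]` and `[y - 2δ, y]`, hence by the Fejér means centred
at `y + δ` and `y - δ`. -/
lemma tauberian {f : ℝ → ℝ} {M : ℝ} (hfm : Measurable f) (hf0 : ∀ u, 0 ≤ f u)
    (hfM : ∀ u, f u ≤ M) (hmono : Monotone fun u => Real.exp u * f u)
    (hlim : ∀ l > 0, Tendsto (fun y => ∫ w : ℝ, fejer l w *
      (f (w + y) - (Set.Ioi 0).indicator 1 (w + y))) atTop (𝓝 0)) :
    Tendsto f atTop (𝓝 1) := by
  obtain ⟨c, hc⟩ : ∃ c, c = ∫ w, fejer 1 w := ⟨_, rfl⟩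
  have hc0 : 0 < c := hc ▸ integral_fejer_pos
  have hM : 0 ≤ M := (hf0 0).trans (hfM 0)
  have hIf : ∀ l > 0, ∀ y, Integrable fun w => fejer l w * f (w + y) := by
    intro l hl y
    refine ((integrable_fejer hl).mul_const M).mono' ?_ (ae_of_all _ fun w => ?_)
    · have := (continuous_fejer l).measurable
      exact Measurable.aestronglyMeasurable (by fun_prop)
    · rw [Real.norm_of_nonneg (mul_nonneg (fejer_nonneg hl w) (hf0 _))]
      exact mul_le_mul_of_nonneg_left (hfM _) (fejer_nonneg hl w)
  have hI1m : Measurable ((Set.Ioi (0 : ℝ)).indicator (1 : ℝ → ℝ)) :=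
    measurable_one.indicator measurableSet_Ioi
  have hI1 : ∀ u : ℝ, 0 ≤ (Set.Ioi (0 : ℝ)).indicator (1 : ℝ → ℝ) u ∧
      (Set.Ioi (0 : ℝ)).indicator (1 : ℝ → ℝ) u ≤ 1 := fun u =>
    ⟨Set.indicator_nonneg (fun _ _ => zero_le_one) u, Set.indicator_le_self' (by simp) u⟩
  have hIi : ∀ l > 0, ∀ y, Integrable fun w => fejer l w *
      (Set.Ioi (0 : ℝ)).indicator (1 : ℝ → ℝ) (w + y) := by
    intro l hl y
    refine (integrable_fejer hl).mono' ?_ (ae_of_all _ fun w => ?_)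
    · have := (continuous_fejer l).measurable
      exact Measurable.aestronglyMeasurable (by fun_prop)
    · rw [Real.norm_of_nonneg (mul_nonneg (fejer_nonneg hl w) (hI1 _).1)]
      exact mul_le_of_le_one_right (fejer_nonneg hl w) (hI1 _).2
  have hJ : ∀ l > 0, Tendsto (fun y => ∫ w : ℝ, fejer l w * f (w + y)) atTop (𝓝 c) := by
    intro l hl
    have h1 : Tendsto (fun y => ∫ w : ℝ, fejer l w *
        (Set.Ioi (0 : ℝ)).indicator (1 : ℝ → ℝ) (w + y)) atTop (𝓝 c) := by
      rw [hc, ← integral_fejer hl]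
      refine tendsto_integral_filter_of_dominated_convergence (fejer l) ?_ ?_
        (integrable_fejer hl) ?_
      · exact Eventually.of_forall fun y => (hIi l hl y).aestronglyMeasurable
      · refine Eventually.of_forall fun y => ae_of_all _ fun w => ?_
        rw [Real.norm_of_nonneg (mul_nonneg (fejer_nonneg hl w) (hI1 _).1)]
        exact mul_le_of_le_one_right (fejer_nonneg hl w) (hI1 _).2
      · refine ae_of_all _ fun w => tendsto_const_nhds.congr' ?_
        filter_upwards [eventually_gt_atTop (-w)] with y hy
        rw [Set.indicator_of_mem (by simp; linarith)]; simp
    have := (hlim l hl).add h1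
    rw [zero_add] at this
    refine this.congr fun y => ?_
    rw [← integral_add _ (hIi l hl y)]
    · congr 1 with w; ring
    · simp_rw [mul_sub]
      exact (hIf l hl y).sub (hIi l hl y)
  have hmon : ∀ a b, a ≤ b → f a ≤ Real.exp (b - a) * f b := by
    intro a b hab
    have h := hmono hab
    simp only at h
    rw [sub_eq_add_neg, Real.exp_add, Real.exp_neg]
    have := Real.exp_pos a
    rw [mul_right_comm, ← div_eq_mul_inv, le_div_iff₀ this]
    linarith
  have hbds : ∀ δ > 0, ∀ᶠ y in atTop, c * f y ≤ Real.exp (2 * δ) * (c + δ + M * δ) ∧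
      Real.exp (-(2 * δ)) * (c - δ - M * δ) ≤ c * f y := by
    intro δ hδ
    obtain ⟨l, hl, hF⟩ := exists_fejer_conc hδ hδ
    obtain ⟨F, hFdef⟩ : ∃ F, F = ∫ w, (Set.Icc (-δ) δ).indicator (fejer l) w := ⟨_, rfl⟩
    rw [← hc, ← hFdef] at hF
    have hFi : Integrable ((Set.Icc (-δ) δ).indicator (fejer l)) :=
      (integrable_fejer hl).indicator measurableSet_Icc
    have hFc : F ≤ c := by
      rw [hFdef, hc, ← integral_fejer hl]
      exact integral_mono hFi (integrable_fejer hl)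
        (Set.indicator_le_self' fun v _ => fejer_nonneg hl v)
    have hup := (hJ l hl).comp (tendsto_atTop_add_const_right atTop δ tendsto_id)
    have hdn := (hJ l hl).comp (tendsto_atTop_add_const_right atTop (-δ) tendsto_id)
    filter_upwards [hup.eventually_lt_const (show c < c + δ by linarith),
      hdn.eventually_const_lt (show c - δ < c by linarith)] with y hy1 hy2
    simp only [Function.comp_apply, id] at hy1 hy2
    have hM1 := hfM y
    have hy0 := hf0 y
    constructor
    · have h1 : Real.exp (-(2 * δ)) * f y * F ≤ ∫ w : ℝ, fejer l w * f (w + (y + δ)) := by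
        rw [hFdef, ← integral_const_mul]
        refine integral_mono (hFi.const_mul _) (hIf l hl _) fun w => ?_
        simp only
        by_cases hw : w ∈ Set.Icc (-δ) δ
        · rw [Set.indicator_of_mem hw, mul_comm]
          refine mul_le_mul_of_nonneg_left ?_ (fejer_nonneg hl w)
          have h2 := hmon y (w + (y + δ)) (by linarith [hw.1])
          calc Real.exp (-(2 * δ)) * f y
              ≤ Real.exp (-(2 * δ)) * (Real.exp (w + (y + δ) - y) * f (w + (y + δ))) := by gcongr
            _ = Real.exp (-(2 * δ) + (w + (y + δ) - y)) * f (w + (y + δ)) := by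
                rw [Real.exp_add]; ring
            _ ≤ 1 * f (w + (y + δ)) := by
                refine mul_le_mul_of_nonneg_right ?_ (hf0 _)
                rw [Real.exp_le_one_iff]; linarith [hw.2]
            _ = _ := one_mul _
        · rw [Set.indicator_of_notMem hw, mul_zero]
          exact mul_nonneg (fejer_nonneg hl w) (hf0 _)
      have h3 : Real.exp (-(2 * δ)) * (c * f y) ≤ c + δ + M * δ := by
        have he : Real.exp (-(2 * δ)) ≤ 1 := by rw [Real.exp_le_one_iff]; linarith
        have he0 := Real.exp_pos (-(2 * δ))
        have h4 : Real.exp (-(2 * δ)) * f y ≤ M := by nlinarith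
        have h5 : Real.exp (-(2 * δ)) * f y * (c - F) ≤ M * δ :=
          mul_le_mul h4 (by linarith) (by linarith) hM
        nlinarith
      calc c * f y = Real.exp (2 * δ) * (Real.exp (-(2 * δ)) * (c * f y)) := by
            rw [← mul_assoc, ← Real.exp_add]; simp
        _ ≤ _ := by gcongr
    · have h1 : ∫ w : ℝ, fejer l w * f (w + (y + -δ)) ≤
          Real.exp (2 * δ) * f y * F + M * (c - F) := by
        have e : Real.exp (2 * δ) * f y * F + M * (c - F) =
            ∫ w, (Real.exp (2 * δ) * f y * (Set.Icc (-δ) δ).indicator (fejer l) w +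
              M * (fejer l w - (Set.Icc (-δ) δ).indicator (fejer l) w)) := by
          have hA : Integrable fun w => fejer l w - (Set.Icc (-δ) δ).indicator (fejer l) w :=
            (integrable_fejer hl).sub hFi
          rw [integral_add (hFi.const_mul _) (hA.const_mul _),
            integral_const_mul, integral_const_mul, integral_sub (integrable_fejer hl) hFi,
            integral_fejer hl, ← hc, ← hFdef]
        rw [e]
        refine integral_mono (hIf l hl _) ((hFi.const_mul _).add
          (((integrable_fejer hl).sub hFi).const_mul _)) fun w => ?_
        simp only
        by_cases hw : w ∈ Set.Icc (-δ) δ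
        · rw [Set.indicator_of_mem hw, sub_self, mul_zero, add_zero, mul_comm]
          refine mul_le_mul_of_nonneg_right ?_ (fejer_nonneg hl w)
          refine (hmon (w + (y + -δ)) y (by linarith [hw.2])).trans ?_
          refine mul_le_mul_of_nonneg_right (Real.exp_le_exp.mpr ?_) hy0
          linarith [hw.1]
        · rw [Set.indicator_of_notMem hw, mul_zero, zero_add, sub_zero, mul_comm]
          exact mul_le_mul_of_nonneg_right (hfM _) (fejer_nonneg hl w)
      have h3 : c - δ - M * δ ≤ Real.exp (2 * δ) * (c * f y) := by
        have he0 := Real.exp_pos (2 * δ)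
        have h4 : Real.exp (2 * δ) * f y * F ≤ Real.exp (2 * δ) * f y * c :=
          mul_le_mul_of_nonneg_left hFc (by positivity)
        have h5 : M * (c - F) ≤ M * δ := mul_le_mul_of_nonneg_left (by linarith) hM
        linarith
      calc Real.exp (-(2 * δ)) * (c - δ - M * δ)
          ≤ Real.exp (-(2 * δ)) * (Real.exp (2 * δ) * (c * f y)) := by gcongr
        _ = c * f y := by rw [← mul_assoc, ← Real.exp_add]; simp
  have hcf : Tendsto (fun y => c * f y) atTop (𝓝 c) := by
    rw [tendsto_order]
    have hu : Tendsto (fun δ : ℝ => Real.exp (2 * δ) * (c + δ + M * δ)) (𝓝[>] 0) (𝓝 c) := by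
      have : Continuous fun δ : ℝ => Real.exp (2 * δ) * (c + δ + M * δ) := by fun_prop
      have := this.tendsto 0
      simp only [mul_zero, Real.exp_zero, add_zero, one_mul] at this
      exact this.mono_left nhdsWithin_le_nhds
    have hd : Tendsto (fun δ : ℝ => Real.exp (-(2 * δ)) * (c - δ - M * δ)) (𝓝[>] 0) (𝓝 c) := by
      have : Continuous fun δ : ℝ => Real.exp (-(2 * δ)) * (c - δ - M * δ) := by fun_prop
      have := this.tendsto 0
      simp only [mul_zero, Real.exp_zero, sub_zero, one_mul, neg_zero] at this
      exact this.mono_left nhdsWithin_le_nhds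
    constructor
    · intro a ha
      obtain ⟨δ, h1, hδ⟩ := ((hd.eventually_const_lt ha).and self_mem_nhdsWithin).exists
      filter_upwards [hbds δ hδ] with y hy
      exact h1.trans_le hy.2
    · intro a ha
      obtain ⟨δ, h1, hδ⟩ := ((hu.eventually_lt_const ha).and self_mem_nhdsWithin).exists
      filter_upwards [hbds δ hδ] with y hy
      exact hy.1.trans_lt h1
  have := hcf.div_const c
  simpa [mul_div_cancel_left₀ _ hc0.ne', div_self hc0.ne'] using this

/-! ### The prime number theorem -/

/-- A Dirichlet series with nonnegative coefficients as `s` times the Laplace transform of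
`u ↦ ∑_{k ≤ e^u} f k`: partial summation followed by the substitution `x = e^u`. -/
lemma LSeries_eq_laplace (f : ℕ → ℝ) (hf : ∀ n, 0 ≤ f n) {r : ℝ} (hr : 0 ≤ r) {s : ℂ}
    (hs : r < s.re)
    (hO : (fun n ↦ ∑ k ∈ Finset.Icc 1 n, f k) =O[atTop] fun n ↦ (n : ℝ) ^ r) :
    LSeries (fun n ↦ f n) s = s * ∫ u in Set.Ioi (0 : ℝ),
      ((∑ k ∈ Finset.Icc 1 ⌊Real.exp u⌋₊, f k : ℝ) : ℂ) * Complex.exp (-(s * u)) := by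
  rw [LSeries_eq_mul_integral_of_nonneg f hr hs hO hf, ← Real.exp_zero, ← integral_comp_exp_Ioi]
  congr 1
  refine setIntegral_congr_fun measurableSet_Ioi fun u _ => ?_
  simp only [Complex.real_smul, Complex.ofReal_sum]
  rw [mul_left_comm, Complex.cpow_def_of_ne_zero (by simp), ← Complex.ofReal_log
    (Real.exp_pos u).le, Real.log_exp, Complex.ofReal_exp, ← Complex.exp_add]
  congr 2
  ring

lemma psi_eq_sum_Icc (x : ℝ) :
    Chebyshev.psi x = ∑ k ∈ Finset.Icc 1 ⌊x⌋₊, ArithmeticFunction.vonMangoldt k := rfl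

/-- Modulo `1` the results on primes in arithmetic progressions specialize to `Λ` itself. -/
lemma residueClass_one_one (n : ℕ) : ArithmeticFunction.vonMangoldt.residueClass (1 : ZMod 1) n
    = ArithmeticFunction.vonMangoldt n := by
  simp [ArithmeticFunction.vonMangoldt.residueClass, Subsingleton.elim _ (1 : ZMod 1)]

lemma integral_psi_laplace {s : ℂ} (hs : 1 < s.re) :
    LSeries (fun n ↦ (ArithmeticFunction.vonMangoldt n : ℂ)) s = s * ∫ u in Set.Ioi (0 : ℝ),
      ((Chebyshev.psi (Real.exp u) : ℝ) : ℂ) * Complex.exp (-(s * u)) := by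
  refine LSeries_eq_laplace _ (fun n => ArithmeticFunction.vonMangoldt_nonneg) zero_le_one hs ?_
  simp only [Real.rpow_one]
  refine Asymptotics.IsBigO.of_bound (Real.log 4 + 4) (Eventually.of_forall fun n => ?_)
  have h := Chebyshev.psi_le_const_mul_self (Nat.cast_nonneg n : (0 : ℝ) ≤ n)
  have h0 := Chebyshev.psi_nonneg (n : ℝ)
  rw [psi_eq_sum_Icc, Nat.floor_natCast] at h h0
  rw [Real.norm_of_nonneg h0]
  simpa using h

/-- The prime number theorem for `ψ` in the variable `u = log x`. Chebyshev's bound makes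
`ψ(e^u) e^{-u}` bounded. The transform of its difference from the indicator of `(0, ∞)` is
`(A(1 + s) - 1) / (1 + s)`, where `A(s) = -ζ'(s)/ζ(s) - 1/(s - 1)` is continuous on `Re s ≥ 1`. -/
theorem tendsto_psi_exp :
    Tendsto (fun u => Chebyshev.psi (Real.exp u) * Real.exp (-u)) atTop (𝓝 1) := by
  have hf0 : ∀ u, 0 ≤ Chebyshev.psi (Real.exp u) * Real.exp (-u) := fun u =>
    mul_nonneg (Chebyshev.psi_nonneg _) (Real.exp_pos _).le
  have hfM : ∀ u, Chebyshev.psi (Real.exp u) * Real.exp (-u) ≤ Real.log 4 + 4 := fun u => by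
    rw [Real.exp_neg, ← div_eq_mul_inv, div_le_iff₀ (Real.exp_pos u)]
    exact Chebyshev.psi_le_const_mul_self (Real.exp_pos u).le
  have hfm : Measurable fun u => Chebyshev.psi (Real.exp u) * Real.exp (-u) := by
    have := Chebyshev.psi_mono.measurable
    fun_prop
  refine tauberian hfm hf0 hfM ?_ fun l hl => ?_
  · have : (fun u => Real.exp u * (Chebyshev.psi (Real.exp u) * Real.exp (-u)))
        = fun u => Chebyshev.psi (Real.exp u) := by
      funext u
      rw [mul_left_comm, ← Real.exp_add]; simp
    rw [this]
    exact Chebyshev.psi_mono.comp Real.exp_monotone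
  have hpsi0 : ∀ u ≤ 0, Chebyshev.psi (Real.exp u) = 0 := fun u hu =>
    Chebyshev.psi_eq_zero_of_le_one (Real.exp_le_one_iff.mpr hu)
  refine fejer_limit (M := Real.log 4 + 5)
    (g := fun u => Chebyshev.psi (Real.exp u) * Real.exp (-u) - (Set.Ioi (0 : ℝ)).indicator 1 u)
    (h := fun s => (ArithmeticFunction.vonMangoldt.LFunctionResidueClassAux (1 : ZMod 1) (1 + s)
      - 1) / (1 + s)) ?_ ?_ ?_ ?_ ?_ hl
  · exact hfm.sub (measurable_one.indicator measurableSet_Ioi)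
  · intro u
    have h1 := hf0 u
    have h2 := hfM u
    have h3 : 0 < Real.log 4 := Real.log_pos (by norm_num)
    by_cases hu : u ∈ Set.Ioi (0 : ℝ)
    · rw [Set.indicator_of_mem hu, Pi.one_apply, abs_le]; constructor <;> linarith
    · rw [Set.indicator_of_notMem hu, abs_le]; constructor <;> linarith
  · intro u hu
    rw [hpsi0 u hu, Set.indicator_of_notMem (by simpa using hu)]; simp
  · have h1 : ContinuousOn (fun s : ℂ =>
        ArithmeticFunction.vonMangoldt.LFunctionResidueClassAux (1 : ZMod 1) (1 + s))
        {s | 0 ≤ s.re} :=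
      (ArithmeticFunction.vonMangoldt.continuousOn_LFunctionResidueClassAux (1 : ZMod 1)).comp
        (by fun_prop) fun s hs => by simpa using hs
    refine (h1.sub continuousOn_const).div (by fun_prop) fun s hs h0 => ?_
    have : (1 + s).re = 0 := by rw [h0]; simp
    simp only [Complex.add_re, Complex.one_re] at this
    have hs' : 0 ≤ s.re := hs
    linarith
  · intro s hs
    have hs1 : 1 < (1 + s).re := by simpa using hs
    have hs0 : s ≠ 0 := by rintro rfl; simp at hs
    have h10 : 1 + s ≠ 0 := by
      intro h; rw [h] at hs1; simp at hs1; linarith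
    have hL := integral_psi_laplace hs1
    have hA := ArithmeticFunction.vonMangoldt.eqOn_LFunctionResidueClassAux
      (isUnit_one (M := ZMod 1)) hs1
    simp only [residueClass_one_one, Nat.totient_one, Nat.cast_one, inv_one] at hA
    rw [hA, hL]
    have hexp : ∫ u in Set.Ioi (0 : ℝ), Complex.exp (-(s * u)) = 1 / s := by
      have := integral_exp_mul_complex_Ioi (a := -s) (by simpa using hs) 0
      simpa [neg_mul] using this
    have hi1 : IntegrableOn (fun u : ℝ => Complex.exp (-(s * u))) (Set.Ioi 0) := by
      have := integrableOn_exp_mul_complex_Ioi (a := -s) (by simpa using hs) 0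
      simpa [neg_mul] using this
    have hi2 : IntegrableOn (fun u : ℝ => ((Chebyshev.psi (Real.exp u) : ℝ) : ℂ) *
        Complex.exp (-((1 + s) * u))) (Set.Ioi 0) := by
      refine Integrable.mono' (hi1.norm.const_mul (Real.log 4 + 4)) ?_ (ae_of_all _ fun u => ?_)
      · have := Chebyshev.psi_mono.measurable
        exact Measurable.aestronglyMeasurable (by fun_prop)
      · have : ((Chebyshev.psi (Real.exp u) : ℝ) : ℂ) * Complex.exp (-((1 + s) * u)) =
            ((Chebyshev.psi (Real.exp u) * Real.exp (-u) : ℝ) : ℂ) * Complex.exp (-(s * u)) := by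
          push_cast; rw [mul_assoc, ← Complex.exp_add]; congr 2; ring
        rw [this, norm_mul, Complex.norm_real, Real.norm_of_nonneg (hf0 u)]
        exact mul_le_mul_of_nonneg_right (hfM u) (norm_nonneg _)
    rw [← setIntegral_eq_integral_of_forall_compl_eq_zero (s := Set.Ioi (0 : ℝ))]
    · trans ∫ u in Set.Ioi (0 : ℝ), (((Chebyshev.psi (Real.exp u) : ℝ) : ℂ) *
        Complex.exp (-((1 + s) * u)) - Complex.exp (-(s * u)))
      · refine setIntegral_congr_fun measurableSet_Ioi fun u hu => ?_
        simp only [Set.indicator_of_mem hu, Pi.one_apply]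
        push_cast
        rw [sub_mul, one_mul, mul_assoc, ← Complex.exp_add]
        congr 3; ring
      · rw [integral_sub hi2 hi1, hexp]
        rw [add_sub_cancel_left]
        generalize (∫ u in Set.Ioi (0 : ℝ), ((Chebyshev.psi (Real.exp u) : ℝ) : ℂ) *
          Complex.exp (-((1 + s) * u))) = I
        field_simp
        ring
    · intro u hu
      have hu' : u ≤ 0 := by simpa using hu
      rw [hpsi0 u hu', Set.indicator_of_notMem hu]; simp

lemma tendsto_psi_div : Tendsto (fun x => Chebyshev.psi x / x) atTop (𝓝 1) := by
  refine (tendsto_psi_exp.comp Real.tendsto_log_atTop).congr' ?_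
  filter_upwards [eventually_gt_atTop 0] with x hx
  simp only [Function.comp_apply]
  rw [Real.exp_neg, Real.exp_log hx, div_eq_mul_inv]

lemma tendsto_theta_div : Tendsto (fun x => Chebyshev.theta x / x) atTop (𝓝 1) := by
  have h : (fun x : ℝ => Real.sqrt x) =o[atTop] fun x : ℝ => x := by
    rw [Asymptotics.isLittleO_iff_tendsto' (by filter_upwards [eventually_gt_atTop 0] with x hx h
                                               exact absurd h hx.ne')]
    refine (tendsto_inv_atTop_zero.comp Real.tendsto_sqrt_atTop).congr' ?_
    filter_upwards [eventually_gt_atTop 0] with x hx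
    rw [Real.sqrt_div_self', Function.comp_apply, one_div]
  have h2 := (Chebyshev.isBigO_psi_sub_theta_sqrt.trans_isLittleO h).tendsto_div_nhds_zero
  have := tendsto_psi_div.sub h2
  rw [sub_zero] at this
  refine this.congr fun x => ?_
  simp only [Pi.sub_apply]; ring

/-- The prime number theorem, `π(x) ~ x / log x`. -/
theorem tendsto_primeCounting_mul_log_div :
    Tendsto (fun x : ℝ => (Nat.primeCounting ⌊x⌋₊ : ℝ) * Real.log x / x) atTop (𝓝 1) := by
  have h0 : (fun x : ℝ => x / Real.log x ^ 2) =o[atTop] fun x : ℝ => x / Real.log x := by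
    rw [Asymptotics.isLittleO_iff_tendsto']
    · refine (tendsto_inv_atTop_zero.comp Real.tendsto_log_atTop).congr' ?_
      filter_upwards [eventually_gt_atTop 1] with x hx
      have : Real.log x ≠ 0 := (Real.log_pos hx).ne'
      have : x ≠ 0 := by positivity
      simp only [Function.comp_apply]
      field_simp
    · filter_upwards [eventually_gt_atTop 1] with x hx h
      have : 0 < x / Real.log x := div_pos (by linarith) (Real.log_pos hx)
      exact absurd h this.ne'
  have h1 := (Chebyshev.primeCounting_sub_theta_div_log_isBigO.trans_isLittleO h0).tendsto_div_nhds_zero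
  have := h1.add tendsto_theta_div
  rw [zero_add] at this
  refine this.congr' ?_
  filter_upwards [eventually_gt_atTop 1] with x hx
  have : Real.log x ≠ 0 := (Real.log_pos hx).ne'
  have : x ≠ 0 := by positivity
  field_simp
  ring

/-! ### Convergence in Mertens' second theorem -/

/-- Follows from `Λ * ζ = log` by exchanging the order of summation. -/
lemma sum_vonMangoldt_floor (n : ℕ) :
    ∑ d ∈ Finset.Ioc 0 n, ArithmeticFunction.vonMangoldt d * ((n / d : ℕ) : ℝ)
      = Real.log (Nat.factorial n) := by
  rw [← ArithmeticFunction.sum_Ioc_mul_zeta_eq_sum, ArithmeticFunction.vonMangoldt_mul_zeta]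
  induction n with
  | zero => simp
  | succ n ih =>
    rw [Finset.sum_Ioc_succ_top (Nat.zero_le n), ih, Nat.factorial_succ, Nat.cast_mul,
      Real.log_mul (by positivity) (by positivity), add_comm]
    rfl

lemma sum_Ioc_inv_eq_harmonic (n : ℕ) :
    ∑ d ∈ Finset.Ioc 0 n, (1 : ℝ) / d = harmonic n := by
  rw [harmonic_eq_sum_Icc]
  push_cast
  simp only [one_div]
  rfl

/-- Mertens' first theorem: `∑_{d ≤ n} (Λ(d) - 1) / d` is bounded. Compare `∑ Λ(d) ⌊n/d⌋ = log n!`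
with `n ∑ Λ(d)/d`; the error is at most `ψ(n) = O(n)`. -/
lemma abs_mertens_le (n : ℕ) :
    |∑ d ∈ Finset.Ioc 0 n, (ArithmeticFunction.vonMangoldt d / d - 1 / d)| ≤ Real.log 4 + 6 := by
  rcases Nat.eq_zero_or_pos n with rfl | hn
  · simp; positivity
  rw [Finset.sum_sub_distrib, sum_Ioc_inv_eq_harmonic]
  have hn' : (0 : ℝ) < n := by exact_mod_cast hn
  have h1 := log_add_one_le_harmonic n
  have h2 := harmonic_le_one_add_log n
  have h3 : Real.log n ≤ Real.log ↑(n + 1) := Real.log_le_log hn' (by push_cast; linarith)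
  have hfac := sum_vonMangoldt_floor n
  have hS := Stirling.le_log_factorial_stirling hn.ne'
  have hl0 : 0 ≤ Real.log n := Real.log_natCast_nonneg n
  have hl1 : 0 ≤ Real.log (2 * Real.pi) := Real.log_nonneg (by linarith [Real.pi_gt_three])
  have hU : Real.log (Nat.factorial n) ≤ n * Real.log n := by
    rw [← Real.log_pow]
    refine Real.log_le_log (by positivity) ?_
    exact_mod_cast Nat.factorial_le_pow n
  have hpsi := Chebyshev.psi_le_const_mul_self hn'.le
  have hpsi' : Chebyshev.psi n = ∑ d ∈ Finset.Ioc 0 n, ArithmeticFunction.vonMangoldt d := by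
    rw [Chebyshev.psi, Nat.floor_natCast]
  obtain ⟨S, hSd⟩ : ∃ S, S = ∑ d ∈ Finset.Ioc 0 n, ArithmeticFunction.vonMangoldt d / (d : ℝ) :=
    ⟨_, rfl⟩
  have hlow : Real.log (Nat.factorial n) ≤ n * S := by
    rw [← hfac, hSd, Finset.mul_sum]
    refine Finset.sum_le_sum fun d hd => ?_
    have : ((n / d : ℕ) : ℝ) ≤ n / d := Nat.cast_div_le
    have h0 : 0 ≤ ArithmeticFunction.vonMangoldt d := ArithmeticFunction.vonMangoldt_nonneg
    calc _ ≤ ArithmeticFunction.vonMangoldt d * ((n : ℝ) / d) := by gcongr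
      _ = _ := by ring
  have hupp : n * S ≤ Real.log (Nat.factorial n) + Chebyshev.psi n := by
    rw [← hfac, hSd, hpsi', Finset.mul_sum, ← Finset.sum_add_distrib]
    refine Finset.sum_le_sum fun d hd => ?_
    have hd0 : 0 < d := (Finset.mem_Ioc.mp hd).1
    have : (n : ℝ) / d ≤ (n / d : ℕ) + 1 := by
      rw [← Nat.floor_div_eq_div (K := ℝ)]
      exact (Nat.lt_floor_add_one _).le
    have h0 : 0 ≤ ArithmeticFunction.vonMangoldt d := ArithmeticFunction.vonMangoldt_nonneg
    calc _ = ArithmeticFunction.vonMangoldt d * ((n : ℝ) / d) := by ring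
      _ ≤ ArithmeticFunction.vonMangoldt d * ((n / d : ℕ) + 1) := by gcongr
      _ = _ := by ring
  have hS1 : S ≤ Real.log n + (Real.log 4 + 4) := by
    refine le_of_mul_le_mul_left ?_ hn'
    linarith
  have hS2 : Real.log n - 1 ≤ S := by
    refine le_of_mul_le_mul_left ?_ hn'
    linarith
  have hl4 : 0 ≤ Real.log 4 := Real.log_nonneg (by norm_num)
  rw [← hSd, abs_le]
  constructor <;> linarith

/-- Mertens' first theorem over primes: higher prime powers contribute a convergent series. -/
lemma exists_mertens_prime_bound : ∃ b : ℝ, ∀ n : ℕ,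
    |∑ d ∈ Finset.Ioc 0 n, ((if d.Prime then Real.log d else 0) / d - 1 / d)| ≤ b := by
  have hs := ArithmeticFunction.vonMangoldt.summable_residueClass_non_primes_div (1 : ZMod 1)
  simp only [residueClass_one_one] at hs
  refine ⟨Real.log 4 + 6 + ∑' n : ℕ, (if n.Prime then 0 else ArithmeticFunction.vonMangoldt n) / n,
    fun n => ?_⟩
  have h0 : ∀ n : ℕ, 0 ≤ (if n.Prime then 0 else ArithmeticFunction.vonMangoldt n) / (n : ℝ) := by
    intro n
    have h0 : 0 ≤ ArithmeticFunction.vonMangoldt n := ArithmeticFunction.vonMangoldt_nonneg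
    split_ifs <;> positivity
  have h1 := hs.sum_le_tsum (Finset.Ioc 0 n) (fun i _ => h0 i)
  have h2 : 0 ≤ ∑ d ∈ Finset.Ioc 0 n,
    (if d.Prime then 0 else ArithmeticFunction.vonMangoldt d) / (d : ℝ) :=
    Finset.sum_nonneg fun i _ => h0 i
  have h3 := abs_mertens_le n
  have e : ∑ d ∈ Finset.Ioc 0 n, ((if d.Prime then Real.log d else 0) / d - 1 / d)
      = ∑ d ∈ Finset.Ioc 0 n, (ArithmeticFunction.vonMangoldt d / d - 1 / d) -
        ∑ d ∈ Finset.Ioc 0 n,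
          (if d.Prime then 0 else ArithmeticFunction.vonMangoldt d) / (d : ℝ) := by
    rw [← Finset.sum_sub_distrib]
    refine Finset.sum_congr rfl fun d _ => ?_
    split_ifs with hd
    · rw [ArithmeticFunction.vonMangoldt_apply_prime hd]; ring
    · ring
  rw [e]
  rw [abs_le] at h3 ⊢
  constructor <;> linarith [h3.1, h3.2]

/-- The coefficient `1 / n` at primes `n`, and `0` elsewhere. -/
noncomputable def primeRecip (n : ℕ) : ℝ := if n.Prime then 1 / (n : ℝ) else 0

/-- The derivative of `log log` is the decreasing function `1 / (t log t)`; this is the mean value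
theorem on `[x, x + 1]`. -/
lemma loglog_step {x : ℝ} (hx : 1 < x) :
    1 / ((x + 1) * Real.log (x + 1)) ≤ Real.log (Real.log (x + 1)) - Real.log (Real.log x) ∧
    Real.log (Real.log (x + 1)) - Real.log (Real.log x) ≤ 1 / (x * Real.log x) := by
  have hd : ∀ t, 1 < t → HasDerivAt (fun t => Real.log (Real.log t)) (1 / (t * Real.log t)) t := by
    intro t ht
    have h := (Real.hasDerivAt_log (by positivity : t ≠ 0)).log (Real.log_pos ht).ne'
    convert! h using 1
    field_simp
  obtain ⟨c, hc, he⟩ := exists_hasDerivAt_eq_slope (fun t => Real.log (Real.log t))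
    (fun t => 1 / (t * Real.log t)) (show x < x + 1 by linarith)
    (fun t ht => (hd t (by linarith [ht.1])).continuousAt.continuousWithinAt)
    (fun t ht => hd t (by linarith [ht.1]))
  simp only [add_sub_cancel_left, div_one] at he
  rw [← he]
  have hlx := Real.log_pos hx
  have hlc : Real.log x ≤ Real.log c := Real.log_le_log (by linarith) hc.1.le
  have hlc' : Real.log c ≤ Real.log (x + 1) := Real.log_le_log (by linarith [hc.1]) hc.2.le
  have hc1 : 0 < c := by linarith [hc.1]
  have hlc0 := hlx.trans_le hlc
  have := hc.1
  have := hc.2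
  constructor
  · refine one_div_le_one_div_of_le (by positivity) ?_
    gcongr
  · refine one_div_le_one_div_of_le (by positivity) ?_
    gcongr

lemma exists_tendsto_mertens_nat : ∃ C : ℝ, Tendsto (fun n : ℕ =>
    ∑ k ∈ Finset.Icc 1 n, primeRecip k - Real.log (Real.log ((n : ℝ) + 1))) atTop (𝓝 C) := by
  obtain ⟨b, hb⟩ := exists_mertens_prime_bound
  have hlog2 : ∀ k : ℕ, 0 < Real.log ((k : ℝ) + 2) := fun k => Real.log_pos (by
    have : (0 : ℝ) ≤ k := Nat.cast_nonneg k
    linarith)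
  -- Dirichlet's test: the decreasing weights `1 / log k` against the bounded partial sums of
  -- `(log k · 1_{k prime} - 1) / k`; indices are shifted by `2` so that `log k > 0`.
  have hD : CauchySeq fun n : ℕ => ∑ i ∈ Finset.range n, (1 / Real.log ((i : ℝ) + 2)) •
      ((if (i + 2).Prime then Real.log ((i + 2 : ℕ) : ℝ) else 0) / ((i + 2 : ℕ) : ℝ)
        - 1 / ((i + 2 : ℕ) : ℝ)) := by
    refine Antitone.cauchySeq_series_mul_of_tendsto_zero_of_bounded (b := b + 1) ?_ ?_ ?_
    · intro i j hij
      refine one_div_le_one_div_of_le (hlog2 i) (Real.log_le_log (by positivity) ?_)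
      have : (i : ℝ) ≤ j := by exact_mod_cast hij
      linarith
    · simp only [one_div]
      exact (Real.tendsto_log_atTop.comp (tendsto_atTop_add_const_right _ 2
        tendsto_natCast_atTop_atTop)).inv_tendsto_atTop
    · intro n
      have h := hb (n + 1)
      rw [← Finset.sum_Ioc_consecutive _ (Nat.zero_le 1) (Nat.le_add_left 1 n)] at h
      simp only [show Finset.Ioc 0 1 = {1} from rfl, Finset.sum_singleton, Nat.not_prime_one,
        if_false] at h
      have e : Finset.Ioc 1 (n + 1) = Finset.Ico 2 (n + 2) := by
        ext x; simp only [Finset.mem_Ioc, Finset.mem_Ico]; omega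
      rw [e, Finset.sum_Ico_eq_sum_range] at h
      simp only [Nat.add_sub_cancel, add_comm 2] at h
      rw [Real.norm_eq_abs]
      rw [abs_le] at h ⊢
      norm_num at h ⊢
      constructor <;> linarith [h.1, h.2]
  obtain ⟨C1, hC1⟩ := cauchySeq_tendsto_of_complete hD
  -- What remains is `∑ 1 / (k log k)`, whose terms differ from the increments of `log log` by a
  -- nonnegative quantity dominated by a telescoping difference.
  have hW : Summable fun k : ℕ => 1 / (((k : ℝ) + 2) * Real.log ((k : ℝ) + 2)) -
      (Real.log (Real.log ((k : ℝ) + 2 + 1)) - Real.log (Real.log ((k : ℝ) + 2))) := by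
    refine summable_of_sum_range_le (c := 1 / (((0 : ℕ) + 2 : ℝ) * Real.log ((0 : ℕ) + 2 : ℝ)))
      (fun k => ?_) fun n => ?_
    · have := (loglog_step (x := (k : ℝ) + 2) (by
        have : (0 : ℝ) ≤ k := Nat.cast_nonneg k
        linarith)).2
      linarith
    · calc _ ≤ ∑ k ∈ Finset.range n, (1 / (((k : ℝ) + 2) * Real.log ((k : ℝ) + 2)) -
            1 / ((((k + 1 : ℕ) : ℝ) + 2) * Real.log (((k + 1 : ℕ) : ℝ) + 2))) := by
            refine Finset.sum_le_sum fun k _ => ?_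
            have := (loglog_step (x := (k : ℝ) + 2) (by
              have : (0 : ℝ) ≤ k := Nat.cast_nonneg k
              linarith)).1
            have e : ((k + 1 : ℕ) : ℝ) + 2 = (k : ℝ) + 2 + 1 := by push_cast; ring
            rw [e]
            linarith
        _ = 1 / (((0 : ℕ) + 2 : ℝ) * Real.log ((0 : ℕ) + 2 : ℝ)) -
            1 / (((n : ℝ) + 2) * Real.log ((n : ℝ) + 2)) :=
          Finset.sum_range_sub' (fun k : ℕ => 1 / (((k : ℝ) + 2) * Real.log ((k : ℝ) + 2))) n
        _ ≤ _ := by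
          have := hlog2 n
          rw [sub_le_self_iff]
          positivity
  have hW' := hW.hasSum.tendsto_sum_nat
  refine ⟨C1 + (∑' k : ℕ, (1 / (((k : ℝ) + 2) * Real.log ((k : ℝ) + 2)) -
      (Real.log (Real.log ((k : ℝ) + 2 + 1)) - Real.log (Real.log ((k : ℝ) + 2))))) -
      Real.log (Real.log 2), ?_⟩
  rw [← tendsto_add_atTop_iff_nat 1]
  refine ((hC1.add hW').sub_const _).congr fun n => ?_
  rw [← Finset.sum_add_distrib]
  have e : Finset.Icc 1 (n + 1) = Finset.Ico 1 (n + 2) := by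
    ext x; simp only [Finset.mem_Icc, Finset.mem_Ico]; omega
  rw [e, Finset.sum_eq_sum_Ico_succ_bot (by omega), Finset.sum_Ico_eq_sum_range]
  have tele := Finset.sum_range_sub (fun k : ℕ => Real.log (Real.log ((k : ℝ) + 2))) n
  have e2 : ∀ k : ℕ, (1 / Real.log ((k : ℝ) + 2)) •
      ((if (k + 2).Prime then Real.log ((k + 2 : ℕ) : ℝ) else 0) / ((k + 2 : ℕ) : ℝ)
        - 1 / ((k + 2 : ℕ) : ℝ)) + (1 / (((k : ℝ) + 2) * Real.log ((k : ℝ) + 2)) -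
      (Real.log (Real.log ((k : ℝ) + 2 + 1)) - Real.log (Real.log ((k : ℝ) + 2)))) =
      primeRecip (2 + k) - (Real.log (Real.log (((k + 1 : ℕ) : ℝ) + 2)) -
        Real.log (Real.log ((k : ℝ) + 2))) := by
    intro k
    have h2 := (hlog2 k).ne'
    have h3 : (k : ℝ) + 2 ≠ 0 := by positivity
    have e3 : ((k + 1 : ℕ) : ℝ) + 2 = (k : ℝ) + 2 + 1 := by push_cast; ring
    rw [e3, add_comm 2 k, primeRecip]
    push_cast
    split_ifs
    · rw [smul_eq_mul]; field_simp; ring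
    · rw [smul_eq_mul]; field_simp; ring
  simp_rw [e2]
  rw [Finset.sum_sub_distrib, tele]
  have e4 : ((n + 1 : ℕ) : ℝ) + 1 = (n : ℝ) + 2 := by push_cast; ring
  rw [e4]
  simp [primeRecip, Nat.not_prime_one]
  ring

/-! ### Abel means and Laplace transforms -/

/-- The sum of `1 / q` over the primes `q ≤ x`. -/
noncomputable def primeRecipSum (x : ℝ) : ℝ := ∑ k ∈ Finset.Icc 1 ⌊x⌋₊, primeRecip k

lemma primeRecip_nonneg (n : ℕ) : 0 ≤ primeRecip n := by
  unfold primeRecip; split_ifs <;> positivity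

lemma primeRecipSum_mono : Monotone primeRecipSum := by
  intro x y hxy
  refine Finset.sum_le_sum_of_subset_of_nonneg ?_ fun i _ _ => primeRecip_nonneg i
  exact Finset.Icc_subset_Icc_right (Nat.floor_mono hxy)

/-- Mertens' second theorem, with an unspecified constant. -/
lemma exists_tendsto_mertens : ∃ C : ℝ, Tendsto (fun x : ℝ =>
    primeRecipSum x - Real.log (Real.log x)) atTop (𝓝 C) := by
  obtain ⟨C, hC⟩ := exists_tendsto_mertens_nat
  refine ⟨C, ?_⟩
  have h1 := hC.comp (tendsto_nat_floor_atTop (α := ℝ))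
  have h2 : Tendsto (fun x : ℝ => Real.log (Real.log ((⌊x⌋₊ : ℝ) + 1)) - Real.log (Real.log x))
      atTop (𝓝 0) := by
    have h3 : Tendsto (fun x : ℝ => 1 / (x * Real.log x)) atTop (𝓝 0) := by
      simp only [one_div]
      exact (tendsto_id.atTop_mul_atTop₀ Real.tendsto_log_atTop).inv_tendsto_atTop
    refine tendsto_of_tendsto_of_tendsto_of_le_of_le' tendsto_const_nhds h3 ?_ ?_
    · filter_upwards [eventually_gt_atTop 1] with x hx
      have := (Nat.lt_floor_add_one x).le
      have hl := Real.log_pos hx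
      rw [sub_nonneg]
      exact Real.log_le_log hl (Real.log_le_log (by linarith) this)
    · filter_upwards [eventually_gt_atTop 1] with x hx
      refine le_trans ?_ (loglog_step hx).2
      have := Nat.floor_le (by linarith : (0 : ℝ) ≤ x)
      have hx' := Nat.lt_floor_add_one x
      have hl : 0 < Real.log ((⌊x⌋₊ : ℝ) + 1) := Real.log_pos (by linarith)
      refine sub_le_sub_right (Real.log_le_log hl (Real.log_le_log (by linarith) ?_)) _
      linarith
  have := h1.add h2
  rw [add_zero] at this
  refine this.congr fun x => ?_
  simp only [Function.comp_apply, primeRecipSum]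
  ring

/-- Abel means of a bounded function have the same limit as the function: substitute `v = εu` and use
dominated convergence. -/
lemma abelian {F : ℝ → ℝ} {B L : ℝ} (hFm : Measurable F) (hB : ∀ u > 0, |F u| ≤ B)
    (hL : Tendsto F atTop (𝓝 L)) :
    Tendsto (fun ε : ℝ => ε * ∫ u in Set.Ioi (0 : ℝ), F u * Real.exp (-(ε * u))) (𝓝[>] 0)
      (𝓝 L) := by
  have hi : IntegrableOn (fun v : ℝ => Real.exp (-v)) (Set.Ioi 0) := integrableOn_exp_neg_Ioi 0
  have h1 : Tendsto (fun ε : ℝ => ∫ v in Set.Ioi (0 : ℝ), F (ε⁻¹ * v) * Real.exp (-v)) (𝓝[>] 0)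
      (𝓝 (∫ v in Set.Ioi (0 : ℝ), L * Real.exp (-v))) := by
    refine tendsto_integral_filter_of_dominated_convergence (fun v => B * Real.exp (-v)) ?_ ?_
      (hi.const_mul B) ?_
    · refine Eventually.of_forall fun ε => Measurable.aestronglyMeasurable ?_
      fun_prop
    · filter_upwards [self_mem_nhdsWithin] with ε (hε : 0 < ε)
      filter_upwards [ae_restrict_mem measurableSet_Ioi] with v (hv : 0 < v)
      rw [norm_mul, Real.norm_of_nonneg (Real.exp_pos _).le]
      gcongr
      exact hB _ (by positivity)
    · filter_upwards [ae_restrict_mem measurableSet_Ioi] with v (hv : 0 < v)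
      refine Tendsto.mul_const _ (hL.comp ?_)
      exact tendsto_inv_nhdsGT_zero.atTop_mul_const hv
  rw [integral_const_mul, integral_exp_neg_Ioi_zero, mul_one] at h1
  refine h1.congr' ?_
  filter_upwards [self_mem_nhdsWithin] with ε (hε : 0 < ε)
  have := integral_comp_mul_left_Ioi (fun v => F (ε⁻¹ * v) * Real.exp (-v)) 0 hε
  rw [mul_zero, smul_eq_mul] at this
  rw [eq_comm, ← mul_inv_cancel_left₀ hε.ne'
    (∫ v in Set.Ioi (0 : ℝ), F (ε⁻¹ * v) * Real.exp (-v)), ← this]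
  congr 1
  refine setIntegral_congr_fun measurableSet_Ioi fun u _ => ?_
  simp only [inv_mul_cancel_left₀ hε.ne']

lemma primeRecipSum_laplace {ε : ℝ} (hε : 0 < ε) :
    ε * ∫ u in Set.Ioi (0 : ℝ), primeRecipSum (Real.exp u) * Real.exp (-(ε * u))
      = ∑' p : Nat.Primes, ((p : ℕ) : ℝ) ^ (-(1 + ε)) := by
  obtain ⟨C, hC⟩ := exists_tendsto_mertens
  have hO : (fun n ↦ ∑ k ∈ Finset.Icc 1 n, primeRecip k) =O[atTop]
      fun n ↦ (n : ℝ) ^ (ε / 2) := by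
    have h1 : (fun x : ℝ => primeRecipSum x) =O[atTop] fun x : ℝ => x ^ (ε / 2) := by
      have e : (fun x : ℝ => primeRecipSum x) = fun x =>
          (primeRecipSum x - Real.log (Real.log x)) + Real.log (Real.log x) := by
        funext x; ring
      rw [e]
      have hl := isLittleO_log_rpow_atTop (show 0 < ε / 2 by positivity)
      refine Asymptotics.IsBigO.add ?_ ?_
      · refine (hC.isBigO_one ℝ).trans ?_
        refine Asymptotics.IsBigO.of_bound 1 ?_
        filter_upwards [eventually_ge_atTop 1] with x hx
        rw [one_mul, norm_one, Real.norm_of_nonneg (by positivity)]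
        exact Real.one_le_rpow hx (by positivity)
      · refine Asymptotics.IsBigO.trans ?_ hl.isBigO
        refine (Real.isLittleO_log_id_atTop.comp_tendsto Real.tendsto_log_atTop).isBigO
    refine (h1.comp_tendsto tendsto_natCast_atTop_atTop).congr_left fun n => ?_
    simp [primeRecipSum]
  have h := LSeries_eq_laplace primeRecip primeRecip_nonneg (r := ε / 2) (s := (ε : ℂ))
    (by positivity) (by simpa using hε) hO
  have hI : ∫ u in Set.Ioi (0 : ℝ),
      ((∑ k ∈ Finset.Icc 1 ⌊Real.exp u⌋₊, primeRecip k : ℝ) : ℂ) * Complex.exp (-((ε : ℂ) * u))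
      = ((∫ u in Set.Ioi (0 : ℝ), primeRecipSum (Real.exp u) * Real.exp (-(ε * u)) : ℝ) : ℂ) := by
    rw [← integral_complex_ofReal]
    congr 1 with u
    push_cast [primeRecipSum]
    rfl
  rw [hI] at h
  rw [← Complex.ofReal_inj, Complex.ofReal_mul, ← h, LSeries]
  have e : ∀ n : ℕ, LSeries.term (fun n => (primeRecip n : ℂ)) ε n =
      (({n : ℕ | n.Prime}.indicator (fun n : ℕ => (n : ℝ) ^ (-(1 + ε))) n : ℝ) : ℂ) := by
    intro n
    by_cases hn : n.Prime
    · have hn0 : (0 : ℝ) < n := by exact_mod_cast hn.pos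
      rw [Set.indicator_of_mem (by exact hn), LSeries.term_of_ne_zero hn.ne_zero, primeRecip,
        if_pos hn, Real.rpow_neg hn0.le, Real.rpow_add hn0, Real.rpow_one]
      push_cast [Complex.ofReal_cpow hn0.le]
      field_simp
    · rw [Set.indicator_of_notMem (by exact hn), LSeries.term_def, primeRecip, if_neg hn]
      simp
  simp_rw [e]
  rw [← Complex.ofReal_tsum, ← tsum_subtype]
  rfl

/-- The Abel mean of `u ↦ H(⌊u⌋)` is `∑_{n ≥ 1} e^{-εn} / n`, as the `n`-th term `1/n` of the harmonic
sum is switched on at `u = n`. This makes harmonic numbers a convenient replacement for `log u`. -/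
lemma harmonic_laplace {ε : ℝ} (hε : 0 < ε) :
    IntegrableOn (fun u : ℝ => (harmonic ⌊u⌋₊ : ℝ) * Real.exp (-(ε * u))) (Set.Ioi 0) ∧
    ε * ∫ u in Set.Ioi (0 : ℝ), (harmonic ⌊u⌋₊ : ℝ) * Real.exp (-(ε * u))
      = -Real.log (1 - Real.exp (-ε)) := by
  have hx1 : Real.exp (-ε) < 1 := by rw [Real.exp_lt_one_iff]; linarith
  have hx0 := Real.exp_pos (-ε)
  have hsum : HasSum (fun n : ℕ => Real.exp (-ε) ^ (n + 1) / ((n : ℝ) + 1))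
      (-Real.log (1 - Real.exp (-ε))) :=
    Real.hasSum_pow_div_log_of_abs_lt_one (by rwa [abs_of_pos hx0])
  have hmem : ∀ (n : ℕ) (u : ℝ), u ∈ Set.Ici ((n : ℝ) + 1) ↔ n < ⌊u⌋₊ := by
    intro n u
    rw [Set.mem_Ici, ← Nat.add_one_le_iff, Nat.le_floor_iff' (Nat.succ_ne_zero n)]
    push_cast; rfl
  let F : ℕ → ℝ → ℝ := fun n => (Set.Ici ((n : ℝ) + 1)).indicator
    (fun u => ((n : ℝ) + 1)⁻¹ * Real.exp (-ε * u))
  have hFint : ∀ n, Integrable (F n) (volume.restrict (Set.Ioi 0)) := by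
    intro n
    have h := ((integrableOn_exp_mul_Ioi (a := -ε) (by linarith) 0).const_mul ((n : ℝ) + 1)⁻¹)
    exact Integrable.indicator h measurableSet_Ici
  have hF0 : ∀ n u, 0 ≤ F n u := fun n u =>
    Set.indicator_nonneg (fun _ _ => by positivity) _
  have hFval : ∀ n : ℕ, ∫ u in Set.Ioi (0 : ℝ), F n u
      = Real.exp (-ε) ^ (n + 1) / ((n : ℝ) + 1) * ε⁻¹ := by
    intro n
    rw [setIntegral_indicator measurableSet_Ici, Set.inter_eq_right.mpr,
      integral_Ici_eq_integral_Ioi, integral_const_mul, integral_exp_mul_Ioi (by linarith),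
      ← Real.exp_nat_mul]
    · push_cast
      rw [mul_comm ((n : ℝ) + 1) (-ε)]
      field_simp
    · intro u hu
      have : (0 : ℝ) ≤ n := Nat.cast_nonneg n
      have hu' : (n : ℝ) + 1 ≤ u := hu
      exact Set.mem_Ioi.mpr (by linarith)
  have hkey := hasSum_integral_of_summable_integral_norm hFint (by
    simp_rw [Real.norm_of_nonneg (hF0 _ _), hFval]
    exact hsum.summable.mul_right _)
  simp_rw [hFval] at hkey
  have hval := hkey.unique (hsum.mul_right ε⁻¹)
  have hpt : ∀ u : ℝ, ∑' n, F n u = (harmonic ⌊u⌋₊ : ℝ) * Real.exp (-(ε * u)) := by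
    intro u
    rw [tsum_eq_sum (s := Finset.range ⌊u⌋₊)]
    · rw [harmonic]
      push_cast
      rw [Finset.sum_mul]
      refine Finset.sum_congr rfl fun n hn => ?_
      simp only [F]
      rw [Set.indicator_of_mem ((hmem n u).mpr (Finset.mem_range.mp hn)), neg_mul]
    · intro n hn
      refine Set.indicator_of_notMem ?_ _
      rwa [hmem, ← Finset.mem_range]
  simp_rw [hpt] at hval
  have hpos : 0 < -Real.log (1 - Real.exp (-ε)) :=
    neg_pos.mpr (Real.log_neg (by linarith) (by linarith))
  -- A nonintegrable function would have integral `0`.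
  refine ⟨Integrable.of_integral_ne_zero ?_, ?_⟩
  · rw [hval]; positivity
  · rw [hval]; field_simp

/-! ### The constant in Mertens' second theorem -/

/-- The remainder `-log (1 - x) - x`, which measures the gap between the logarithm of the Euler factor
`(1 - x)⁻¹` and its linear part. -/
noncomputable def logRem (x : ℝ) : ℝ := -Real.log (1 - x) - x

lemma abs_logRem_le {x : ℝ} (h1 : x ≤ 1 / 2) : |logRem x| ≤ 2 * x ^ 2 := by
  have hpos : 0 < 1 - x := by linarith
  have h2 := Real.log_le_sub_one_of_pos hpos
  have h3 := Real.one_sub_inv_le_log_of_pos hpos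
  have h4 : (1 - x)⁻¹ ≤ 1 + x + 2 * x ^ 2 := by
    rw [inv_le_iff_one_le_mul₀ hpos]
    nlinarith [sq_nonneg x, mul_nonneg (sq_nonneg x) (by linarith : (0:ℝ) ≤ 1 - 2 * x)]
  rw [logRem, abs_le]
  constructor
  · nlinarith [sq_nonneg x]
  · linarith

lemma prime_rpow_le {ε : ℝ} (hε : 0 ≤ ε) (p : Nat.Primes) :
    0 ≤ ((p : ℕ) : ℝ) ^ (-(1 + ε)) ∧ ((p : ℕ) : ℝ) ^ (-(1 + ε)) ≤ ((p : ℕ) : ℝ)⁻¹ ∧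
    ((p : ℕ) : ℝ)⁻¹ ≤ 1 / 2 := by
  have hp : (2 : ℝ) ≤ (p : ℕ) := by exact_mod_cast p.2.two_le
  refine ⟨by positivity, ?_, ?_⟩
  · rw [← Real.rpow_neg_one]
    exact Real.rpow_le_rpow_of_exponent_le (by linarith) (by linarith)
  · rw [one_div]; exact inv_anti₀ (by norm_num) hp

lemma summable_prime_sq : Summable fun p : Nat.Primes => 2 * (((p : ℕ) : ℝ)⁻¹) ^ 2 := by
  have h : Summable fun n : ℕ => 2 * ((n : ℝ)⁻¹) ^ 2 := by
    have := (Real.summable_nat_pow_inv (p := 2)).mpr (by norm_num)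
    simpa [inv_pow] using this.mul_left 2
  exact h.comp_injective Nat.Primes.coe_nat_injective

lemma abs_logRem_prime_le {ε : ℝ} (hε : 0 ≤ ε) (p : Nat.Primes) :
    |logRem (((p : ℕ) : ℝ) ^ (-(1 + ε)))| ≤ 2 * (((p : ℕ) : ℝ)⁻¹) ^ 2 := by
  obtain ⟨h0, h1, h2⟩ := prime_rpow_le hε p
  refine (abs_logRem_le (h1.trans h2)).trans ?_
  gcongr

lemma tendsto_tsum_logRem :
    Tendsto (fun ε : ℝ => ∑' p : Nat.Primes, logRem (((p : ℕ) : ℝ) ^ (-(1 + ε)))) (𝓝[>] 0)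
      (𝓝 (∑' p : Nat.Primes, logRem (((p : ℕ) : ℝ)⁻¹))) := by
  refine tendsto_tsum_of_dominated_convergence summable_prime_sq (fun p => ?_) ?_
  · have hp : (2 : ℝ) ≤ (p : ℕ) := by exact_mod_cast p.2.two_le
    have h1 : ContinuousAt (fun ε : ℝ => logRem (((p : ℕ) : ℝ) ^ (-(1 + ε)))) 0 := by
      have h2 : ContinuousAt (fun ε : ℝ => ((p : ℕ) : ℝ) ^ (-(1 + ε))) 0 := by
        refine ContinuousAt.rpow continuousAt_const (by fun_prop) (Or.inl ?_)
        linarith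
      unfold logRem
      refine ContinuousAt.sub (ContinuousAt.neg (ContinuousAt.log (by fun_prop) ?_)) h2
      obtain ⟨h0, h1, h2⟩ := prime_rpow_le le_rfl p
      exact sub_ne_zero.mpr (ne_of_gt ((h1.trans h2).trans_lt (by norm_num)))
    have h3 := h1.tendsto.mono_left (nhdsWithin_le_nhds (s := Set.Ioi 0))
    simpa [Real.rpow_neg_one] using h3
  · filter_upwards [self_mem_nhdsWithin] with ε (hε : 0 < ε) p
    exact abs_logRem_prime_le hε.le p

lemma summable_prime_rpow {ε : ℝ} (hε : 0 < ε) :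
    Summable fun p : Nat.Primes => ((p : ℕ) : ℝ) ^ (-(1 + ε)) := by
  have h : Summable fun n : ℕ => (n : ℝ) ^ (-(1 + ε)) :=
    Real.summable_nat_rpow.mpr (by linarith)
  exact h.comp_injective Nat.Primes.coe_nat_injective

/-- The logarithm of the Euler product at `1 + ε`, with the linear part split off. -/
lemma exp_sum_eq_zeta {ε : ℝ} (hε : 0 < ε) :
    ((Real.exp (∑' p : Nat.Primes, ((p : ℕ) : ℝ) ^ (-(1 + ε)) +
      ∑' p : Nat.Primes, logRem (((p : ℕ) : ℝ) ^ (-(1 + ε)))) : ℝ) : ℂ)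
      = riemannZeta ((1 + ε : ℝ) : ℂ) := by
  have hs : Summable fun p : Nat.Primes => logRem (((p : ℕ) : ℝ) ^ (-(1 + ε))) :=
    Summable.of_norm_bounded summable_prime_sq fun p => abs_logRem_prime_le hε.le p
  rw [← (summable_prime_rpow hε).tsum_add hs,
    ← riemannZeta_eulerProduct_exp_log (by simpa using hε), Complex.ofReal_exp, Complex.ofReal_tsum]
  congr 2 with p
  obtain ⟨h0, h1, h2⟩ := prime_rpow_le hε.le p
  rw [logRem, add_sub_cancel, Complex.ofReal_neg, Complex.ofReal_log (by linarith)]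
  push_cast [Complex.ofReal_cpow (Nat.cast_nonneg (p : ℕ) : (0 : ℝ) ≤ (p : ℕ))]
  rfl

/-- `log ζ(1 + ε) + log (1 - e^{-ε}) → 0`, by the residue `1` of `ζ` at `1`. -/
lemma tendsto_log_zeta :
    Tendsto (fun ε : ℝ => (∑' p : Nat.Primes, ((p : ℕ) : ℝ) ^ (-(1 + ε)) +
      ∑' p : Nat.Primes, logRem (((p : ℕ) : ℝ) ^ (-(1 + ε)))) + Real.log (1 - Real.exp (-ε)))
      (𝓝[>] 0) (𝓝 0) := by
  have h1 : Tendsto (fun ε : ℝ => ((1 + ε : ℝ) : ℂ)) (𝓝[>] 0) (𝓝[≠] 1) := by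
    refine tendsto_nhdsWithin_iff.mpr ⟨?_, ?_⟩
    · have : Continuous fun ε : ℝ => ((1 + ε : ℝ) : ℂ) := by fun_prop
      simpa using (this.tendsto 0).mono_left nhdsWithin_le_nhds
    · filter_upwards [self_mem_nhdsWithin] with ε (hε : 0 < ε)
      rw [Set.mem_compl_singleton_iff, ← Complex.ofReal_one, Ne, Complex.ofReal_inj]
      linarith
  have h2 := riemannZeta_residue_one.comp h1
  have h3 : Tendsto (fun ε : ℝ => ε * Real.exp (∑' p : Nat.Primes, ((p : ℕ) : ℝ) ^ (-(1 + ε)) +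
      ∑' p : Nat.Primes, logRem (((p : ℕ) : ℝ) ^ (-(1 + ε))))) (𝓝[>] 0) (𝓝 1) := by
    have := (Complex.continuous_re.tendsto _).comp h2
    rw [Complex.one_re] at this
    refine this.congr' ?_
    filter_upwards [self_mem_nhdsWithin] with ε (hε : 0 < ε)
    simp only [Function.comp_apply]
    rw [← exp_sum_eq_zeta hε, ← Complex.ofReal_one, ← Complex.ofReal_sub, ← Complex.ofReal_mul,
      Complex.ofReal_re, add_sub_cancel_left]
  have h4 : Tendsto (fun ε : ℝ => (1 - Real.exp (-ε)) / ε) (𝓝[>] 0) (𝓝 1) := by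
    have hd : HasDerivAt (fun ε : ℝ => 1 - Real.exp (-ε)) 1 0 := by
      have := ((hasDerivAt_neg (0 : ℝ)).exp).const_sub 1
      simpa using this
    have := hd.tendsto_slope_zero_right
    simpa [div_eq_inv_mul] using this
  have h5 := (h3.mul h4).log (by norm_num)
  rw [mul_one, Real.log_one] at h5
  refine h5.congr' ?_
  filter_upwards [self_mem_nhdsWithin] with ε (hε : 0 < ε)
  have hx1 : Real.exp (-ε) < 1 := by rw [Real.exp_lt_one_iff]; linarith
  have hx : 1 - Real.exp (-ε) ≠ 0 := by linarith
  rw [mul_comm ε, mul_assoc, mul_div_cancel₀ _ hε.ne', Real.log_mul (Real.exp_ne_zero _) hx,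
    Real.log_exp]

lemma tendsto_harmonic_floor_sub_log :
    Tendsto (fun u : ℝ => (harmonic ⌊u⌋₊ : ℝ) - Real.log u) atTop
      (𝓝 Real.eulerMascheroniConstant) := by
  have h1 := Real.tendsto_harmonic_sub_log.comp (tendsto_nat_floor_atTop (α := ℝ))
  have h2 : Tendsto (fun u : ℝ => Real.log ((⌊u⌋₊ : ℝ) / u)) atTop (𝓝 0) := by
    have := (tendsto_nat_floor_div_atTop (R := ℝ)).log (by norm_num)
    simpa using this
  have := h1.add h2
  rw [add_zero] at this
  refine this.congr' ?_
  filter_upwards [eventually_ge_atTop 1] with u hu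
  have hf : (0 : ℝ) < ⌊u⌋₊ := by exact_mod_cast Nat.floor_pos.mpr hu
  simp only [Function.comp_apply]
  rw [Real.log_div hf.ne' (by linarith)]
  ring

/-- Mertens' second theorem with its constant `γ - ∑_q (-log (1 - 1/q) - 1/q)`. -/
theorem tendsto_primeRecipSum_sub_loglog :
    Tendsto (fun x : ℝ => primeRecipSum x - Real.log (Real.log x)) atTop
      (𝓝 (Real.eulerMascheroniConstant - ∑' p : Nat.Primes, logRem (((p : ℕ) : ℝ)⁻¹))) := by
  obtain ⟨C, hC⟩ := exists_tendsto_mertens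
  suffices h : C - Real.eulerMascheroniConstant =
      - ∑' p : Nat.Primes, logRem (((p : ℕ) : ℝ)⁻¹) by
    rw [show Real.eulerMascheroniConstant - ∑' p : Nat.Primes, logRem (((p : ℕ) : ℝ)⁻¹) = C by
      linarith]
    exact hC
  let F : ℝ → ℝ := fun u => primeRecipSum (Real.exp u) - (harmonic ⌊u⌋₊ : ℝ)
  have hFL : Tendsto F atTop (𝓝 (C - Real.eulerMascheroniConstant)) := by
    refine ((hC.comp Real.tendsto_exp_atTop).sub tendsto_harmonic_floor_sub_log).congr fun u => ?_
    simp only [F, Function.comp_apply, Real.log_exp]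
    ring
  have hPm : Measurable fun u => primeRecipSum (Real.exp u) :=
    primeRecipSum_mono.measurable.comp Real.measurable_exp
  have hHmono : Monotone fun u : ℝ => (harmonic ⌊u⌋₊ : ℝ) := by
    intro u v huv
    simp only [harmonic]
    push_cast
    refine Finset.sum_le_sum_of_subset_of_nonneg ?_ fun i _ _ => by positivity
    exact Finset.range_subset_range.mpr (Nat.floor_mono huv)
  have hFm : Measurable F := hPm.sub hHmono.measurable
  have hP0 : ∀ x, 0 ≤ primeRecipSum x := fun x =>
    Finset.sum_nonneg fun i _ => primeRecip_nonneg i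
  have hH0 : ∀ u : ℝ, 0 ≤ (harmonic ⌊u⌋₊ : ℝ) := fun u => by
    simp only [harmonic]; push_cast; exact Finset.sum_nonneg fun i _ => by positivity
  -- Bounded near infinity by convergence, and below `U` because both terms are monotone.
  obtain ⟨B, hB⟩ : ∃ B, ∀ u, |F u| ≤ B := by
    obtain ⟨U, hU⟩ := eventually_atTop.mp ((hFL.abs).eventually_lt_const
      (lt_add_one |C - Real.eulerMascheroniConstant|))
    refine ⟨|C - Real.eulerMascheroniConstant| + 1 + primeRecipSum (Real.exp U)
      + (harmonic ⌊U⌋₊ : ℝ), fun u => ?_⟩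
    have hp := hP0 (Real.exp U)
    have hh := hH0 U
    rcases le_total U u with h | h
    · have := hU u h
      linarith
    · have h1 := primeRecipSum_mono (Real.exp_le_exp.mpr h)
      have h2 := hHmono h
      simp only at h2
      have h3 := hP0 (Real.exp u)
      have h4 := hH0 u
      have h5 := abs_nonneg (C - Real.eulerMascheroniConstant)
      simp only [F]
      rw [abs_le]
      constructor <;> linarith
  have hA := abelian hFm (fun u _ => hB u) hFL
  have hlim : Tendsto (fun ε : ℝ => ε * ∫ u in Set.Ioi (0 : ℝ), F u * Real.exp (-(ε * u)))
      (𝓝[>] 0) (𝓝 (0 - ∑' p : Nat.Primes, logRem (((p : ℕ) : ℝ)⁻¹))) := by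
    refine (tendsto_log_zeta.sub tendsto_tsum_logRem).congr' ?_
    filter_upwards [self_mem_nhdsWithin] with ε (hε : 0 < ε)
    obtain ⟨hHi, hH⟩ := harmonic_laplace hε
    have hFi : IntegrableOn (fun u => F u * Real.exp (-(ε * u))) (Set.Ioi 0) := by
      have h := (integrableOn_exp_mul_Ioi (a := -ε) (by linarith) 0).const_mul B
      refine Integrable.mono' h ?_ (ae_of_all _ fun u => ?_)
      · exact Measurable.aestronglyMeasurable (by fun_prop)
      · rw [norm_mul, Real.norm_of_nonneg (Real.exp_pos _).le, neg_mul]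
        gcongr
        exact hB u
    have hsplit : ∫ u in Set.Ioi (0 : ℝ), primeRecipSum (Real.exp u) * Real.exp (-(ε * u)) =
        (∫ u in Set.Ioi (0 : ℝ), F u * Real.exp (-(ε * u))) +
        ∫ u in Set.Ioi (0 : ℝ), (harmonic ⌊u⌋₊ : ℝ) * Real.exp (-(ε * u)) := by
      rw [← integral_add hFi hHi]
      congr 1 with u
      simp only [F]; ring
    have hP := primeRecipSum_laplace hε
    rw [hsplit, mul_add, hH] at hP
    linarith
  rw [tendsto_nhds_unique hA hlim]
  ring

/-! ### Mertens' third theorem for primorials -/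

lemma tendsto_sum_logRem :
    Tendsto (fun n : ℕ => ∑ q ∈ Nat.primesLE n, logRem ((q : ℝ)⁻¹)) atTop
      (𝓝 (∑' p : Nat.Primes, logRem (((p : ℕ) : ℝ)⁻¹))) := by
  have hs : Summable fun p : Nat.Primes => logRem (((p : ℕ) : ℝ)⁻¹) :=
    Summable.of_norm_bounded summable_prime_sq fun p => by
      simpa [Real.rpow_neg_one] using abs_logRem_prime_le le_rfl p
  have h1 : HasSum ({p : ℕ | p.Prime}.indicator fun q : ℕ => logRem ((q : ℝ)⁻¹))
      (∑' p : Nat.Primes, logRem (((p : ℕ) : ℝ)⁻¹)) :=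
    (hasSum_subtype_iff_indicator (s := {p : ℕ | p.Prime})).mp hs.hasSum
  refine (h1.tendsto_sum_nat.comp (tendsto_add_atTop_nat 1)).congr fun n => ?_
  rw [Function.comp_apply, Nat.primesLE_eq_filter_range, Finset.sum_filter]
  exact Finset.sum_congr rfl fun q _ => by simp [Set.indicator_apply]

lemma primeRecipSum_eq (n : ℕ) : primeRecipSum n = ∑ q ∈ Nat.primesLE n, (q : ℝ)⁻¹ := by
  rw [primeRecipSum, Nat.floor_natCast, Nat.primesLE_eq_filter_range, Finset.sum_filter]
  refine Finset.sum_subset_zero_on_sdiff (fun k hk => ?_) (fun k hk => ?_) fun k _ => ?_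
  · simp only [Finset.mem_Icc, Finset.mem_range] at *; omega
  · simp only [Finset.mem_sdiff, Finset.mem_Icc, Finset.mem_range] at hk
    obtain rfl : k = 0 := by omega
    simp
  · simp [primeRecip]

lemma log_primorial_div_totient (n : ℕ) :
    Real.log ((primorial n : ℝ) / Nat.totient (primorial n))
      = primeRecipSum n + ∑ q ∈ Nat.primesLE n, logRem ((q : ℝ)⁻¹) := by
  have hN : (primorial n : ℝ) ≠ 0 := by exact_mod_cast primorial_ne_zero n
  have h : (Nat.totient (primorial n) : ℝ)
      = primorial n * ∏ q ∈ Nat.primesLE n, (1 - (q : ℝ)⁻¹) := by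
    have := Nat.totient_eq_mul_prod_factors (primorial n)
    rw [primeFactors_primorial] at this
    simpa using congrArg (Rat.cast (K := ℝ)) this
  have hne : ∀ q ∈ Nat.primesLE n, (1 - (q : ℝ)⁻¹) ≠ 0 := fun q hq => by
    have hq2 : (1 : ℝ) < q := by exact_mod_cast (Nat.prime_of_mem_primesLE hq).one_lt
    exact (sub_pos.mpr (inv_lt_one_of_one_lt₀ hq2)).ne'
  rw [h, div_mul_cancel_left₀ hN, Real.log_inv, Real.log_prod hne, primeRecipSum_eq,
    ← Finset.sum_add_distrib, ← Finset.sum_neg_distrib]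
  exact Finset.sum_congr rfl fun q _ => by rw [logRem]; ring

/-- Mertens' third theorem, as `n# / φ(n#) = ∏_{q ≤ n} (1 - 1/q)⁻¹`. -/
theorem tendsto_primorial_div_totient_div_log :
    Tendsto (fun n : ℕ => (primorial n : ℝ) / Nat.totient (primorial n) / Real.log n) atTop
      (𝓝 (Real.exp Real.eulerMascheroniConstant)) := by
  have h1 := ((tendsto_primeRecipSum_sub_loglog.comp
    (tendsto_natCast_atTop_atTop (R := ℝ))).add tendsto_sum_logRem).rexp
  rw [sub_add_cancel] at h1
  refine h1.congr' ?_
  filter_upwards [eventually_gt_atTop 1] with n hn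
  have hlog : 0 < Real.log n := Real.log_pos (by exact_mod_cast hn)
  have hN : (0 : ℝ) < primorial n := by exact_mod_cast primorial_pos n
  have hphi : (0 : ℝ) < Nat.totient (primorial n) := by
    exact_mod_cast Nat.totient_pos.mpr (primorial_pos n)
  rw [Function.comp_apply, sub_add_eq_add_sub, ← log_primorial_div_totient, Real.exp_sub,
    Real.exp_log (div_pos hN hphi), Real.exp_log hlog]

end Auxiliary

/-! ### The limit along primorials -/

/-- As `p → ∞` along the primes, `π(p#)/φ(p#) = (e^γ · ln p / p)·(1+o(1))`;
equivalently `(π(p#)·p)/(φ(p#)·ln p) → e^γ`. -/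
theorem pi_primorial_div_totient_primorial_tendsto :
    Tendsto
      (fun p : ℕ =>
        ((Nat.primeCounting (primorial p) : ℝ) * (p : ℝ)) /
          ((Nat.totient (primorial p) : ℝ) * Real.log p))
      (atTop ⊓ Filter.principal {p : ℕ | p.Prime})
      (nhds (Real.exp Real.eulerMascheroniConstant)) := by
  refine Tendsto.mono_left ?_ inf_le_left
  have hN : Tendsto (fun n : ℕ => (primorial n : ℝ)) atTop atTop :=
    tendsto_natCast_atTop_atTop.comp
      (tendsto_atTop_mono (fun n => le_primorial_self) tendsto_id)
  have hpnt := tendsto_primeCounting_mul_log_div.comp hN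
  have htheta : Tendsto (fun n : ℕ => (n : ℝ) / Real.log (primorial n)) atTop (nhds 1) := by
    have h := (tendsto_theta_div.comp (tendsto_natCast_atTop_atTop (R := ℝ))).inv₀ one_ne_zero
    rw [inv_one] at h
    refine h.congr fun n => ?_
    rw [Function.comp_apply, inv_div, Chebyshev.theta_eq_log_primorial, Nat.floor_natCast]
  have h := (hpnt.mul tendsto_primorial_div_totient_div_log).mul htheta
  rw [one_mul, mul_one] at h
  refine h.congr' ?_
  filter_upwards [eventually_gt_atTop 2] with n hn
  have hpos : (0 : ℝ) < primorial n := by exact_mod_cast primorial_pos n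
  have hlogN : Real.log (primorial n) ≠ 0 := by
    refine (Real.log_pos ?_).ne'
    exact_mod_cast (show 1 < n by omega).trans_le le_primorial_self
  rw [Function.comp_apply, Nat.floor_natCast]
  field_simp
end

section
/- Let p# denote the primorial of a prime p. Then, as p tends to infinity along the primes, π(p#)/φ(p#) = (e^γ · ln p / ln(p#))·(1 + o(1)); equivalently, (π(p#)·ln(p#))/(φ(p#)·ln p) tends to e^γ as p → ∞ over primes. -/
/-!
With `N = p#` the quotient is `(π(N) log N / N) * ((N / φ(N)) / log p)`, and
`N / φ(N) = ∏_{q ≤ p} (1 - 1/q)⁻¹` over primes `q`. The first factor tends to `1` by the prime number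
theorem, and the second to `e^γ` by Mertens' third theorem. Both are proved here.

*Prime number theorem.* The Laplace transform of `h(u) = ψ(e^u) e^(-u) - 1` is
`(-ζ'/ζ(1 + s) - 1/s - 1) / (1 + s)`, which extends continuously to `0 ≤ s.re` since `ζ` does not
vanish on the line of real part one (`integral_psi_exp`). By the Riemann–Lebesgue lemma the Fejér
means of `h` tend to zero at every scale (`tendsto_fejer_mean`), and monotonicity of `ψ` turns
this into `h → 0` (`tendsto_of_fejer_mean`). The passage to `π` uses Chebyshev-type estimates.

*Mertens.* Comparison with `log N!` gives `∑_{q ≤ x} log q / q = log x + O(1)`, and Abel summation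
`∑_{q ≤ x} 1/q = log log x + c + o(1)`. To find `c`, let `ε → 0⁺` in two expressions for
`∑_q q^(-1-ε)`. As a Laplace transform of `∑_{q ≤ e^u} 1/q` it is `-log ε + c - γ + o(1)`, because
`∫₀^∞ log v e^(-v) dv = Γ'(1) = -γ` (`tendsto_tsum_primes_rpow_add_log`). By the Euler product and
the pole of `ζ` it is `-log ε - T + o(1)`, where `T = ∑_q (-log (1 - 1/q) - 1/q)`. Hence `c + T = γ`
(`const_add_tsum_logRem`), so `∑_{q ≤ x} -log (1 - 1/q) = log log x + γ + o(1)`.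
-/

open Filter Real Nat

namespace PrimorialRatio

open MeasureTheory Set

/-! ### The Fejér kernel -/

/-- The Fejér kernel, the Fourier transform of the triangle function `1 - |t|` on `[-1, 1]`.
Its value at `0` is a junk `0`, which is harmless since it is only ever integrated. -/
noncomputable def fejer (w : ℝ) : ℝ := 2 * (1 - cos w) / w ^ 2

lemma fejer_nonneg (w : ℝ) : 0 ≤ fejer w := by
  unfold fejer
  have := cos_le_one w
  have : 0 ≤ 1 - cos w := by linarith
  positivity

lemma fejer_le (w : ℝ) : fejer w ≤ 5 * (1 + w ^ 2)⁻¹ := by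
  unfold fejer
  rcases eq_or_ne w 0 with rfl | hw
  · simp
  have hw2 : 0 < w ^ 2 := by positivity
  rw [← div_eq_mul_inv, div_le_div_iff₀ hw2 (by positivity)]
  nlinarith [one_sub_sq_div_two_le_cos (x := w), neg_one_le_cos w]

lemma measurable_fejer : Measurable fejer := by
  unfold fejer
  fun_prop

lemma integrable_fejer : Integrable fejer := by
  refine (integrable_inv_one_add_sq.const_mul 5).mono' measurable_fejer.aestronglyMeasurable
    (Eventually.of_forall fun w => ?_)
  rw [norm_of_nonneg (fejer_nonneg w)]
  exact fejer_le w

lemma integral_fejer_pos : 0 < ∫ w, fejer w := by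
  rw [integral_pos_iff_support_of_nonneg fejer_nonneg integrable_fejer]
  refine lt_of_lt_of_le (b := volume (Ioo (0 : ℝ) 1)) (by simp) (measure_mono fun w hw => ?_)
  have h1 : cos w < 1 := by
    rw [← cos_zero]
    exact cos_lt_cos_of_nonneg_of_le_pi le_rfl (by linarith [hw.2, pi_gt_three]) hw.1
  have h2 : 0 < w := hw.1
  have : 0 < 1 - cos w := by linarith
  simp only [Function.mem_support, fejer]
  positivity

lemma integral_triangle_cos {v : ℝ} (hv : v ≠ 0) :
    ∫ t in (0 : ℝ)..1, (1 - t) * cos (t * v) = (1 - cos v) / v ^ 2 := by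
  have hd : ∀ t ∈ uIcc (0 : ℝ) 1,
      HasDerivAt (fun t => (1 - t) * (sin (t * v) / v) - cos (t * v) / v ^ 2)
        ((1 - t) * cos (t * v)) t := by
    intro t _
    have h0 : HasDerivAt (fun t : ℝ => t * v) v t := by simpa using (hasDerivAt_id t).mul_const v
    have h1 := (((hasDerivAt_id t).const_sub 1).mul (h0.sin.div_const v)).sub
      (h0.cos.div_const (v ^ 2))
    refine h1.congr_deriv ?_
    simp only [id]
    field_simp
    ring
  rw [intervalIntegral.integral_eq_sub_of_hasDerivAt hd
    (by apply Continuous.intervalIntegrable; fun_prop)]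
  simp
  ring

/-- The Fourier transform of the triangle function is the Fejér kernel. -/
lemma integral_triangle_exp {v : ℝ} (hv : v ≠ 0) :
    ∫ t in (-1 : ℝ)..1, ((1 - |t| : ℝ) : ℂ) * Complex.exp (t * v * Complex.I) = (fejer v : ℂ) := by
  have hi : ∀ a b : ℝ, IntervalIntegrable
      (fun t : ℝ => ((1 - |t| : ℝ) : ℂ) * Complex.exp (t * v * Complex.I)) volume a b := by
    intro a b; apply Continuous.intervalIntegrable; fun_prop
  have hneg : ∫ t in (-1 : ℝ)..0, ((1 - |t| : ℝ) : ℂ) * Complex.exp (t * v * Complex.I)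
      = ∫ t in (0 : ℝ)..1, ((1 - |t| : ℝ) : ℂ) * Complex.exp (-(t * v) * Complex.I) := by
    have := intervalIntegral.integral_comp_neg (a := (0 : ℝ)) (b := 1)
      (fun t : ℝ => ((1 - |t| : ℝ) : ℂ) * Complex.exp (t * v * Complex.I))
    rw [neg_zero] at this
    rw [← this]
    simp [abs_neg]
  rw [← intervalIntegral.integral_add_adjacent_intervals (hi (-1) 0) (hi 0 1), hneg,
    ← intervalIntegral.integral_add (by apply Continuous.intervalIntegrable; fun_prop) (hi 0 1)]
  have : ∫ t in (0 : ℝ)..1, (((1 - |t| : ℝ) : ℂ) * Complex.exp (-(t * v) * Complex.I)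
      + ((1 - |t| : ℝ) : ℂ) * Complex.exp (t * v * Complex.I))
      = ∫ t in (0 : ℝ)..1, ((2 * ((1 - t) * cos (t * v)) : ℝ) : ℂ) := by
    refine intervalIntegral.integral_congr fun t ht => ?_
    rw [uIcc_of_le zero_le_one] at ht
    simp only [abs_of_nonneg ht.1]
    push_cast
    rw [Complex.cos]
    ring
  rw [this, intervalIntegral.integral_ofReal, intervalIntegral.integral_const_mul,
    integral_triangle_cos hv, fejer]
  congr 1
  ring

/-! ### A Tauberian theorem of Wiener–Ikehara type -/

/-- If the Laplace transform of `h` extends continuously (as `G`) to the imaginary axis, then the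
Fejér means of `h` over `(0, ∞)` tend to zero: this is the Riemann–Lebesgue lemma applied to
the boundary values. -/
lemma tendsto_fejer_mean {h : ℝ → ℝ} {M : ℝ} (hm : Measurable h) (hM : ∀ u, |h u| ≤ M)
    {G : ℂ → ℂ} (hG : ContinuousOn G {s | 0 ≤ s.re})
    (hL : ∀ s : ℂ, 0 < s.re → ∫ u in Ioi (0 : ℝ), (h u : ℂ) * Complex.exp (-s * u) = G s)
    {l : ℝ} (hl : 0 < l) :
    Tendsto (fun y : ℝ => ∫ u in Ioi (0 : ℝ), h u * fejer (l * (y - u))) atTop (nhds 0) := by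
  -- The smoothed identity at distance `e` from the imaginary axis.
  have key : ∀ y e : ℝ, 0 < e →
      ∫ t in (-1 : ℝ)..1, ((1 - |t| : ℝ) : ℂ) * Complex.exp (t * (l * y) * Complex.I)
        * G (e + t * l * Complex.I)
      = ∫ u in Ioi (0 : ℝ), (h u : ℂ) * Complex.exp (-e * u) * (fejer (l * (y - u)) : ℂ) := by
    intro y e he
    have hM0 : 0 ≤ M := (abs_nonneg _).trans (hM 0)
    let f : ℝ → ℝ → ℂ := fun t u => ((1 - |t| : ℝ) : ℂ) * Complex.exp (t * (l * y) * Complex.I)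
        * ((h u : ℂ) * Complex.exp (-(e + t * l * Complex.I) * u))
    have hmc : Measurable fun u => (h u : ℂ) := Complex.measurable_ofReal.comp hm
    have hf : Integrable (Function.uncurry f)
        ((volume.restrict (Ioc (-1 : ℝ) 1)).prod (volume.restrict (Ioi (0 : ℝ)))) := by
      have hb : Integrable (fun z : ℝ × ℝ => (1 : ℝ) * (M * exp (-e * z.2)))
          ((volume.restrict (Ioc (-1 : ℝ) 1)).prod (volume.restrict (Ioi (0 : ℝ)))) :=
        Integrable.mul_prod (f := fun _ : ℝ => (1 : ℝ)) (g := fun u : ℝ => M * exp (-e * u))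
          (integrable_const _) ((exp_neg_integrableOn_Ioi 0 he).const_mul M)
      refine hb.mono' ?_ ?_
      · apply Measurable.aestronglyMeasurable
        have : Measurable fun z : ℝ × ℝ => (h z.2 : ℂ) := hmc.comp measurable_snd
        simp only [f, Function.uncurry_def]
        fun_prop
      · rw [Measure.prod_restrict]
        refine (ae_restrict_mem (measurableSet_Ioc.prod measurableSet_Ioi)).mono ?_
        rintro ⟨t, u⟩ ⟨ht, -⟩
        have ht' : |t| ≤ 1 := abs_le.2 ⟨ht.1.le, ht.2⟩
        simp only [f, Function.uncurry_apply_pair, norm_mul, Complex.norm_real, Complex.norm_exp]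
        simp only [norm_eq_abs]
        have e1 : (t * (l * y) * Complex.I : ℂ).re = 0 := by simp
        have e2 : (-(e + t * l * Complex.I) * u : ℂ).re = -e * u := by simp
        rw [e1, e2, exp_zero, mul_one, abs_of_nonneg (by linarith : 0 ≤ 1 - |t|)]
        gcongr
        · linarith [abs_nonneg t]
        · exact hM u
    have hswap := integral_integral_swap hf
    rw [intervalIntegral.integral_of_le (by norm_num)]
    trans ∫ t in Ioc (-1 : ℝ) 1, ∫ u in Ioi (0 : ℝ), f t u
    · refine integral_congr_ae (Eventually.of_forall fun t => ?_)
      simp only [f]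
      rw [integral_const_mul, hL _ (by simpa using he)]
    · rw [hswap]
      refine integral_congr_ae ?_
      have hne : ∀ᵐ u : ℝ ∂(volume.restrict (Ioi (0 : ℝ))), u ≠ y :=
        ae_restrict_of_ae (Measure.ae_ne volume y)
      filter_upwards [hne] with u hu
      have hv : l * (y - u) ≠ 0 := mul_ne_zero hl.ne' (sub_ne_zero.2 hu.symm)
      rw [← integral_triangle_exp hv, intervalIntegral.integral_of_le (by norm_num),
        ← integral_const_mul]
      refine integral_congr_ae (Eventually.of_forall fun t => ?_)
      simp only [f]
      have : Complex.exp (-(e + t * l * Complex.I) * u)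
          = Complex.exp (-e * u) * Complex.exp (-(t * l * Complex.I) * u) := by
        rw [← Complex.exp_add]; ring_nf
      rw [this]
      have : Complex.exp (t * (l * (y - u) : ℝ) * Complex.I)
          = Complex.exp (t * (l * y) * Complex.I) * Complex.exp (-(t * l * Complex.I) * u) := by
        rw [← Complex.exp_add]; push_cast; ring_nf
      rw [this]
      ring
  have lim1 : ∀ y : ℝ, Tendsto (fun e : ℝ =>
      ∫ t in (-1 : ℝ)..1, ((1 - |t| : ℝ) : ℂ) * Complex.exp (t * (l * y) * Complex.I)
        * G (e + t * l * Complex.I)) (nhdsWithin 0 (Ioi 0))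
      (nhds (∫ t in (-1 : ℝ)..1, ((1 - |t| : ℝ) : ℂ) * Complex.exp (t * (l * y) * Complex.I)
        * G (t * l * Complex.I))) := by
    intro y
    obtain ⟨C, hC⟩ : ∃ C, ∀ z ∈ Icc (0 : ℝ) 1 ×ˢ Icc (-1 : ℝ) 1,
        ‖G (z.1 + z.2 * l * Complex.I)‖ ≤ C := by
      refine (isCompact_Icc.prod isCompact_Icc).exists_bound_of_continuousOn
        (f := fun z : ℝ × ℝ => G (z.1 + z.2 * l * Complex.I)) ?_
      refine hG.comp (by fun_prop) fun z hz => ?_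
      simpa using hz.1.1
    have hGe : ∀ e : ℝ, 0 ≤ e → Continuous fun t : ℝ => G (e + t * l * Complex.I) := by
      intro e he
      rw [← continuousOn_univ]
      refine hG.comp (by fun_prop) fun t _ => ?_
      simpa using he
    refine intervalIntegral.tendsto_integral_filter_of_dominated_convergence (fun _ => C) ?_ ?_
      (by simp) ?_
    · filter_upwards [self_mem_nhdsWithin] with e he
      refine Continuous.aestronglyMeasurable ?_
      exact Continuous.mul (by fun_prop) (hGe e (le_of_lt he))
    · filter_upwards [Ioc_mem_nhdsGT (zero_lt_one' ℝ)] with e he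
      refine Eventually.of_forall fun t ht => ?_
      rw [uIoc_of_le (by norm_num)] at ht
      have ht' : |t| ≤ 1 := abs_le.2 ⟨ht.1.le, ht.2⟩
      have e1 : (t * (l * y) * Complex.I : ℂ).re = 0 := by simp
      rw [norm_mul, norm_mul, Complex.norm_exp, e1, exp_zero, mul_one, Complex.norm_real,
        norm_of_nonneg (by linarith : 0 ≤ 1 - |t|)]
      have h1 := hC (e, t) ⟨⟨he.1.le, he.2⟩, ht.1.le, ht.2⟩
      have h2 : 1 - |t| ≤ 1 := by linarith [abs_nonneg t]
      nlinarith [norm_nonneg (G (e + t * l * Complex.I))]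
    · refine Eventually.of_forall fun t _ => Tendsto.const_mul _ ?_
      have hcw : ContinuousWithinAt G {s | 0 ≤ s.re} (t * l * Complex.I) :=
        hG _ (by simp)
      refine hcw.tendsto.comp (tendsto_nhdsWithin_iff.2 ⟨?_, ?_⟩)
      · refine Tendsto.mono_left ?_ nhdsWithin_le_nhds
        have : Continuous fun e : ℝ => (e + t * l * Complex.I : ℂ) := by fun_prop
        simpa using this.tendsto 0
      · filter_upwards [self_mem_nhdsWithin] with e he
        simpa using le_of_lt he
  have lim2 : ∀ y : ℝ, Tendsto (fun e : ℝ =>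
      ∫ u in Ioi (0 : ℝ), (h u : ℂ) * Complex.exp (-e * u) * (fejer (l * (y - u)) : ℂ))
      (nhdsWithin 0 (Ioi 0))
      (nhds (∫ u in Ioi (0 : ℝ), (h u : ℂ) * (fejer (l * (y - u)) : ℂ))) := by
    intro y
    have hM0 : 0 ≤ M := (abs_nonneg _).trans (hM 0)
    have hint : Integrable (fun u => fejer (l * (y - u))) :=
      (integrable_fejer.comp_mul_left' hl.ne').comp_sub_left y
    refine tendsto_integral_filter_of_dominated_convergence
      (fun u => M * fejer (l * (y - u))) ?_ ?_ (hint.const_mul M).restrict ?_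
    · refine Eventually.of_forall fun e => Measurable.aestronglyMeasurable ?_
      have hmc : Measurable fun u => (h u : ℂ) := Complex.measurable_ofReal.comp hm
      have := measurable_fejer
      have : Measurable fun u => (fejer (l * (y - u)) : ℂ) :=
        Complex.measurable_ofReal.comp (measurable_fejer.comp (by fun_prop))
      fun_prop
    · filter_upwards [self_mem_nhdsWithin] with e he
      filter_upwards [ae_restrict_mem measurableSet_Ioi] with u hu
      have e2 : (-e * u : ℂ).re = -(e * u) := by simp
      rw [norm_mul, norm_mul, Complex.norm_exp, e2, Complex.norm_real, Complex.norm_real,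
        norm_of_nonneg (fejer_nonneg _), norm_eq_abs]
      have h1 : exp (-(e * u)) ≤ 1 :=
        exp_le_one_iff.2 (neg_nonpos.2 (mul_nonneg (le_of_lt he) (le_of_lt hu)))
      gcongr
      · exact fejer_nonneg _
      · calc |h u| * exp (-(e * u)) ≤ M * 1 := by gcongr; exact hM u
          _ = M := mul_one M
    · refine Eventually.of_forall fun u => Tendsto.mul_const _ ?_
      refine Tendsto.mono_left ?_ nhdsWithin_le_nhds
      have : Continuous fun e : ℝ => (h u : ℂ) * Complex.exp (-e * u) := by fun_prop
      simpa using this.tendsto 0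
  have eq : ∀ y : ℝ, ((∫ u in Ioi (0 : ℝ), h u * fejer (l * (y - u)) : ℝ) : ℂ)
      = ∫ t in (-1 : ℝ)..1, ((1 - |t| : ℝ) : ℂ) * Complex.exp (t * (l * y) * Complex.I)
        * G (t * l * Complex.I) := by
    intro y
    have h1 := tendsto_nhds_unique (lim2 y) ((lim1 y).congr' (by
      filter_upwards [self_mem_nhdsWithin] with e he using key y e he))
    rw [← h1, ← integral_complex_ofReal]
    simp
  have RL := Real.tendsto_integral_exp_smul_cocompact (indicator (Ioc (-1 : ℝ) 1)
    fun t : ℝ => ((1 - |t| : ℝ) : ℂ) * G (t * l * Complex.I))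
  have hw : Tendsto (fun y : ℝ => -(l / (2 * π)) * y) atTop (cocompact ℝ) := by
    refine Tendsto.mono_right (Tendsto.const_mul_atTop_of_neg ?_ tendsto_id) atBot_le_cocompact
    have : 0 < l / (2 * π) := by positivity
    linarith
  have h3 := RL.comp hw
  have h4 : Tendsto (fun y : ℝ =>
      ((∫ u in Ioi (0 : ℝ), h u * fejer (l * (y - u)) : ℝ) : ℂ)) atTop (nhds 0) := by
    refine h3.congr fun y => ?_
    rw [eq, intervalIntegral.integral_of_le (by norm_num), ← integral_indicator measurableSet_Ioc]
    refine integral_congr_ae (Eventually.of_forall fun t => ?_)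
    simp only [indicator, Circle.smul_def, Real.fourierChar_apply, smul_eq_mul]
    split_ifs with ht
    · have : (2 * π * -(t * (-(l / (2 * π)) * y)) : ℝ) = t * (l * y) := by
        field_simp
      rw [this]
      push_cast
      ring
    · simp
  have h5 := (Complex.continuous_re.tendsto 0).comp h4
  simpa only [Function.comp_def, Complex.ofReal_re, Complex.zero_re] using h5

/-- The mass of the Fejér kernel outside `[-R, R]` tends to zero. -/
lemma tendsto_fejer_tail :
    Tendsto (fun R : ℝ => ∫ w, indicator {w : ℝ | R < |w|} fejer w) atTop (nhds 0) := by
  have h0 : (0 : ℝ) = ∫ w : ℝ, (0 : ℝ) := by simp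
  rw [h0]
  refine tendsto_integral_filter_of_dominated_convergence fejer ?_ ?_ integrable_fejer ?_
  · exact Eventually.of_forall fun R => (measurable_fejer.indicator
      (measurableSet_lt measurable_const measurable_norm)).aestronglyMeasurable
  · refine Eventually.of_forall fun R => Eventually.of_forall fun w => ?_
    refine (norm_indicator_le_norm_self _ _).trans ?_
    rw [norm_of_nonneg (fejer_nonneg w)]
  · refine Eventually.of_forall fun w => tendsto_const_nhds.congr' ?_
    filter_upwards [eventually_ge_atTop |w|] with R hR
    rw [indicator_of_notMem]
    simpa using hR

/-- A bounded function that is at least `η` on an interval of radius `δ` has a Fejér mean bounded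
away from zero at the centre, once the kernel is concentrated enough in terms of `η` and `δ`. -/
lemma exists_le_fejer_mean {h : ℝ → ℝ} {M : ℝ} (hm : Measurable h) (hM : ∀ u, |h u| ≤ M)
    {η δ : ℝ} (hη : 0 < η) (hδ : 0 < δ) :
    ∃ l : ℝ, 0 < l ∧ ∃ κ : ℝ, 0 < κ ∧ ∀ c : ℝ, (∀ u, |c - u| ≤ δ → η ≤ h u) →
      κ ≤ ∫ u, h u * fejer (l * (c - u)) := by
  have hM0 : 0 ≤ M := (abs_nonneg _).trans (hM 0)
  have hI := integral_fejer_pos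
  set I := ∫ w, fejer w with hIdef
  have hT : 0 < η * I / (2 * (M + η)) := by positivity
  obtain ⟨R, hR, hR0⟩ :=
    ((tendsto_fejer_tail.eventually_lt_const hT).and (eventually_gt_atTop 0)).exists
  set T := ∫ w, indicator {w : ℝ | R < |w|} fejer w with hTdef
  have hTint : Integrable (indicator {w : ℝ | R < |w|} fejer) :=
    integrable_fejer.indicator (measurableSet_lt measurable_const measurable_norm)
  refine ⟨R / δ, by positivity, (R / δ)⁻¹ * (η * I / 2), by positivity, fun c hc => ?_⟩
  have hl : 0 < R / δ := by positivity
  set l := R / δ with hldef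
  have scale : ∀ f : ℝ → ℝ, ∫ u, f (l * (c - u)) = l⁻¹ * ∫ w, f w := by
    intro f
    rw [integral_sub_left_eq_self (fun u => f (l * u)) volume c, Measure.integral_comp_mul_left,
      smul_eq_mul, abs_of_pos (by positivity)]
  have hint : ∀ f : ℝ → ℝ, Integrable f → Integrable (fun u => f (l * (c - u))) := by
    intro f hf
    exact (hf.comp_mul_left' hl.ne').comp_sub_left c
  calc l⁻¹ * (η * I / 2) ≤ l⁻¹ * (η * I - (M + η) * T) := by
        rw [lt_div_iff₀ (by positivity)] at hR
        gcongr
        linarith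
    _ = ∫ u, (η * fejer (l * (c - u))
          - (M + η) * indicator {w : ℝ | R < |w|} fejer (l * (c - u))) := by
        rw [integral_sub ((hint _ integrable_fejer).const_mul η)
          ((hint _ hTint).const_mul (M + η)), integral_const_mul, integral_const_mul,
          scale, scale]
        ring
    _ ≤ ∫ u, h u * fejer (l * (c - u)) := by
        refine integral_mono (((hint _ integrable_fejer).const_mul η).sub
          ((hint _ hTint).const_mul (M + η))) ?_ fun u => ?_
        · refine (hint _ integrable_fejer).bdd_mul (c := M) hm.aestronglyMeasurable ?_
          exact Eventually.of_forall hM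
        · have hK := fejer_nonneg (l * (c - u))
          simp only [indicator, Set.mem_ofPred_eq]
          split_ifs with hu
          · have := (abs_le.1 (hM u)).1
            nlinarith
          · have : |c - u| ≤ δ := by
              rw [not_lt, abs_mul, abs_of_pos hl, hldef, div_mul_eq_mul_div,
                div_le_iff₀ hδ] at hu
              exact le_of_mul_le_mul_left hu hR0
            have := hc u this
            nlinarith

/-- Wiener–Ikehara in exponential form: a nonnegative monotone `A` satisfies `A u ~ e ^ u` as soon
as `A u * e ^ (-u) - 1` is bounded and has Fejér means tending to zero at every scale. If `A u`
exceeds `(1 + ε) e ^ u` at `u = y`, monotonicity keeps the excess above `ε / 2` on a whole interval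
to the right of `y`, which the Fejér mean centred there detects; deficits persist to the left. -/
lemma tendsto_of_fejer_mean {A h : ℝ → ℝ} {M : ℝ} (hA : Monotone A) (hA0 : ∀ u, 0 ≤ A u)
    (hm : Measurable h) (hM : ∀ u, |h u| ≤ M)
    (hh : ∀ u, 0 < u → h u = A u * exp (-u) - 1)
    (hF : ∀ l : ℝ, 0 < l →
      Tendsto (fun y : ℝ => ∫ u in Ioi (0 : ℝ), h u * fejer (l * (y - u))) atTop (nhds 0)) :
    Tendsto (fun u => A u * exp (-u)) atTop (nhds 1) := by
  let g : ℝ → ℝ := indicator (Ioi 0) h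
  have hgm : Measurable g := hm.indicator measurableSet_Ioi
  have hM0 : 0 ≤ M := (abs_nonneg _).trans (hM 0)
  have hgM : ∀ u, |g u| ≤ M := by
    intro u
    simp only [g, indicator]
    split_ifs
    · exact hM u
    · simpa using hM0
  have hg : ∀ u, 0 < u → g u = A u * exp (-u) - 1 := by
    intro u hu
    rw [← hh u hu]
    exact indicator_of_mem hu h
  have hgF : ∀ l : ℝ, 0 < l →
      Tendsto (fun y : ℝ => ∫ u, g u * fejer (l * (y - u))) atTop (nhds 0) := by
    intro l hl
    refine (hF l hl).congr fun y => ?_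
    rw [← integral_indicator measurableSet_Ioi]
    refine integral_congr_ae (Eventually.of_forall fun u => ?_)
    simp only [g, indicator]
    split_ifs <;> simp
  rw [Metric.tendsto_nhds]
  intro ε hε
  -- `δ` is chosen so that `exp (±2δ)` moves the bounds `1 ± ε` by at most `ε / 2`.
  obtain ⟨δ, hδ, h1, h2⟩ : ∃ δ : ℝ, 0 < δ ∧ 1 + ε / 2 ≤ (1 + ε) * exp (-(2 * δ)) ∧
      (1 - ε) * exp (2 * δ) ≤ 1 - ε / 2 := by
    have c1 : Tendsto (fun δ : ℝ => (1 + ε) * exp (-(2 * δ))) (nhdsWithin 0 (Ioi 0))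
        (nhds (1 + ε)) := by
      have : Continuous fun δ : ℝ => (1 + ε) * exp (-(2 * δ)) := by fun_prop
      simpa using (this.tendsto 0).mono_left nhdsWithin_le_nhds
    have c2 : Tendsto (fun δ : ℝ => (1 - ε) * exp (2 * δ)) (nhdsWithin 0 (Ioi 0))
        (nhds (1 - ε)) := by
      have : Continuous fun δ : ℝ => (1 - ε) * exp (2 * δ) := by fun_prop
      simpa using (this.tendsto 0).mono_left nhdsWithin_le_nhds
    obtain ⟨δ, h, h', h''⟩ := ((c1.eventually_const_lt (by linarith : 1 + ε / 2 < 1 + ε)).and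
      ((c2.eventually_lt_const (by linarith : 1 - ε < 1 - ε / 2)).and
      self_mem_nhdsWithin)).exists
    exact ⟨δ, h'', h.le, h'.le⟩
  obtain ⟨l, hl, κ, hκ, hup⟩ := exists_le_fejer_mean hgm hgM (half_pos hε) hδ
  obtain ⟨l', hl', κ', hκ', hlow⟩ := exists_le_fejer_mean (h := fun u => -g u) hgm.neg
    (by simpa using hgM) (half_pos hε) hδ
  have e1 := ((hgF l hl).comp (tendsto_atTop_add_const_right _ δ tendsto_id)).eventually_lt_const hκ
  have e2 := ((hgF l' hl').comp (tendsto_atTop_add_const_right _ (-δ) tendsto_id)).eventually_const_lt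
    (neg_lt_zero.2 hκ')
  filter_upwards [e1, e2, eventually_gt_atTop (2 * δ)] with y hy1 hy2 hy
  simp only [Function.comp, id] at hy1 hy2
  rw [Real.dist_eq, abs_lt]
  constructor
  · by_contra hcon
    have hcon : A y * exp (-y) ≤ 1 - ε := by linarith [not_lt.1 hcon]
    refine absurd (hlow (y + -δ) fun u hu => ?_) (not_le.2 ?_)
    · have hu' := abs_le.1 hu
      have hu0 : 0 < u := by linarith
      rw [hg u hu0]
      have : A u * exp (-u) ≤ (1 - ε) * exp (2 * δ) := by
        calc A u * exp (-u) ≤ A y * (exp (-y) * exp (2 * δ)) := by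
              rw [← exp_add]
              have h1 : A u ≤ A y := hA (by linarith)
              gcongr
              · exact hA0 y
              · linarith
          _ = A y * exp (-y) * exp (2 * δ) := by ring
          _ ≤ _ := by gcongr
      linarith
    · simp only [neg_mul, integral_neg]
      linarith
  · by_contra hcon
    have hcon : 1 + ε ≤ A y * exp (-y) := by linarith [not_lt.1 hcon]
    refine absurd (hup (y + δ) fun u hu => ?_) (not_le.2 hy1)
    have hu' := abs_le.1 hu
    have hu0 : 0 < u := by linarith
    rw [hg u hu0]
    have : (1 + ε) * exp (-(2 * δ)) ≤ A u * exp (-u) := by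
      calc (1 + ε) * exp (-(2 * δ)) ≤ A y * exp (-y) * exp (-(2 * δ)) := by gcongr
        _ = A y * exp (-y + -(2 * δ)) := by rw [exp_add]; ring
        _ ≤ A u * exp (-u) := by
            have h1 : A y ≤ A u := hA (by linarith)
            gcongr
            · exact hA0 u
            · linarith
    linarith

/-! ### The prime number theorem -/

open ArithmeticFunction.vonMangoldt in
/-- The Laplace transform of `ψ(e ^ u) e ^ (-u) - 1`. The function `LFunctionResidueClassAux`
modulo `1` is `-ζ'/ζ(s) - 1 / (s - 1)`, continued to `1 ≤ s.re`, where it is continuous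
because `ζ` has no zero on that closed half-plane. -/
lemma integral_psi_exp {s : ℂ} (hs : 0 < s.re) :
    ∫ u in Ioi (0 : ℝ), ((Chebyshev.psi (exp u) * exp (-u) - 1 : ℝ) : ℂ) * Complex.exp (-s * u)
      = (LFunctionResidueClassAux (1 : ZMod 1) (1 + s) - 1) / (1 + s) := by
  -- modulo `1` there is a single residue class
  have hres : (fun n => ((residueClass (1 : ZMod 1) n : ℝ) : ℂ))
      = fun n => ((ArithmeticFunction.vonMangoldt n : ℝ) : ℂ) := by
    funext n
    rw [residueClass, indicator_of_mem]
    exact Subsingleton.elim _ _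
  have hs0 : s ≠ 0 := by rintro rfl; simp at hs
  have h1s : 1 + s ≠ 0 := by
    intro h
    have := congrArg Complex.re h
    simp at this
    linarith
  have hre : 1 < (1 + s).re := by simpa using hs
  have hF := eqOn_LFunctionResidueClassAux (q := 1) (a := 1) isUnit_one hre
  rw [hF]
  simp only [hres]
  have hpsi : ∀ t : ℝ, ∑ k ∈ Finset.Icc 1 ⌊t⌋₊, ArithmeticFunction.vonMangoldt k
      = Chebyshev.psi t := fun t => rfl
  have hO : (fun n : ℕ => ∑ k ∈ Finset.Icc 1 n, ArithmeticFunction.vonMangoldt k)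
      =O[atTop] fun n => (n : ℝ) ^ (1 : ℝ) := by
    refine Asymptotics.IsBigO.of_bound (Real.log 4 + 4) (Eventually.of_forall fun n => ?_)
    have := Chebyshev.psi_le_const_mul_self (x := n) (by positivity)
    rw [← hpsi, Nat.floor_natCast] at this
    rw [norm_of_nonneg (Finset.sum_nonneg fun _ _ => ArithmeticFunction.vonMangoldt_nonneg)]
    simpa using this
  rw [LSeries_eq_mul_integral_of_nonneg _ zero_le_one hre hO
    fun n => ArithmeticFunction.vonMangoldt_nonneg]
  have himg : Ioi (1 : ℝ) = exp '' Ioi 0 := by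
    ext t
    constructor
    · intro ht
      exact ⟨log t, log_pos ht, exp_log (zero_lt_one.trans ht)⟩
    · rintro ⟨u, hu, rfl⟩
      exact one_lt_exp_iff.2 hu
  have hsub : ∫ t in Ioi (1 : ℝ), (∑ k ∈ Finset.Icc 1 ⌊t⌋₊,
        ((ArithmeticFunction.vonMangoldt k : ℝ) : ℂ)) * (t : ℂ) ^ (-(1 + s + 1))
      = ∫ u in Ioi (0 : ℝ), ((Chebyshev.psi (exp u) * exp (-u) : ℝ) : ℂ)
          * Complex.exp (-s * u) := by
    rw [himg, integral_image_eq_integral_abs_deriv_smul measurableSet_Ioi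
      (fun u _ => (Real.hasDerivAt_exp u).hasDerivWithinAt) exp_injective.injOn]
    refine integral_congr_ae (Eventually.of_forall fun u => ?_)
    simp only
    rw [← Complex.ofReal_sum, hpsi, abs_of_pos (exp_pos u), Complex.real_smul,
      Complex.cpow_def_of_ne_zero (by exact_mod_cast (exp_pos u).ne'), ← Complex.ofReal_log
        (exp_pos u).le, log_exp]
    push_cast
    have : Complex.exp (u * -(1 + s + 1)) = Complex.exp (-u) * Complex.exp (-u)
        * Complex.exp (-s * u) := by
      rw [← Complex.exp_add, ← Complex.exp_add]; ring_nf
    rw [this]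
    have h2 : Complex.exp u * Complex.exp (-u) = 1 := by rw [← Complex.exp_add]; simp
    linear_combination ((Chebyshev.psi (exp u) : ℂ) * Complex.exp (-u) * Complex.exp (-s * u)) * h2
  have hint : IntegrableOn (fun u : ℝ => Complex.exp (-s * u)) (Ioi 0) :=
    integrableOn_exp_mul_complex_Ioi (by simpa using hs) 0
  have hint1 : IntegrableOn (fun u : ℝ => ((Chebyshev.psi (exp u) * exp (-u) : ℝ) : ℂ)
      * Complex.exp (-s * u)) (Ioi 0) := by
    refine Integrable.bdd_mul (c := Real.log 4 + 4) hint ?_ (Eventually.of_forall fun u => ?_)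
    · refine (Complex.measurable_ofReal.comp ?_).aestronglyMeasurable
      exact (Chebyshev.psi_mono.measurable.comp measurable_exp).mul (by fun_prop)
    · rw [Complex.norm_real, norm_of_nonneg (mul_nonneg (Chebyshev.psi_nonneg _) (exp_pos _).le)]
      calc _ ≤ (Real.log 4 + 4) * exp u * exp (-u) := by
            gcongr
            exact Chebyshev.psi_le_const_mul_self (exp_pos u).le
        _ = _ := by rw [mul_assoc, ← exp_add]; simp
  rw [hsub]
  simp only [Complex.ofReal_sub, Complex.ofReal_one, sub_mul, one_mul]
  rw [integral_sub hint1 hint, integral_exp_mul_complex_Ioi (by simpa using hs)]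
  simp only [Nat.totient_one, Nat.cast_one, inv_one, add_sub_cancel_left, Complex.ofReal_zero,
    mul_zero, Complex.exp_zero]
  field_simp
  ring

/-- The prime number theorem for Chebyshev's `ψ`. -/
theorem tendsto_psi_div : Tendsto (fun x => Chebyshev.psi x / x) atTop (nhds 1) := by
  have hb : ∀ u, Chebyshev.psi (exp u) * exp (-u) ≤ Real.log 4 + 4 := by
    intro u
    calc _ ≤ (Real.log 4 + 4) * exp u * exp (-u) := by
            gcongr
            exact Chebyshev.psi_le_const_mul_self (exp_pos u).le
        _ = _ := by rw [mul_assoc, ← exp_add]; simp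
  have hm : Measurable fun u => Chebyshev.psi (exp u) * exp (-u) - 1 :=
    ((Chebyshev.psi_mono.measurable.comp measurable_exp).mul (by fun_prop)).sub_const 1
  have hM : ∀ u, |Chebyshev.psi (exp u) * exp (-u) - 1| ≤ Real.log 4 + 4 := by
    intro u
    have h0 : 0 ≤ Chebyshev.psi (exp u) * exp (-u) :=
      mul_nonneg (Chebyshev.psi_nonneg _) (exp_pos _).le
    have h4 : 0 < Real.log 4 := log_pos (by norm_num)
    rw [abs_le]
    constructor <;> linarith [hb u]
  have hG : ContinuousOn (fun s : ℂ =>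
      (ArithmeticFunction.vonMangoldt.LFunctionResidueClassAux (1 : ZMod 1) (1 + s) - 1) / (1 + s))
      {s | 0 ≤ s.re} := by
    refine ContinuousOn.div ?_ (by fun_prop) ?_
    · refine ContinuousOn.sub ?_ continuousOn_const
      refine (ArithmeticFunction.vonMangoldt.continuousOn_LFunctionResidueClassAux (1 : ZMod 1)).comp
        (by fun_prop) fun s hs => ?_
      simpa using hs
    · intro s hs h
      have h1 := congrArg Complex.re h
      have h2 : 0 ≤ s.re := hs
      simp at h1
      linarith
  have key := tendsto_of_fejer_mean (A := fun u => Chebyshev.psi (exp u))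
    (fun a b hab => Chebyshev.psi_mono (exp_le_exp.2 hab)) (fun u => Chebyshev.psi_nonneg _) hm hM
    (fun u _ => rfl) fun l hl => tendsto_fejer_mean hm hM hG (fun s hs => integral_psi_exp hs) hl
  refine (key.comp tendsto_log_atTop).congr' ?_
  filter_upwards [eventually_gt_atTop 0] with x hx
  simp only [Function.comp]
  rw [exp_log hx, exp_neg, exp_log hx, div_eq_mul_inv]

theorem tendsto_theta_div : Tendsto (fun x => Chebyshev.theta x / x) atTop (nhds 1) := by
  have h : Tendsto (fun x => (Chebyshev.psi x - Chebyshev.theta x) / x) atTop (nhds 0) := by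
    refine Asymptotics.IsLittleO.tendsto_div_nhds_zero
      (Chebyshev.isBigO_psi_sub_theta_sqrt.trans_isLittleO ?_)
    refine (Asymptotics.isLittleO_iff_tendsto' (by
      filter_upwards [eventually_gt_atTop 0] with x hx h; linarith)).2 ?_
    refine (tendsto_sqrt_atTop.inv_tendsto_atTop).congr' ?_
    filter_upwards [eventually_gt_atTop 0] with x hx
    rw [Pi.inv_apply, sqrt_div_self]
  have := tendsto_psi_div.sub h
  rw [sub_zero] at this
  refine this.congr fun x => ?_
  ring

/-- The prime number theorem. -/
theorem tendsto_primeCounting_mul_log_div :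
    Tendsto (fun n : ℕ => (Nat.primeCounting n : ℝ) * Real.log n / n) atTop (nhds 1) := by
  have hO := Chebyshev.primeCounting_sub_theta_div_log_isBigO
  have h1 : Tendsto (fun x : ℝ => ((Nat.primeCounting ⌊x⌋₊ : ℝ) - Chebyshev.theta x / Real.log x)
      / (x / Real.log x)) atTop (nhds 0) := by
    refine Asymptotics.IsLittleO.tendsto_div_nhds_zero (hO.trans_isLittleO ?_)
    rw [Asymptotics.isLittleO_iff_tendsto']
    · refine Tendsto.congr' ?_ tendsto_log_atTop.inv_tendsto_atTop
      filter_upwards [eventually_gt_atTop 1] with x hx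
      have : 0 < Real.log x := log_pos hx
      simp only [Pi.inv_apply]
      field_simp
    · filter_upwards [eventually_gt_atTop 1] with x hx h
      have : 0 < Real.log x := log_pos hx
      have : 0 < x / Real.log x := by positivity
      linarith
  have h2 := h1.add tendsto_theta_div
  rw [zero_add] at h2
  refine (h2.comp tendsto_natCast_atTop_atTop).congr' ?_
  filter_upwards [eventually_gt_atTop 1] with n hn
  have : 0 < Real.log n := log_pos (by exact_mod_cast hn)
  have : (0 : ℝ) < n := by positivity
  simp only [Function.comp, Nat.floor_natCast]
  field_simp
  ring

/-! ### Mertens' theorems -/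

/-- Mertens' first theorem for the von Mangoldt function. It compares `N * ∑ Λ(n) / n` with
`log N! = ∑ Λ(n) ⌊N / n⌋`; the difference is at most `ψ(N) = O(N)`. -/
lemma exists_abs_sum_vonMangoldt_div_sub_log_le :
    ∃ M : ℝ, ∀ N : ℕ, N ≠ 0 →
      |∑ n ∈ Finset.Ioc 0 N, ArithmeticFunction.vonMangoldt n / n - Real.log N| ≤ M := by
  refine ⟨Real.log 4 + 4, fun N hN => ?_⟩
  have hN0 : (0 : ℝ) < N := by positivity
  have hfac : Real.log N ! = ∑ n ∈ Finset.Ioc 0 N, ArithmeticFunction.vonMangoldt n * (N / n : ℕ) := by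
    rw [← ArithmeticFunction.sum_Ioc_mul_zeta_eq_sum, ArithmeticFunction.vonMangoldt_mul_zeta]
    clear hN hN0
    induction N with
    | zero => simp
    | succ k ih =>
      rw [Finset.sum_Ioc_succ_top (by omega), ← ih, Nat.factorial_succ, Nat.cast_mul,
        Real.log_mul (by positivity) (by positivity), ArithmeticFunction.log_apply, add_comm]
  have hup : Real.log N ! ≤ N * Real.log N := by
    rw [← Real.log_pow]
    exact Real.log_le_log (by positivity) (by exact_mod_cast Nat.factorial_le_pow N)
  have hlow : N * Real.log N - N ≤ Real.log N ! := by
    have h1 := Stirling.le_log_factorial_stirling hN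
    have h2 : 0 ≤ Real.log N := Real.log_natCast_nonneg N
    have h3 : 0 ≤ Real.log (2 * π) := Real.log_nonneg (by linarith [Real.pi_gt_three])
    linarith
  have hpsi : ∑ n ∈ Finset.Ioc 0 N, ArithmeticFunction.vonMangoldt n ≤ (Real.log 4 + 4) * N := by
    have := Chebyshev.psi_le_const_mul_self (x := N) (by positivity)
    rwa [Chebyshev.psi, Nat.floor_natCast] at this
  have hA : N * ∑ n ∈ Finset.Ioc 0 N, ArithmeticFunction.vonMangoldt n / n
      = ∑ n ∈ Finset.Ioc 0 N, ArithmeticFunction.vonMangoldt n * ((N : ℝ) / n) := by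
    rw [Finset.mul_sum]
    exact Finset.sum_congr rfl fun n _ => by ring
  have h1 : Real.log N ! ≤ N * ∑ n ∈ Finset.Ioc 0 N, ArithmeticFunction.vonMangoldt n / n := by
    rw [hA, hfac]
    exact Finset.sum_le_sum fun n _ => mul_le_mul_of_nonneg_left Nat.cast_div_le
      ArithmeticFunction.vonMangoldt_nonneg
  have h2 : N * ∑ n ∈ Finset.Ioc 0 N, ArithmeticFunction.vonMangoldt n / n
      ≤ Real.log N ! + ∑ n ∈ Finset.Ioc 0 N, ArithmeticFunction.vonMangoldt n := by
    rw [hA, hfac, ← Finset.sum_add_distrib]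
    refine Finset.sum_le_sum fun n hn => ?_
    have hn0 : (0 : ℝ) < n := by exact_mod_cast (Finset.mem_Ioc.1 hn).1
    have h3 : (N : ℝ) / n ≤ (N / n : ℕ) + 1 := by
      rw [div_le_iff₀ hn0]
      exact_mod_cast (by
        have := Nat.lt_div_mul_add (a := N) (Finset.mem_Ioc.1 hn).1
        linarith : N ≤ (N / n + 1) * n)
    nlinarith [ArithmeticFunction.vonMangoldt_nonneg (n := n)]
  have h4 : 0 < Real.log 4 := Real.log_pos (by norm_num)
  rw [abs_le]
  constructor
  · refine le_of_mul_le_mul_left ?_ hN0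
    nlinarith
  · refine le_of_mul_le_mul_left ?_ hN0
    nlinarith

open ArithmeticFunction.vonMangoldt in
/-- Mertens' first theorem, `∑_{q ≤ x} log q / q = log x + O(1)`. The proper prime powers
contribute a convergent series. -/
theorem exists_abs_sum_log_div_sub_log_le :
    ∃ M : ℝ, ∀ x : ℝ, 1 ≤ x →
      |∑ n ∈ Finset.Icc 0 ⌊x⌋₊, (if n.Prime then Real.log n / n else 0) - Real.log x| ≤ M := by
  obtain ⟨M, hM⟩ := exists_abs_sum_vonMangoldt_div_sub_log_le
  have hres : ∀ n, residueClass (1 : ZMod 1) n = ArithmeticFunction.vonMangoldt n := by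
    intro n
    rw [residueClass, indicator_of_mem]
    exact Subsingleton.elim _ _
  have hs := summable_residueClass_non_primes_div (1 : ZMod 1)
  simp only [hres] at hs
  set T := ∑' n : ℕ, (if n.Prime then 0 else ArithmeticFunction.vonMangoldt n) / (n : ℝ) with hT
  have hpos : ∀ n : ℕ, 0 ≤ (if n.Prime then 0 else ArithmeticFunction.vonMangoldt n) / (n : ℝ) := by
    intro n
    have := ArithmeticFunction.vonMangoldt_nonneg (n := n)
    split_ifs <;> positivity
  refine ⟨M + T + Real.log 2, fun x hx => ?_⟩
  set N := ⌊x⌋₊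
  have hN1 : 1 ≤ N := Nat.le_floor (by simpa using hx)
  have hNx : (N : ℝ) ≤ x := Nat.floor_le (by linarith)
  have hxN : x < N + 1 := Nat.lt_floor_add_one x
  have hN1' : (1 : ℝ) ≤ N := by exact_mod_cast hN1
  have hl1 : Real.log N ≤ Real.log x := Real.log_le_log (by linarith) hNx
  have hl2 : Real.log x ≤ Real.log N + Real.log 2 := by
    rw [← Real.log_mul (by positivity) (by norm_num)]
    exact Real.log_le_log (by linarith) (by linarith)
  have hsplit : ∑ n ∈ Finset.Icc 0 N, (if n.Prime then Real.log n / n else 0)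
      = ∑ n ∈ Finset.Ioc 0 N, ArithmeticFunction.vonMangoldt n / n
        - ∑ n ∈ Finset.Ioc 0 N,
            (if n.Prime then 0 else ArithmeticFunction.vonMangoldt n) / (n : ℝ) := by
    rw [← Finset.sum_sub_distrib, ← Finset.add_sum_Ioc_eq_sum_Icc (Nat.zero_le N)]
    simp only [Nat.not_prime_zero, if_false, zero_add]
    refine Finset.sum_congr rfl fun n _ => ?_
    split_ifs with h
    · rw [ArithmeticFunction.vonMangoldt_apply_prime h]; simp
    · simp
  have hT1 : ∑ n ∈ Finset.Ioc 0 N,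
      (if n.Prime then 0 else ArithmeticFunction.vonMangoldt n) / (n : ℝ) ≤ T :=
    hs.sum_le_tsum _ fun n _ => hpos n
  have hT0 := Finset.sum_nonneg fun n (_ : n ∈ Finset.Ioc 0 N) => hpos n
  have := abs_le.1 (hM N (by omega))
  have h2 : 0 < Real.log 2 := Real.log_pos (by norm_num)
  rw [hsplit, abs_le]
  constructor <;> linarith

/-- The sum `∑ 1/q` over the primes `q ≤ x`. -/
noncomputable def recipSum (x : ℝ) : ℝ :=
  ∑ n ∈ Finset.Icc 0 ⌊x⌋₊, if n.Prime then (n : ℝ)⁻¹ else 0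

lemma recipSum_nonneg (x : ℝ) : 0 ≤ recipSum x :=
  Finset.sum_nonneg fun n _ => by split_ifs <;> positivity

lemma monotone_recipSum : Monotone recipSum := fun x y hxy =>
  Finset.sum_le_sum_of_subset_of_nonneg (Finset.Icc_subset_Icc_right (Nat.floor_mono hxy))
    fun n _ _ => by split_ifs <;> positivity

lemma hasDerivAt_inv_log {t : ℝ} (ht : 1 < t) :
    HasDerivAt (fun t => (Real.log t)⁻¹) (-(t⁻¹ / Real.log t ^ 2)) t := by
  have := (Real.hasDerivAt_log (by linarith : t ≠ 0)).inv (Real.log_pos ht).ne'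
  rwa [neg_div] at this

lemma integrableOn_inv_div_log_sq : IntegrableOn (fun t => t⁻¹ / Real.log t ^ 2) (Ioi (2 : ℝ)) := by
  refine integrableOn_Ioi_deriv_of_nonneg' (g := fun t => -(Real.log t)⁻¹) (l := -0)
    (fun t ht => ?_) (fun t ht => ?_) ?_
  · have : (2 : ℝ) ≤ t := ht
    have h := (hasDerivAt_inv_log (by linarith : 1 < t)).neg
    rw [neg_neg] at h
    exact h
  · have : (2 : ℝ) < t := ht
    positivity
  · exact tendsto_log_atTop.inv_tendsto_atTop.neg

/-- Mertens' second theorem, with an unspecified constant: Abel summation turns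
`∑ 1/q = ∑ (log q / q) / log q` into `log log x` plus the convergent integral of the error term of
the first theorem against `1 / (t log² t)`. -/
theorem exists_tendsto_recipSum_sub_log_log :
    ∃ c : ℝ, Tendsto (fun x => recipSum x - Real.log (Real.log x)) atTop (nhds c) := by
  obtain ⟨M, hM⟩ := exists_abs_sum_log_div_sub_log_le
  set A : ℝ → ℝ := fun x => ∑ n ∈ Finset.Icc 0 ⌊x⌋₊, (if n.Prime then Real.log n / n else 0) with hA
  have hAmono : Monotone A := fun x y hxy =>
    Finset.sum_le_sum_of_subset_of_nonneg (Finset.Icc_subset_Icc_right (Nat.floor_mono hxy))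
      fun n _ _ => by
        have := Real.log_natCast_nonneg n
        split_ifs <;> positivity
  set w : ℝ → ℝ := fun t => t⁻¹ / Real.log t ^ 2 with hw
  have hwcont : ContinuousOn w (Ici 2) := by
    intro t ht
    have ht2 : (2 : ℝ) ≤ t := ht
    have h0 : t ≠ 0 := by linarith
    have hl := Real.log_pos (by linarith : 1 < t)
    refine ContinuousAt.continuousWithinAt ?_
    exact (continuousAt_inv₀ h0).div ((Real.continuousAt_log h0).pow 2) (by positivity)
  have hE : IntegrableOn (fun t => (A t - Real.log t) * w t) (Ioi 2) := by
    refine Integrable.bdd_mul (c := M) integrableOn_inv_div_log_sq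
      (hAmono.measurable.sub Real.measurable_log).aestronglyMeasurable ?_
    filter_upwards [ae_restrict_mem measurableSet_Ioi] with t ht
    have ht2 : (2 : ℝ) < t := ht
    exact hM t (by linarith)
  have habel : ∀ b : ℝ, 2 ≤ b → recipSum b - Real.log (Real.log b)
      = (A b - Real.log b) * (Real.log b)⁻¹ + 1 - Real.log (Real.log 2)
        + ∫ t in (2 : ℝ)..b, (A t - Real.log t) * w t := by
    intro b hb
    have hlb := Real.log_pos (by linarith : 1 < b)
    have hsum := sum_mul_eq_sub_integral_mul₁ (f := fun t => (Real.log t)⁻¹)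
      (fun n : ℕ => if n.Prime then Real.log n / n else 0) (by simp) (by simp) b
      (fun t ht => (hasDerivAt_inv_log (by linarith [ht.1])).differentiableAt) (by
        refine (IntegrableOn.congr_fun (f := fun t => -w t) ?_ (fun t ht => ?_) measurableSet_Icc)
        · exact (hwcont.mono fun t ht => ht.1).neg.integrableOn_Icc
        · exact (hasDerivAt_inv_log (by linarith [ht.1])).deriv.symm)
    have hleft : ∑ k ∈ Finset.Icc 0 ⌊b⌋₊, (Real.log k)⁻¹ * (if k.Prime then Real.log k / k else 0)
        = recipSum b := by
      refine Finset.sum_congr rfl fun k _ => ?_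
      split_ifs with hk
      · have : Real.log k ≠ 0 := (Real.log_pos (by exact_mod_cast hk.one_lt)).ne'
        field_simp
      · simp
    rw [hleft] at hsum
    have hint : ∫ t in Ioc 2 b, deriv (fun t => (Real.log t)⁻¹) t
          * ∑ k ∈ Finset.Icc 0 ⌊t⌋₊, (if k.Prime then Real.log k / k else 0)
        = - ∫ t in (2 : ℝ)..b, ((A t - Real.log t) * w t + t⁻¹ / Real.log t) := by
      rw [intervalIntegral.integral_of_le hb, ← integral_neg]
      refine setIntegral_congr_fun measurableSet_Ioc fun t ht => ?_
      have ht1 : 1 < t := by linarith [ht.1]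
      have hl := Real.log_pos ht1
      rw [(hasDerivAt_inv_log ht1).deriv]
      change -(w t) * A t = _
      simp only [hw]
      field_simp
      ring
    have hsub : ∀ t ∈ uIcc 2 b, 1 < t := by
      intro t ht
      rw [uIcc_of_le hb] at ht
      linarith [ht.1]
    have hi2 : IntervalIntegrable (fun t => t⁻¹ / Real.log t) volume 2 b := by
      refine ContinuousOn.intervalIntegrable fun t ht => ?_
      have h1 := hsub t ht
      have h0 : t ≠ 0 := by linarith
      exact ((continuousAt_inv₀ h0).div (Real.continuousAt_log h0)
        (Real.log_pos h1).ne').continuousWithinAt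
    have hlog : ∫ t in (2 : ℝ)..b, t⁻¹ / Real.log t
        = Real.log (Real.log b) - Real.log (Real.log 2) :=
      intervalIntegral.integral_eq_sub_of_hasDerivAt (f := fun t => Real.log (Real.log t))
        (fun t ht => (Real.hasDerivAt_log (by linarith [hsub t ht])).log
          (Real.log_pos (hsub t ht)).ne') hi2
    rw [hint, intervalIntegral.integral_add
      ((intervalIntegrable_iff_integrableOn_Ioc_of_le hb).2 (hE.mono_set fun t ht => ht.1)) hi2,
      hlog] at hsum
    change _ = (Real.log b)⁻¹ * A b - _ at hsum
    rw [hsum]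
    field_simp
    ring
  refine ⟨0 + 1 - Real.log (Real.log 2) + ∫ t in Ioi 2, (A t - Real.log t) * w t, ?_⟩
  refine Tendsto.congr' (f₁ := fun b => (A b - Real.log b) * (Real.log b)⁻¹ + 1
    - Real.log (Real.log 2) + ∫ t in (2 : ℝ)..b, (A t - Real.log t) * w t) ?_ ?_
  · filter_upwards [eventually_ge_atTop 2] with b hb using (habel b hb).symm
  · refine (((bdd_le_mul_tendsto_zero' M ?_ ?_).add_const 1).sub_const _).add
      (intervalIntegral_tendsto_integral_Ioi 2 hE tendsto_id)
    · filter_upwards [eventually_ge_atTop 1] with b hb using hM b hb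
    · exact tendsto_log_atTop.inv_tendsto_atTop

lemma recipSum_le {x : ℝ} (hx : 1 ≤ x) : recipSum x ≤ 1 + Real.log x := by
  refine le_trans ?_ (harmonic_floor_le_one_add_log x hx)
  rw [harmonic_eq_sum_Icc, recipSum, ← Finset.add_sum_Ioc_eq_sum_Icc (Nat.zero_le _)]
  simp only [Nat.not_prime_zero, if_false, zero_add]
  push_cast
  refine Finset.sum_le_sum fun n _ => ?_
  split_ifs <;> simp

/-- Up to the factor `ε`, the prime zeta function `∑ q ^ (-s)` at `s = 1 + ε` is the Laplace
transform of `u ↦ ∑_{q ≤ e^u} 1/q` at `ε`; here `u = v / ε`. -/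
lemma tsum_primes_rpow_eq_integral {ε : ℝ} (hε : 0 < ε) :
    ∑' q : Nat.Primes, (q : ℝ) ^ (-(1 + ε))
      = ∫ v in Ioi (0 : ℝ), recipSum (exp (v / ε)) * exp (-v) := by
  set f : ℕ → ℝ := fun n => if n.Prime then (n : ℝ)⁻¹ else 0 with hf
  have hf0 : ∀ n, 0 ≤ f n := fun n => by simp only [hf]; split_ifs <;> positivity
  have hsum : ∀ t : ℝ, ∑ k ∈ Finset.Icc 1 ⌊t⌋₊, f k = recipSum t := by
    intro t
    rw [recipSum, ← Finset.add_sum_Ioc_eq_sum_Icc (Nat.zero_le _)]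
    simp only [Nat.not_prime_zero, if_false, zero_add]
    rfl
  have hO : (fun n : ℕ => ∑ k ∈ Finset.Icc 1 n, f k) =O[atTop] fun n => (n : ℝ) ^ (ε / 2) := by
    refine Asymptotics.IsBigO.of_bound (1 + 2 / ε) ?_
    filter_upwards [eventually_ge_atTop 1] with n hn
    have hn1 : (1 : ℝ) ≤ n := by exact_mod_cast hn
    have h1 := hsum n
    rw [Nat.floor_natCast] at h1
    rw [h1, norm_of_nonneg (recipSum_nonneg _), norm_of_nonneg (by positivity)]
    have h2 := recipSum_le hn1
    have h3 := Real.log_le_rpow_div (by positivity : (0 : ℝ) ≤ n) (half_pos hε)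
    have h4 := Real.one_le_rpow hn1 (half_pos hε).le
    have h5 : (n : ℝ) ^ (ε / 2) / (ε / 2) = 2 / ε * (n : ℝ) ^ (ε / 2) := by field_simp
    linarith
  have hL := LSeries_eq_mul_integral_of_nonneg f (half_pos hε).le (s := (ε : ℂ))
    (by simpa using hε) hO hf0
  have hleft : LSeries (fun n => (f n : ℂ)) ε
      = ((∑' q : Nat.Primes, (q : ℝ) ^ (-(1 + ε)) : ℝ) : ℂ) := by
    rw [LSeries, show (∑' q : Nat.Primes, (q : ℝ) ^ (-(1 + ε)))
      = ∑' n : ℕ, indicator {n : ℕ | n.Prime} (fun n : ℕ => (n : ℝ) ^ (-(1 + ε))) n from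
        tsum_subtype {n : ℕ | n.Prime} (fun n : ℕ => (n : ℝ) ^ (-(1 + ε))), Complex.ofReal_tsum]
    refine tsum_congr fun n => ?_
    rw [LSeries.term]
    by_cases hn : n.Prime
    · have hn0 : (0 : ℝ) < n := by exact_mod_cast hn.pos
      rw [if_neg hn.ne_zero, indicator_of_mem (by exact hn)]
      simp only [hf, if_pos hn]
      rw [← Complex.ofReal_natCast, ← Complex.ofReal_cpow hn0.le, ← Complex.ofReal_div]
      congr 1
      rw [rpow_neg hn0.le, rpow_add hn0, rpow_one, mul_inv, div_eq_mul_inv]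
    · rw [indicator_of_notMem (by exact hn)]
      simp [hf, hn]
  have himg : Ioi (1 : ℝ) = (fun v => exp (v / ε)) '' Ioi 0 := by
    ext t
    constructor
    · intro ht
      refine ⟨ε * Real.log t, mul_pos hε (Real.log_pos ht), ?_⟩
      simp only
      rw [mul_div_cancel_left₀ _ hε.ne', exp_log (zero_lt_one.trans ht)]
    · rintro ⟨u, hu, rfl⟩
      exact one_lt_exp_iff.2 (div_pos hu hε)
  have hinj : InjOn (fun v => exp (v / ε)) (Ioi 0) := by
    intro a _ b _ hab
    exact (div_left_inj' hε.ne').1 (exp_injective hab)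
  have hsub : ∫ t in Ioi (1 : ℝ), (∑ k ∈ Finset.Icc 1 ⌊t⌋₊, ((f k : ℝ) : ℂ))
        * (t : ℂ) ^ (-((ε : ℂ) + 1))
      = ((ε⁻¹ * ∫ v in Ioi (0 : ℝ), recipSum (exp (v / ε)) * exp (-v) : ℝ) : ℂ) := by
    have hder : ∀ u ∈ Ioi (0 : ℝ), HasDerivWithinAt (fun v => exp (v / ε))
        (exp (u / ε) * (1 / ε)) (Ioi 0) u := fun u _ =>
      (((hasDerivAt_id u).div_const ε).exp).hasDerivWithinAt
    rw [himg, integral_image_eq_integral_abs_deriv_smul measurableSet_Ioi hder hinj,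
      Complex.ofReal_mul, ← integral_complex_ofReal, ← integral_const_mul]
    refine integral_congr_ae (Eventually.of_forall fun v => ?_)
    simp only
    rw [← Complex.ofReal_sum, hsum, Complex.real_smul, ← Complex.ofReal_one, ← Complex.ofReal_add,
      ← Complex.ofReal_neg, ← Complex.ofReal_cpow (exp_pos _).le, ← Complex.ofReal_mul,
      ← Complex.ofReal_mul, ← Complex.ofReal_mul]
    congr 1
    rw [abs_of_pos (by positivity), ← exp_mul, show v / ε * -(ε + 1) = -v + -(v / ε) by
      field_simp; ring, exp_add]
    have h2 : exp (v / ε) * exp (-(v / ε)) = 1 := by rw [← exp_add]; simp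
    linear_combination (ε⁻¹ * recipSum (exp (v / ε)) * exp (-v)) * h2
  rw [hleft, hsub, ← Complex.ofReal_mul] at hL
  rw [Complex.ofReal_injective hL]
  field_simp

/-- This integral is `Γ'(1)`. -/
lemma integral_log_mul_exp_neg :
    ∫ v in Ioi (0 : ℝ), Real.log v * exp (-v) = -Real.eulerMascheroniConstant := by
  have h1 := Complex.hasDerivAt_GammaIntegral (s := 1) (by simp)
  have h2 : HasDerivAt Complex.GammaIntegral (-(Real.eulerMascheroniConstant : ℂ)) 1 := by
    refine Complex.hasDerivAt_Gamma_one.congr_of_eventuallyEq ?_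
    have : ∀ᶠ s : ℂ in nhds 1, 0 < s.re :=
      (isOpen_lt continuous_const Complex.continuous_re).mem_nhds (by simp)
    filter_upwards [this] with s hs using (Complex.Gamma_eq_integral hs).symm
  have h3 := h1.unique h2
  simp only [sub_self, Complex.cpow_zero, one_mul] at h3
  have h4 : ((∫ v in Ioi (0 : ℝ), Real.log v * exp (-v) : ℝ) : ℂ)
      = ((-Real.eulerMascheroniConstant : ℝ) : ℂ) := by
    rw [← integral_complex_ofReal]
    push_cast
    exact_mod_cast h3
  exact_mod_cast h4

lemma integrableOn_log_mul_exp_neg :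
    IntegrableOn (fun v => Real.log v * exp (-v)) (Ioi 0) := by
  by_contra h
  -- a non-integrable function would have Bochner integral `0`, but `γ ≠ 0`
  have h1 := integral_log_mul_exp_neg
  rw [integral_undef h] at h1
  linarith [Real.one_half_lt_eulerMascheroniConstant]

/-- The prime zeta function near `1`, in terms of the constant `c` of Mertens' second theorem:
replacing `∑_{q ≤ e^u} 1/q` by `log u + c` in its Laplace representation costs `o(1)`, and the
integral of `log v * e ^ (-v)` contributes `-γ`. -/
lemma tendsto_tsum_primes_rpow_add_log {c : ℝ}
    (hc : Tendsto (fun x => recipSum x - Real.log (Real.log x)) atTop (nhds c)) :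
    Tendsto (fun ε : ℝ => ∑' q : Nat.Primes, (q : ℝ) ^ (-(1 + ε)) + Real.log ε)
      (nhdsWithin 0 (Ioi 0)) (nhds (c - Real.eulerMascheroniConstant)) := by
  set r : ℝ → ℝ := fun u => recipSum (exp u) - Real.log u - c with hr
  have hr0 : Tendsto r atTop (nhds 0) := by
    have := (hc.comp tendsto_exp_atTop).sub_const c
    simpa only [Function.comp_def, Real.log_exp, sub_self] using this
  have hmeas : Measurable r :=
    ((monotone_recipSum.measurable.comp measurable_exp).sub Real.measurable_log).sub_const c
  -- `r` is bounded except for the logarithmic singularity at `0`, which `exp (-v)` integrates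
  obtain ⟨M, hM⟩ : ∃ M, ∀ u, 0 < u → |r u| ≤ M + max (-Real.log u) 0 := by
    obtain ⟨U, hU⟩ := eventually_atTop.1
      ((hr0.abs.eventually (ge_mem_nhds (by simp : |(0 : ℝ)| < 1))).and (eventually_ge_atTop 1))
    have hU1 := (hU U le_rfl).2
    refine ⟨2 + U + |c| + Real.log U, fun u hu => ?_⟩
    have hlU := Real.log_nonneg hU1
    have h0 := le_max_right (-Real.log u) 0
    have h1 := le_max_left (-Real.log u) 0
    rcases le_total U u with h | h
    · have := (hU u h).1
      linarith [abs_nonneg c]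
    · have h2 : recipSum (exp u) ≤ 1 + u := by
        simpa using recipSum_le (one_le_exp hu.le)
      have h3 := recipSum_nonneg (exp u)
      have h4 := Real.log_le_log hu h
      have h5 := le_abs_self c
      have h6 := neg_abs_le c
      simp only [hr]
      rw [abs_le]
      constructor <;> linarith
  have hexp : IntegrableOn (fun v : ℝ => exp (-v)) (Ioi 0) := integrableOn_exp_neg_Ioi 0
  have hexp1 : ∫ v in Ioi (0 : ℝ), exp (-v) = 1 := integral_exp_neg_Ioi_zero
  set D : ℝ → ℝ := fun v => M * exp (-v) + |Real.log v * exp (-v)| with hD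
  have hDint : IntegrableOn D (Ioi 0) := (hexp.const_mul M).add integrableOn_log_mul_exp_neg.abs
  have hbound : ∀ ε : ℝ, 0 < ε → ε ≤ 1 → ∀ v ∈ Ioi (0 : ℝ), ‖r (v / ε) * exp (-v)‖ ≤ D v := by
    intro ε hε hε1 v hv
    have hv0 : 0 < v := hv
    rw [norm_mul, norm_of_nonneg (exp_pos (-v)).le, Real.norm_eq_abs]
    simp only [hD]
    rw [abs_mul, abs_of_pos (exp_pos (-v)), ← add_mul]
    refine mul_le_mul_of_nonneg_right ((hM _ (div_pos hv0 hε)).trans ?_) (exp_pos _).le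
    -- `ε ≤ 1` makes the bound for `r (v / ε)` uniform in `ε`
    have h1 : Real.log v ≤ Real.log (v / ε) :=
      Real.log_le_log hv0 ((le_div_iff₀ hε).2 (by nlinarith))
    have h2 : max (-Real.log (v / ε)) 0 ≤ |Real.log v| :=
      max_le (by linarith [neg_abs_le (Real.log v)]) (abs_nonneg _)
    linarith
  have hmeas' : ∀ ε : ℝ, AEStronglyMeasurable (fun v => r (v / ε) * exp (-v))
      (volume.restrict (Ioi 0)) := fun ε =>
    ((hmeas.comp (measurable_id.div_const ε)).mul (by fun_prop)).aestronglyMeasurable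
  have hlim : Tendsto (fun ε : ℝ => ∫ v in Ioi (0 : ℝ), r (v / ε) * exp (-v))
      (nhdsWithin 0 (Ioi 0)) (nhds 0) := by
    have hev : ∀ᶠ ε : ℝ in nhdsWithin 0 (Ioi 0), 0 < ε ∧ ε ≤ 1 := by
      filter_upwards [Ioc_mem_nhdsGT (zero_lt_one' ℝ)] with ε hε using hε
    have := tendsto_integral_filter_of_dominated_convergence
      (F := fun (ε : ℝ) v => r (v / ε) * exp (-v)) (f := fun _ => (0 : ℝ))
      (μ := volume.restrict (Ioi 0)) (l := nhdsWithin 0 (Ioi 0)) D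
      (Eventually.of_forall hmeas') ?_ hDint ?_
    · simpa using this
    · filter_upwards [hev] with ε hε
      filter_upwards [ae_restrict_mem measurableSet_Ioi] with v hv using hbound ε hε.1 hε.2 v hv
    · filter_upwards [ae_restrict_mem measurableSet_Ioi] with v hv
      have hv0 : 0 < v := hv
      have h1 : Tendsto (fun ε : ℝ => v / ε) (nhdsWithin 0 (Ioi 0)) atTop :=
        tendsto_inv_nhdsGT_zero.const_mul_atTop hv0
      simpa using (hr0.comp h1).mul_const (exp (-v))
  have hlim' := hlim.const_add (c - Real.eulerMascheroniConstant)
  rw [add_zero] at hlim'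
  refine hlim'.congr' ?_
  filter_upwards [Ioc_mem_nhdsGT (zero_lt_one' ℝ)] with ε hε
  have hint : IntegrableOn (fun v => r (v / ε) * exp (-v)) (Ioi 0) :=
    Integrable.mono' hDint (hmeas' ε) (by
      filter_upwards [ae_restrict_mem measurableSet_Ioi] with v hv using hbound ε hε.1 hε.2 v hv)
  have hsplit : ∫ v in Ioi (0 : ℝ), recipSum (exp (v / ε)) * exp (-v)
      = ∫ v in Ioi (0 : ℝ), ((Real.log v * exp (-v) + (c - Real.log ε) * exp (-v))
        + r (v / ε) * exp (-v)) := by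
    refine setIntegral_congr_fun measurableSet_Ioi fun v hv => ?_
    have hv0 : 0 < v := hv
    simp only [hr]
    rw [Real.log_div hv0.ne' hε.1.ne']
    ring
  have hmain : IntegrableOn (fun v => Real.log v * exp (-v) + (c - Real.log ε) * exp (-v))
      (Ioi 0) := integrableOn_log_mul_exp_neg.add (hexp.const_mul _)
  rw [tsum_primes_rpow_eq_integral hε.1, hsplit, integral_add hmain hint,
    integral_add integrableOn_log_mul_exp_neg (hexp.const_mul _), integral_const_mul, hexp1,
    integral_log_mul_exp_neg]
  ring

/-- As `s → 1⁺`, the logarithm of the Euler product of `ζ(s)` is `-log (s - 1) + o(1)`. -/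
lemma tendsto_tsum_log_add_log :
    Tendsto (fun ε : ℝ => ∑' q : Nat.Primes, -Real.log (1 - (q : ℝ) ^ (-(1 + ε))) + Real.log ε)
      (nhdsWithin 0 (Ioi 0)) (nhds 0) := by
  have hS : ∀ ε : ℝ, 0 < ε →
      ((exp (∑' q : Nat.Primes, -Real.log (1 - (q : ℝ) ^ (-(1 + ε)))) : ℝ) : ℂ)
        = riemannZeta (1 + ε) := by
    intro ε hε
    rw [← riemannZeta_eulerProduct_exp_log (by simpa using hε), Complex.ofReal_exp,
      Complex.ofReal_tsum]
    congr 1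
    refine tsum_congr fun q => ?_
    have hq1 : (1 : ℝ) < q := by exact_mod_cast q.2.one_lt
    have h1 : (q : ℝ) ^ (-(1 + ε)) < 1 := rpow_lt_one_of_one_lt_of_neg hq1 (by linarith)
    rw [Complex.ofReal_neg, Complex.ofReal_log (by linarith), Complex.ofReal_sub,
      Complex.ofReal_cpow (by positivity)]
    push_cast
    rfl
  have h1 : Tendsto (fun ε : ℝ => (1 + ε : ℂ)) (nhdsWithin 0 (Ioi 0)) (nhdsWithin 1 {1}ᶜ) := by
    refine tendsto_nhdsWithin_iff.2 ⟨?_, ?_⟩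
    · have : Tendsto (fun ε : ℝ => (1 + ε : ℂ)) (nhds 0) (nhds (1 + (0 : ℝ))) :=
        Continuous.tendsto (by fun_prop) 0
      simpa using this.mono_left nhdsWithin_le_nhds
    · filter_upwards [self_mem_nhdsWithin] with ε hε
      have : (ε : ℂ) ≠ 0 := by exact_mod_cast (ne_of_gt hε)
      simpa using this
  have h2 := (Complex.continuous_re.tendsto _).comp (riemannZeta_residue_one.comp h1)
  rw [Complex.one_re] at h2
  have h3 := h2.log one_ne_zero
  rw [Real.log_one] at h3
  refine h3.congr' ?_
  filter_upwards [self_mem_nhdsWithin] with ε hε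
  have hε0 : (0 : ℝ) < ε := hε
  simp only [Function.comp]
  rw [← hS ε hε0, add_sub_cancel_left, ← Complex.ofReal_mul, Complex.ofReal_re,
    Real.log_mul hε0.ne' (exp_pos _).ne', Real.log_exp, add_comm]

/-- The remainder `-log (1 - x) - x = x² / 2 + x³ / 3 + ⋯` of the logarithm series. -/
noncomputable def logRem (x : ℝ) : ℝ := -Real.log (1 - x) - x

lemma logRem_nonneg {x : ℝ} (hx : x < 1) : 0 ≤ logRem x := by
  have := Real.log_le_sub_one_of_pos (by linarith : 0 < 1 - x)
  rw [logRem]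
  linarith

lemma logRem_le {x : ℝ} (hx : x ≤ 1 / 2) : logRem x ≤ 2 * x ^ 2 := by
  have h1 : 0 < 1 - x := by linarith
  have h := Real.one_sub_inv_le_log_of_pos h1
  have h2 : (1 - x)⁻¹ ≤ 1 + x + 2 * x ^ 2 := by
    rw [inv_le_iff_one_le_mul₀ h1]
    nlinarith [sq_nonneg x]
  rw [logRem]
  linarith

lemma prime_rpow_le_inv (q : Nat.Primes) {ε : ℝ} (hε : 0 ≤ ε) :
    (q : ℝ) ^ (-(1 + ε)) ≤ (q : ℝ)⁻¹ := by
  rw [← rpow_neg_one]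
  exact rpow_le_rpow_of_exponent_le (by exact_mod_cast q.2.one_lt.le) (by linarith)

lemma prime_inv_le_half (q : Nat.Primes) : (q : ℝ)⁻¹ ≤ 1 / 2 := by
  rw [one_div]
  exact inv_anti₀ (by norm_num) (by exact_mod_cast q.2.two_le)

lemma summable_primes_inv_sq : Summable fun q : Nat.Primes => 2 * ((q : ℝ)⁻¹) ^ 2 := by
  refine Summable.mul_left 2 ?_
  refine (Nat.Primes.summable_rpow.2 (by norm_num : (-2 : ℝ) < -1)).congr fun q => ?_
  rw [rpow_neg (by positivity), inv_pow]
  norm_num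

lemma norm_logRem_prime_rpow_le (q : Nat.Primes) {ε : ℝ} (hε : 0 ≤ ε) :
    ‖logRem ((q : ℝ) ^ (-(1 + ε)))‖ ≤ 2 * ((q : ℝ)⁻¹) ^ 2 := by
  have h1 := prime_rpow_le_inv q hε
  have h2 := prime_inv_le_half q
  have h0 : 0 ≤ (q : ℝ) ^ (-(1 + ε)) := by positivity
  rw [norm_of_nonneg (logRem_nonneg (by linarith))]
  refine (logRem_le (by linarith)).trans ?_
  gcongr

lemma summable_logRem_prime_rpow {ε : ℝ} (hε : 0 ≤ ε) :
    Summable fun q : Nat.Primes => logRem ((q : ℝ) ^ (-(1 + ε))) :=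
  Summable.of_norm_bounded summable_primes_inv_sq fun q => norm_logRem_prime_rpow_le q hε

lemma tendsto_tsum_logRem :
    Tendsto (fun ε : ℝ => ∑' q : Nat.Primes, logRem ((q : ℝ) ^ (-(1 + ε))))
      (nhdsWithin 0 (Ioi 0)) (nhds (∑' q : Nat.Primes, logRem ((q : ℝ)⁻¹))) := by
  refine tendsto_tsum_of_dominated_convergence summable_primes_inv_sq (fun q => ?_) ?_
  · have hq : (q : ℝ) ≠ 0 := by exact_mod_cast q.2.ne_zero
    have h2 := prime_inv_le_half q
    have h1 : Tendsto (fun ε : ℝ => (q : ℝ) ^ (-(1 + ε))) (nhdsWithin 0 (Ioi 0))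
        (nhds ((q : ℝ)⁻¹)) := by
      have : Tendsto (fun ε : ℝ => (q : ℝ) ^ (-(1 + ε))) (nhds 0)
          (nhds ((q : ℝ) ^ (-(1 + (0 : ℝ))))) :=
        tendsto_const_nhds.rpow (Continuous.tendsto (by fun_prop) 0) (Or.inl hq)
      rw [add_zero, rpow_neg_one] at this
      exact this.mono_left nhdsWithin_le_nhds
    exact (((h1.const_sub 1).log (by linarith)).neg).sub h1
  · filter_upwards [self_mem_nhdsWithin] with ε hε q
    exact norm_logRem_prime_rpow_le q (le_of_lt hε)

/-- The constant in Mertens' second theorem, found by letting `s → 1⁺` in the Euler product. -/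
lemma const_add_tsum_logRem {c : ℝ}
    (hc : Tendsto (fun x => recipSum x - Real.log (Real.log x)) atTop (nhds c)) :
    c + ∑' q : Nat.Primes, logRem ((q : ℝ)⁻¹) = Real.eulerMascheroniConstant := by
  have h := (tendsto_tsum_primes_rpow_add_log hc).add tendsto_tsum_logRem
  have heq := tendsto_nhds_unique (h.congr' ?_) tendsto_tsum_log_add_log
  · linarith
  filter_upwards [self_mem_nhdsWithin] with ε hε
  have hε0 : (0 : ℝ) < ε := hε
  have hs : Summable fun q : Nat.Primes => (q : ℝ) ^ (-(1 + ε)) :=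
    Nat.Primes.summable_rpow.2 (by linarith)
  rw [add_right_comm, ← hs.tsum_add (summable_logRem_prime_rpow hε0.le)]
  congr 1
  exact tsum_congr fun q => by rw [logRem]; ring

/-- Mertens' third theorem. -/
theorem tendsto_inv_prod_primes_div_log :
    Tendsto (fun N : ℕ => (∏ q ∈ Nat.primesLE N, (1 - (q : ℝ)⁻¹))⁻¹ / Real.log N) atTop
      (nhds (exp Real.eulerMascheroniConstant)) := by
  obtain ⟨c, hc⟩ := exists_tendsto_recipSum_sub_log_log
  have hsum : Summable fun q : Nat.Primes => logRem ((q : ℝ)⁻¹) := by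
    simpa [rpow_neg_one] using summable_logRem_prime_rpow le_rfl
  set g : ℕ → ℝ := indicator {n : ℕ | n.Prime} (fun n : ℕ => logRem ((n : ℝ)⁻¹)) with hg
  have hs : HasSum g (∑' q : Nat.Primes, logRem ((q : ℝ)⁻¹)) :=
    hasSum_subtype_iff_indicator.1 hsum.hasSum
  have h1 := (hc.comp tendsto_natCast_atTop_atTop).add
    (hs.tendsto_sum_nat.comp (tendsto_add_atTop_nat 1))
  rw [const_add_tsum_logRem hc] at h1
  refine ((continuous_exp.tendsto _).comp h1).congr' ?_
  filter_upwards [eventually_ge_atTop 2] with N hN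
  have hlog : 0 < Real.log N := Real.log_pos (by exact_mod_cast hN)
  have hpos : ∀ q ∈ Nat.primesLE N, 0 < 1 - (q : ℝ)⁻¹ := by
    intro q hq
    have := prime_inv_le_half ⟨q, Nat.prime_of_mem_primesLE hq⟩
    simp only at this
    linarith
  have hrec : recipSum N = ∑ q ∈ Nat.primesLE N, (q : ℝ)⁻¹ := by
    rw [recipSum, Nat.floor_natCast, Nat.primesLE_eq_filter_Icc_zero, Finset.sum_filter]
  have hrem : ∑ n ∈ Finset.range (N + 1), g n = ∑ q ∈ Nat.primesLE N, logRem ((q : ℝ)⁻¹) := by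
    rw [Nat.primesLE_eq_filter_range, Finset.sum_filter]
    exact Finset.sum_congr rfl fun n _ => by simp [hg, indicator_apply]
  simp only [Function.comp]
  rw [hrec, hrem, sub_add_eq_add_sub, ← Finset.sum_add_distrib, exp_sub, exp_log hlog]
  congr 1
  rw [exp_sum, ← Finset.prod_inv_distrib]
  refine Finset.prod_congr rfl fun q hq => ?_
  rw [logRem, add_sub_cancel, exp_neg, exp_log (hpos q hq)]

end PrimorialRatio

/-- As `p → ∞` along the primes, `π(p#)/φ(p#) = (e^γ · ln p / ln(p#))·(1+o(1))`;
equivalently `(π(p#)·ln(p#))/(φ(p#)·ln p) → e^γ`. -/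
theorem pi_primorial_div_totient_primorial_log_tendsto :
    Tendsto
      (fun p : ℕ =>
        ((Nat.primeCounting (primorial p) : ℝ) * Real.log (primorial p)) /
          ((Nat.totient (primorial p) : ℝ) * Real.log p))
      (atTop ⊓ Filter.principal {p : ℕ | p.Prime})
      (nhds (Real.exp Real.eulerMascheroniConstant)) := by
  have htot : ∀ p : ℕ, (Nat.totient (primorial p) : ℝ)
      = primorial p * ∏ q ∈ Nat.primesLE p, (1 - (q : ℝ)⁻¹) := by
    intro p
    have h := Nat.totient_eq_mul_prod_factors (primorial p)
    rw [primeFactors_primorial] at h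
    have h2 := congrArg (fun x : ℚ => (x : ℝ)) h
    push_cast at h2
    exact h2
  have hprim : Tendsto primorial (atTop ⊓ Filter.principal {p : ℕ | p.Prime}) atTop := by
    refine tendsto_atTop_mono' _ (f₁ := fun p => p) ?_ (tendsto_id.mono_left inf_le_left)
    filter_upwards [mem_inf_of_right (mem_principal_self _)] with p hp
    exact Nat.le_of_dvd (primorial_pos p) (Nat.Prime.dvd_primorial_iff hp |>.2 le_rfl)
  -- `(π(N) log N / N) * ((N / φ(N)) / log p)` with `N = p#`
  have h := (PrimorialRatio.tendsto_primeCounting_mul_log_div.comp hprim).mul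
    (PrimorialRatio.tendsto_inv_prod_primes_div_log.mono_left inf_le_left)
  rw [one_mul] at h
  refine h.congr fun p => ?_
  simp only [Function.comp]
  rw [htot]
  simp only [div_eq_mul_inv, mul_inv]
  ring
end

section
/- Let p# denote the primorial of a prime p. Then ln(p#) = p·(1 + o(1)) as p tends to infinity along the primes; equivalently, ln(p#)/p → 1 as p → ∞ over primes (this is the statement that the Chebyshev theta function θ(p) = Σ_{q ≤ p, q prime} ln q is asymptotic to p). -/
/-!
The logarithm of `p#` is Chebyshev's `θ p`, so the claim is the prime number theorem. The proof is
the Wiener–Ikehara argument, shortened by Chebyshev's bound `ψ x = O(x)`.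

Let `h u = ψ(e^u) e^{-u} - 1` for `u > 0` and `h u = 0` otherwise (`psiError`); `h` is bounded.
For `Re z > 0` its Laplace transform is `(A (1 + z) - 1) / (1 + z)`, where
`A s = -ζ'(s)/ζ(s) - 1/(s - 1)` (`fourier_psiError`). As `ζ` has no zeros on `Re s = 1`, this
extends continuously to `Re z ≥ 0`.

If `k` is continuous with compact support and `𝓕 k` is integrable, the continuity of the transform
up to the boundary turns `∫ h u * 𝓕 k (u - y) du` into a Fourier integral of an integrable function
on the imaginary axis, which tends to `0` as `y → ∞` by the Riemann–Lebesgue lemma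
(`tendsto_integral_mul_fourier`). Taking `𝓕 k = K` nonnegative (`exists_kernel`) and rescaling, all
averages of `h` against an approximate identity tend to `0`. Since `ψ` is monotone, `h` can
decrease only slowly (`psiError_slowly_decreasing`), so `h` itself tends to `0`
(`tendsto_of_slowly_decreasing`). That is `ψ x ~ x`, and `ψ x - θ x = O(√x)` gives `θ x ~ x`.
-/

open Filter Real Nat

open MeasureTheory FourierTransform
open scoped SchwartzMap Convolution

/-! ### A band-limited kernel -/

/-- A Fejér-type kernel: a nonnegative integrable function of positive mass which is the Fourier
transform of a compactly supported function. It is `(𝓕 f)²` for an even real bump function `f`,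
that is, the Fourier transform of `f ⋆ f`. -/
lemma exists_kernel : ∃ (k : ℝ → ℂ) (K : ℝ → ℝ), Continuous k ∧ HasCompactSupport k ∧
    (∀ v, 0 ≤ K v) ∧ Integrable K ∧ 0 < ∫ v, K v ∧ ∀ v, 𝓕 k v = K v := by
  let b : ContDiffBump (0 : ℝ) := ⟨1, 2, by norm_num, by norm_num⟩
  let f : ℝ → ℂ := fun x => (b x : ℂ)
  have hfc : HasCompactSupport f := b.hasCompactSupport.comp_left (g := fun x : ℝ => (x : ℂ)) (by simp)
  have hfs : ContDiff ℝ (⊤ : ℕ∞) f := Complex.ofRealCLM.contDiff.comp b.contDiff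
  have hfcont : Continuous f := hfs.continuous
  have hfi : Integrable f := hfcont.integrable_of_hasCompactSupport hfc
  let F : 𝓢(ℝ, ℂ) := hfc.toSchwartzMap hfs
  have hF : (F : ℝ → ℂ) = f := rfl
  -- `𝓕 f` is real because `f` is real and even.
  have hreal : ∀ v, (starRingEnd ℂ) (𝓕 f v) = 𝓕 f v := by
    intro v
    rw [Real.fourier_real_eq_integral_exp_smul, ← integral_conj, ← integral_neg_eq_self]
    congr 1 with x
    simp only [f, b.neg, smul_eq_mul, map_mul, ← Complex.exp_conj, Complex.conj_ofReal, Complex.conj_I]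
    congr 2
    push_cast
    ring
  have hcont : Continuous (𝓕 f) := by
    rw [← hF, ← SchwartzMap.fourier_coe]; exact (𝓕 F).continuous
  have hFint : Integrable (𝓕 f) := by
    rw [← hF, ← SchwartzMap.fourier_coe]; exact (𝓕 F).integrable
  have hbd : ∀ v, ‖𝓕 f v‖ ≤ ∫ x, ‖f x‖ := fun v =>
    VectorFourier.norm_fourierIntegral_le_integral_norm _ _ _ _ _
  have hKi : Integrable fun v => ‖𝓕 f v‖ ^ 2 := by
    simp only [sq]
    exact hFint.norm.bdd_mul hcont.norm.aestronglyMeasurable (.of_forall fun v => by simpa using hbd v)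
  refine ⟨f ⋆[ContinuousLinearMap.mul ℂ ℂ] f, fun v => ‖𝓕 f v‖ ^ 2, ?_, ?_, ?_, hKi, ?_, ?_⟩
  · exact hfc.continuous_convolution_right _ hfi.locallyIntegrable hfcont
  · exact hfc.convolution _ hfc
  · intro v; positivity
  · refine integral_pos_of_integrable_nonneg_nonzero (x := 0) (by fun_prop) hKi
      (fun v => by positivity) ?_
    have : 𝓕 f 0 = ((∫ x, b x : ℝ) : ℂ) := by
      rw [Real.fourier_real_eq_integral_exp_smul]
      simp [f, integral_complex_ofReal]
    simp only [this]
    have := b.integral_pos (μ := volume)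
    simpa using this.ne'
  · intro v
    rw [Real.fourier_mul_convolution_eq hfi hfi]
    rw [Complex.ofReal_pow, ← Complex.mul_conj', hreal]

/-! ### Passing to the boundary line -/

/-- If the Laplace transform of a bounded function `h` supported on `(0, ∞)` extends continuously to
the closed half plane `0 ≤ Re z`, then the averages of `h` against the translates of a band-limited
integrable function `𝓕 k` tend to `0`. -/
lemma tendsto_integral_mul_fourier {h : ℝ → ℝ} {M : ℝ} (hm : Measurable h) (hb : ∀ u, |h u| ≤ M)
    (h0 : ∀ u ≤ 0, h u = 0) {G : ℂ → ℂ} (hG : ContinuousOn G {s | 0 ≤ s.re})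
    (hGh : ∀ ε : ℝ, 0 < ε → ∀ t : ℝ,
      𝓕 (fun u : ℝ => ((h u * rexp (-ε * u) : ℝ) : ℂ)) t = G (ε + 2 * π * t * Complex.I))
    {k : ℝ → ℂ} (hk : Continuous k) (hkc : HasCompactSupport k) (hki : Integrable (𝓕 k)) :
    Tendsto (fun y : ℝ => ∫ u, (h u : ℂ) * 𝓕 k (u - y)) atTop (nhds 0) := by
  have hkint : Integrable k := hk.integrable_of_hasCompactSupport hkc
  have hlim : Tendsto (fun n : ℕ => (1 / (n + 1) : ℝ)) atTop (nhds 0) :=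
    tendsto_one_div_add_atTop_nhds_zero_nat
  have hre : ∀ e t : ℝ, ((e : ℂ) + 2 * π * t * Complex.I).re = e := by simp
  have hshift : ∀ y u : ℝ, 𝓕 (fun t => 𝐞 (t * y) • k t) u = 𝓕 k (u - y) := by
    intro y u
    rw [Real.fourier_real_eq, Real.fourier_real_eq]
    congr 1 with t
    rw [smul_smul, ← AddChar.map_add_eq_mul]
    congr 2
    ring
  have hdecay : ∀ ε : ℝ, 0 < ε → Integrable (fun u : ℝ => ((h u * rexp (-ε * u) : ℝ) : ℂ)) := by
    intro ε hε
    suffices h2 : Integrable (fun u : ℝ => h u * rexp (-ε * u)) from h2.ofReal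
    have h1 : Integrable (Set.indicator (Set.Ioi 0) fun u : ℝ => M * rexp (-ε * u)) :=
      ((integrable_indicator_iff measurableSet_Ioi).2
        ((exp_neg_integrableOn_Ioi 0 hε).const_mul M))
    refine h1.mono' (by fun_prop) (.of_forall fun u => ?_)
    rcases le_or_gt u 0 with hu | hu
    · rw [h0 u hu]; simp [hu]
    · rw [Set.indicator_of_mem (by exact hu), norm_mul, Real.norm_eq_abs, Real.norm_of_nonneg (exp_pos _).le]
      gcongr
      exact hb u
  -- Parseval's formula for the damped function `h u * exp (-ε u)`.
  have hswap : ∀ y ε : ℝ, 0 < ε → ∫ u, ((h u * rexp (-ε * u) : ℝ) : ℂ) * 𝓕 k (u - y) =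
      ∫ t : ℝ, (𝐞 (t * y) • k t) * G (ε + 2 * π * t * Complex.I) := by
    intro y ε hε
    have hki' : Integrable (fun t : ℝ => 𝐞 (t * y) • k t) := by
      refine (integrable_norm_iff ?_).1 ?_
      · exact (by fun_prop : Continuous fun t : ℝ => 𝐞 (t * y) • k t).aestronglyMeasurable
      · simpa using hkint.norm
    have := VectorFourier.integral_fourierIntegral_smul_eq_flip (L := innerₗ ℝ)
      Real.continuous_fourierChar continuous_inner hki' (hdecay ε hε)
    rw [flip_innerₗ] at this
    change ∫ u, 𝓕 (fun t => 𝐞 (t * y) • k t) u • ((h u * rexp (-ε * u) : ℝ) : ℂ) =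
      ∫ t : ℝ, (𝐞 (t * y) • k t) • 𝓕 (fun u : ℝ => ((h u * rexp (-ε * u) : ℝ) : ℂ)) t at this
    simp only [hshift, hGh ε hε, smul_eq_mul] at this
    rw [← this]
    congr 1 with u
    ring
  have hline : ∀ t : ℝ, Tendsto (fun n : ℕ => G ((1 / (n + 1) : ℝ) + 2 * π * t * Complex.I)) atTop
      (nhds (G (2 * π * t * Complex.I))) := by
    intro t
    have hc := hG (2 * π * t * Complex.I) (by simp)
    refine hc.tendsto.comp (tendsto_nhdsWithin_iff.2 ⟨?_, .of_forall fun n => ?_⟩)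
    · have := ((Complex.continuous_ofReal.tendsto 0).comp hlim).add_const (2 * π * t * Complex.I)
      simpa using! this
    · change 0 ≤ Complex.re _
      rw [hre]
      positivity
  have hGcont : Continuous fun t : ℝ => G (2 * π * t * Complex.I) :=
    hG.comp_continuous (by fun_prop) (fun t => by simp)
  -- The support of `k` is compact, so only values of `G` on a fixed rectangle matter.
  obtain ⟨C, hC⟩ : ∃ C, ∀ n : ℕ, ∀ t ∈ tsupport k,
      ‖G ((1 / (n + 1) : ℝ) + 2 * π * t * Complex.I)‖ ≤ C := by
    have hK : IsCompact ((fun p : ℝ × ℝ => (p.1 : ℂ) + 2 * π * p.2 * Complex.I) ''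
        (Set.Icc 0 1 ×ˢ tsupport k)) :=
      (isCompact_Icc.prod hkc.isCompact).image (by fun_prop)
    obtain ⟨C, hC⟩ := hK.exists_bound_of_continuousOn (f := G) (hG.mono (by
      rintro _ ⟨p, hp, rfl⟩
      simpa using hp.1.1))
    refine ⟨C, fun n t ht => hC _ ⟨(1 / (n + 1), t), ⟨⟨by positivity, ?_⟩, ht⟩, rfl⟩⟩
    rw [div_le_one (by positivity)]
    simp
  -- Both sides of `hswap` converge as `ε → 0`, with `M |𝓕 k|` and `C |k|` as dominating functions.
  have hlimit : ∀ y : ℝ, ∫ u, (h u : ℂ) * 𝓕 k (u - y) =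
      ∫ t : ℝ, (𝐞 (t * y) • k t) * G (2 * π * t * Complex.I) := by
    intro y
    have hL : Tendsto (fun n : ℕ => ∫ u, ((h u * rexp (-(1 / (n + 1)) * u) : ℝ) : ℂ) * 𝓕 k (u - y))
        atTop (nhds (∫ u, (h u : ℂ) * 𝓕 k (u - y))) := by
      have hki2 : Integrable fun u => 𝓕 k (u - y) := hki.comp_sub_right y
      refine tendsto_integral_of_dominated_convergence (fun u => M * ‖𝓕 k (u - y)‖)
        (fun n => ?_) (hki2.norm.const_mul M) (fun n => .of_forall fun u => ?_)
        (.of_forall fun u => ?_)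
      · exact AEStronglyMeasurable.mul (by fun_prop) hki2.aestronglyMeasurable
      · rw [norm_mul, Complex.norm_real, norm_mul, Real.norm_eq_abs,
          Real.norm_of_nonneg (exp_pos _).le]
        gcongr
        rcases le_or_gt u 0 with hu | hu
        · rw [h0 u hu]; simpa using (abs_nonneg _).trans (hb u)
        · refine (mul_le_of_le_one_right (abs_nonneg _) ?_).trans (hb u)
          rw [exp_le_one_iff, neg_mul, neg_nonpos]
          positivity
      · refine Tendsto.mul_const _ ?_
        refine (Complex.continuous_ofReal.tendsto _).comp ?_
        have := ((hlim.neg.mul_const u).rexp).const_mul (h u)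
        simpa using this
    have hR : Tendsto (fun n : ℕ => ∫ t : ℝ, (𝐞 (t * y) • k t) *
          G ((1 / (n + 1) : ℝ) + 2 * π * t * Complex.I)) atTop
        (nhds (∫ t : ℝ, (𝐞 (t * y) • k t) * G (2 * π * t * Complex.I))) := by
      refine tendsto_integral_of_dominated_convergence (fun t => ‖k t‖ * C)
        (fun n => ?_) (hkint.norm.mul_const C) (fun n => .of_forall fun t => ?_)
        (.of_forall fun t => (hline t).const_mul _)
      · refine (Continuous.mul (by fun_prop) ?_).aestronglyMeasurable
        refine hG.comp_continuous (by fun_prop) (fun t => ?_)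
        change 0 ≤ Complex.re _
        rw [hre]
        positivity
      · rw [norm_mul, Circle.norm_smul]
        by_cases ht : t ∈ tsupport k
        · gcongr; exact hC n t ht
        · rw [image_eq_zero_of_notMem_tsupport ht]; simp
    refine tendsto_nhds_unique hL (hR.congr fun n => ?_)
    exact (hswap y _ (by positivity)).symm
  simp_rw [hlimit]
  have hRL := (Real.tendsto_integral_exp_smul_cocompact
    (fun t : ℝ => k t * G (2 * π * t * Complex.I))).comp
    ((tendsto_neg_atTop_atBot : Tendsto (fun y : ℝ => -y) atTop atBot).mono_right atBot_le_cocompact)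
  refine hRL.congr fun y => ?_
  simp only [Function.comp]
  congr 1 with t
  rw [smul_mul_assoc]
  congr 2
  ring

/-! ### The Tauberian argument -/

/-- If the averages of a bounded `h` against every rescaling of the nonnegative kernel `K` tend
to `0`, then `h` cannot stay above a fixed positive level on intervals of fixed length far out. -/
lemma eventually_lt_of_forall_le {h K : ℝ → ℝ} {M : ℝ} (hm : Measurable h) (hb : ∀ u, |h u| ≤ M)
    (hK0 : ∀ v, 0 ≤ K v) (hKi : Integrable K) (hKpos : 0 < ∫ v, K v)
    (hlim : ∀ l : ℝ, 0 < l → Tendsto (fun y : ℝ => ∫ v, h (y + v / l) * K v) atTop (nhds 0))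
    {δ η : ℝ} (hδ : 0 < δ) (hη : 0 < η) :
    ∀ᶠ y in atTop, ∀ c : ℝ, (∀ u ∈ Set.Icc (y - δ) (y + δ), c ≤ h u) → c < η := by
  have hM : 0 ≤ M := (abs_nonneg _).trans (hb 0)
  have htail : Tendsto (fun n : ℕ => ∫ v, {v : ℝ | (n : ℝ) < |v|}.indicator K v) atTop (nhds 0) := by
    rw [← integral_zero ℝ ℝ]
    refine tendsto_integral_of_dominated_convergence K
      (fun n => (hKi.indicator (measurableSet_lt measurable_const measurable_norm)).aestronglyMeasurable) hKi
      (fun n => .of_forall fun v => ?_) (.of_forall fun v => ?_)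
    · rw [Real.norm_of_nonneg (Set.indicator_nonneg (fun v _ => hK0 v) v)]
      exact Set.indicator_le_self' (fun v _ => hK0 v) v
    · refine tendsto_const_nhds.congr' ?_
      filter_upwards [eventually_ge_atTop ⌈|v|⌉₊] with n hn
      rw [Set.indicator_of_notMem]
      simpa using Nat.ceil_le.1 hn
  obtain ⟨n, hn, hn0⟩ := ((((htail.const_mul (2 * M)).eventually
    (gt_mem_nhds (show 2 * M * 0 < η * (∫ v, K v) / 2 by rw [mul_zero]; positivity))).and
      (eventually_gt_atTop 0))).exists
  have hn' : (0 : ℝ) < n := Nat.cast_pos.2 hn0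
  filter_upwards [(hlim (n / δ) (by positivity)).eventually
    (gt_mem_nhds (show 0 < η * (∫ v, K v) / 2 by positivity))] with y hy c hc
  have hcM : c ≤ M := (hc y ⟨by linarith, by linarith⟩).trans ((le_abs_self _).trans (hb y))
  have hind : Integrable fun v => {v : ℝ | (n : ℝ) < |v|}.indicator K v :=
    hKi.indicator (measurableSet_lt measurable_const measurable_norm)
  have hhK : Integrable fun v => h (y + v / (n / δ)) * K v :=
    hKi.bdd_mul (c := M) (hm.comp (by fun_prop)).aestronglyMeasurable
      (.of_forall fun v => hb _)
  -- On `|v| ≤ n` the argument of `h` lies within `δ` of `y`; elsewhere `c - h ≤ 2 * M`.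
  have key : ∫ v, c * K v ≤ ∫ v, (h (y + v / (n / δ)) * K v +
      2 * M * {v : ℝ | (n : ℝ) < |v|}.indicator K v) := by
    refine integral_mono (hKi.const_mul c) (hhK.add (hind.const_mul _)) fun v => ?_
    have hKv := hK0 v
    by_cases hv : (n : ℝ) < |v|
    · simp only [Set.indicator_of_mem (show v ∈ {v : ℝ | (n : ℝ) < |v|} from hv)]
      have := (abs_le.1 (hb (y + v / (n / δ)))).1
      nlinarith
    · simp only [Set.indicator_of_notMem (show v ∉ {v : ℝ | (n : ℝ) < |v|} from hv)]
      have hv' : |v / (n / δ)| ≤ δ := by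
        rw [abs_div, abs_of_pos (show 0 < n / δ by positivity), div_le_iff₀ (by positivity)]
        rw [mul_div_cancel₀ _ hδ.ne']
        exact not_lt.1 hv
      have := hc (y + v / (n / δ)) ⟨by linarith [(abs_le.1 hv').1], by linarith [(abs_le.1 hv').2]⟩
      nlinarith
  rw [integral_const_mul, integral_add hhK (hind.const_mul _), integral_const_mul] at key
  by_contra! hcon
  nlinarith

/-- The Tauberian step: a bounded, slowly decreasing function tends to `0` once its averages against
every rescaling of `K` do. A value `h y ≥ a` forces `h ≥ a / 2` just to the right of `y`, a value
`h y ≤ -a` forces `h ≤ -a / 2` just to the left. -/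
lemma tendsto_of_slowly_decreasing {h K : ℝ → ℝ} {M : ℝ} (hm : Measurable h) (hb : ∀ u, |h u| ≤ M)
    (hK0 : ∀ v, 0 ≤ K v) (hKi : Integrable K) (hKpos : 0 < ∫ v, K v)
    (hlim : ∀ l : ℝ, 0 < l → Tendsto (fun y : ℝ => ∫ v, h (y + v / l) * K v) atTop (nhds 0))
    (hslow : ∀ a > 0, ∃ δ > 0, ∀ᶠ u in atTop, ∀ v ∈ Set.Icc u (u + δ), h u - a ≤ h v) :
    Tendsto h atTop (nhds 0) := by
  rw [Metric.tendsto_nhds]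
  intro a ha
  obtain ⟨δ, hδ, hs⟩ := hslow (a / 2) (by positivity)
  obtain ⟨u₀, hu₀⟩ := eventually_atTop.1 hs
  have hup := eventually_lt_of_forall_le hm hb hK0 hKi hKpos hlim (half_pos hδ) (half_pos ha)
  have hlo := eventually_lt_of_forall_le (h := fun u => -h u) hm.neg (by simpa using hb)
    hK0 hKi hKpos (by
      intro l hl
      have := (hlim l hl).neg
      simpa [integral_neg] using this) (half_pos hδ) (half_pos ha)
  have e1 := (tendsto_atTop_add_const_right atTop (δ / 2) tendsto_id).eventually hup
  have e2 := (tendsto_atTop_add_const_right atTop (-(δ / 2)) tendsto_id).eventually hlo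
  filter_upwards [e1, e2, eventually_ge_atTop (u₀ + δ)] with y h1 h2 hy
  simp only [id] at h1 h2
  rw [_root_.dist_zero_right, Real.norm_eq_abs, abs_lt]
  constructor
  · have := h2 (-h y - a / 2) fun u hu => by
      have := hu₀ u (by linarith [hu.1]) y ⟨by linarith [hu.2], by linarith [hu.1]⟩
      linarith
    linarith
  · have := h1 (h y - a / 2) fun u hu =>
      hu₀ y (by linarith) u ⟨by linarith [hu.1], by linarith [hu.2]⟩
    linarith

/-! ### The transform of the error in the Chebyshev function -/

/-- The relative error `ψ(x) / x - 1` in Chebyshev's function, in the logarithmic variable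
`u = log x`, cut off to `0` for `u ≤ 0`. -/
noncomputable def psiError (u : ℝ) : ℝ :=
  (Set.Ioi 0).indicator (fun u => Chebyshev.psi (rexp u) * rexp (-u) - 1) u

lemma measurable_psiError : Measurable psiError :=
  ((((Chebyshev.psi_mono.measurable).comp measurable_exp).mul (by fun_prop)).sub_const 1).indicator
    measurableSet_Ioi

lemma psiError_of_nonpos {u : ℝ} (hu : u ≤ 0) : psiError u = 0 :=
  Set.indicator_of_notMem (by simpa using hu) _

lemma psiError_of_pos {u : ℝ} (hu : 0 < u) :
    psiError u = Chebyshev.psi (rexp u) * rexp (-u) - 1 :=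
  Set.indicator_of_mem hu _

lemma psi_exp_mul_exp_neg_le (u : ℝ) : Chebyshev.psi (rexp u) * rexp (-u) ≤ Real.log 4 + 4 := by
  have := Chebyshev.psi_le_const_mul_self (exp_pos u).le
  rw [Real.exp_neg, ← div_eq_mul_inv, div_le_iff₀ (exp_pos u)]
  exact this

lemma abs_psiError_le (u : ℝ) : |psiError u| ≤ Real.log 4 + 4 := by
  have h4 : 0 ≤ Real.log 4 := Real.log_nonneg (by norm_num)
  rcases le_or_gt u 0 with hu | hu
  · rw [psiError_of_nonpos hu, abs_zero]; positivity
  · rw [psiError_of_pos hu, abs_le]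
    have h1 := psi_exp_mul_exp_neg_le u
    have h2 := mul_nonneg (Chebyshev.psi_nonneg (rexp u)) (exp_pos (-u)).le
    constructor <;> linarith

/-- The continuous extension to `0 ≤ Re z` of the Laplace transform of `psiError`. For the modulus
`q = 1`, `LFunctionResidueClassAux` is `-ζ'(s)/ζ(s) - 1/(s - 1)` with its singularity at `s = 1`
removed. -/
noncomputable def psiErrorTransform (z : ℂ) : ℂ :=
  (ArithmeticFunction.vonMangoldt.LFunctionResidueClassAux (1 : ZMod 1) (1 + z) - 1) / (1 + z)

lemma continuousOn_psiErrorTransform : ContinuousOn psiErrorTransform {z | 0 ≤ z.re} := by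
  have h := ArithmeticFunction.vonMangoldt.continuousOn_LFunctionResidueClassAux (1 : ZMod 1)
  have hadd : ContinuousOn (fun z : ℂ => 1 + z) {z | 0 ≤ z.re} := by fun_prop
  have hmaps : Set.MapsTo (fun z : ℂ => 1 + z) {z | 0 ≤ z.re} {s | 1 ≤ s.re} := by
    intro z hz
    change 1 ≤ (1 + z).re
    have hz' : 0 ≤ z.re := hz
    simpa using hz'
  have hcomp := h.comp hadd hmaps
  refine (hcomp.sub continuousOn_const).div hadd fun z hz h0 => ?_
  · have := congrArg Complex.re h0
    have hz' : 0 ≤ z.re := hz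
    simp at this
    linarith

lemma LSeries_vonMangoldt_eq_integral {s : ℂ} (hs : 1 < s.re) :
    LSeries (fun n => (ArithmeticFunction.vonMangoldt n : ℂ)) s =
      s * ∫ t in Set.Ioi (1 : ℝ), (Chebyshev.psi t : ℂ) * (t : ℂ) ^ (-(s + 1)) := by
  have hsum : ∀ n : ℕ, ∑ k ∈ Finset.Icc 1 n, ArithmeticFunction.vonMangoldt k = Chebyshev.psi n := by
    intro n
    rw [Chebyshev.psi, Nat.floor_natCast]
    rfl
  rw [LSeries_eq_mul_integral_of_nonneg (r := 1) _ zero_le_one hs ?_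
    (fun n => ArithmeticFunction.vonMangoldt_nonneg)]
  · congr 2 with t
    rw [Chebyshev.psi_eq_psi_coe_floor, ← hsum]
    push_cast
    rfl
  · simp_rw [hsum, Real.rpow_one]
    refine Asymptotics.IsBigO.of_bound (Real.log 4 + 4) (.of_forall fun n => ?_)
    rw [Real.norm_of_nonneg (Chebyshev.psi_nonneg _), Real.norm_natCast]
    exact Chebyshev.psi_le_const_mul_self (by positivity)

lemma integral_psi_mul_cpow (s : ℂ) :
    ∫ t in Set.Ioi (1 : ℝ), (Chebyshev.psi t : ℂ) * (t : ℂ) ^ (-(s + 1)) =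
      ∫ u in Set.Ioi (0 : ℝ), (Chebyshev.psi (rexp u) : ℂ) * Complex.exp (-s * u) := by
  have himg : Set.Ioi (1 : ℝ) = rexp '' Set.Ioi 0 := by
    ext x
    constructor
    · intro hx
      exact ⟨Real.log x, Real.log_pos hx, Real.exp_log (zero_lt_one.trans hx)⟩
    · rintro ⟨u, hu, rfl⟩
      exact one_lt_exp_iff.2 hu
  rw [himg, integral_image_eq_integral_abs_deriv_smul measurableSet_Ioi
    (fun u _ => (Real.hasDerivAt_exp u).hasDerivWithinAt) Real.exp_injective.injOn]
  congr 1 with u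
  rw [abs_of_pos (exp_pos u), Complex.real_smul, Complex.cpow_def_of_ne_zero (by simp),
    ← Complex.ofReal_log (exp_pos u).le, Real.log_exp, Complex.ofReal_exp, mul_left_comm, ← Complex.exp_add]
  congr 2
  ring

/-- The case `q = 1` of `eqOn_LFunctionResidueClassAux`. -/
lemma LSeries_vonMangoldt_eq_aux {s : ℂ} (hs : 1 < s.re) :
    LSeries (fun n => (ArithmeticFunction.vonMangoldt n : ℂ)) s =
      ArithmeticFunction.vonMangoldt.LFunctionResidueClassAux (1 : ZMod 1) s + 1 / (s - 1) := by
  have h := ArithmeticFunction.vonMangoldt.eqOn_LFunctionResidueClassAux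
    (isUnit_one : IsUnit (1 : ZMod 1)) hs
  rw [h]
  have : ArithmeticFunction.vonMangoldt.residueClass (1 : ZMod 1) =
      fun n => ArithmeticFunction.vonMangoldt n := by
    ext n
    rw [ArithmeticFunction.vonMangoldt.residueClass, Set.indicator_of_mem]
    exact Subsingleton.elim (n : ZMod 1) 1
  rw [this]
  simp

lemma fourier_psiError {ε : ℝ} (hε : 0 < ε) (t : ℝ) :
    𝓕 (fun u : ℝ => ((psiError u * rexp (-ε * u) : ℝ) : ℂ)) t =
      psiErrorTransform (ε + 2 * π * t * Complex.I) := by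
  set z : ℂ := ε + 2 * π * t * Complex.I with hz
  have hzre : z.re = ε := by simp [hz]
  have hexp : ∀ u : ℝ, ‖Complex.exp (-z * u)‖ = rexp (-ε * u) := by
    intro u
    rw [Complex.norm_exp]
    simp [hzre]
  have hi2 : IntegrableOn (fun u : ℝ => Complex.exp (-z * u)) (Set.Ioi 0) :=
    integrableOn_exp_mul_complex_Ioi (by simpa [hzre] using hε) 0
  have hi1 : IntegrableOn (fun u : ℝ => (Chebyshev.psi (rexp u) : ℂ) * Complex.exp (-(1 + z) * u))
      (Set.Ioi 0) := by
    have hmeas : Measurable fun u : ℝ => (Chebyshev.psi (rexp u) : ℂ) :=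
      Complex.measurable_ofReal.comp (Chebyshev.psi_mono.measurable.comp measurable_exp)
    refine ((exp_neg_integrableOn_Ioi 0 hε).const_mul (Real.log 4 + 4)).mono'
      (hmeas.mul (by fun_prop)).aestronglyMeasurable (.of_forall fun u => ?_)
    have : Complex.exp (-(1 + z) * u) = (rexp (-u) : ℂ) * Complex.exp (-z * u) := by
      rw [Complex.ofReal_exp, ← Complex.exp_add]
      congr 1
      push_cast
      ring
    rw [this, ← mul_assoc, norm_mul, hexp, ← Complex.ofReal_mul, Complex.norm_real,
      Real.norm_of_nonneg (mul_nonneg (Chebyshev.psi_nonneg _) (exp_pos _).le)]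
    gcongr
    exact psi_exp_mul_exp_neg_le u
  have h1 : 𝓕 (fun u : ℝ => ((psiError u * rexp (-ε * u) : ℝ) : ℂ)) t =
      ∫ u in Set.Ioi (0 : ℝ), ((Chebyshev.psi (rexp u) : ℂ) * Complex.exp (-(1 + z) * u) -
        Complex.exp (-z * u)) := by
    rw [Real.fourier_real_eq_integral_exp_smul, ← integral_indicator measurableSet_Ioi]
    congr 1 with u
    rcases le_or_gt u 0 with hu | hu
    · rw [psiError_of_nonpos hu, Set.indicator_of_notMem (by simpa using hu)]
      simp
    · rw [psiError_of_pos hu, Set.indicator_of_mem (by exact hu)]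
      have e1 : Complex.exp (-z * u) =
          Complex.exp (↑(-2 * π * u * t) * Complex.I) * (rexp (-ε * u) : ℂ) := by
        rw [Complex.ofReal_exp, ← Complex.exp_add]
        congr 1
        rw [hz]
        push_cast
        ring
      have e2 : Complex.exp (-(1 + z) * u) = (rexp (-u) : ℂ) * Complex.exp (-z * u) := by
        rw [Complex.ofReal_exp, ← Complex.exp_add]
        congr 1
        push_cast
        ring
      rw [e2, e1, smul_eq_mul]
      push_cast
      ring
  have hre : 1 < (1 + z).re := by simpa [hzre] using hε
  have hz0 : z ≠ 0 := fun h => by rw [h] at hzre; simp at hzre; linarith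
  have hz1 : 1 + z ≠ 0 := fun h => by rw [h] at hre; simp at hre; linarith
  have h2 := LSeries_vonMangoldt_eq_integral hre
  rw [integral_psi_mul_cpow, LSeries_vonMangoldt_eq_aux hre] at h2
  rw [h1, integral_sub hi1 hi2, integral_exp_mul_complex_Ioi (by simpa [hzre] using hε),
    ← mul_right_inj' hz1, mul_sub, ← h2, psiErrorTransform]
  simp only [Complex.ofReal_zero, mul_zero, Complex.exp_zero, add_sub_cancel_left]
  field_simp
  ring

/-! ### The prime number theorem -/

/-- By monotonicity of `ψ`, the quantity `ψ(e^u) e^{-u}` shrinks by a factor at most `e^{-(v - u)}`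
between `u` and `v`. -/
lemma psiError_slowly_decreasing {a : ℝ} (ha : 0 < a) :
    ∃ δ > 0, ∀ᶠ u in atTop, ∀ v ∈ Set.Icc u (u + δ), psiError u - a ≤ psiError v := by
  have h4 : 0 ≤ Real.log 4 := Real.log_nonneg (by norm_num)
  refine ⟨a / (Real.log 4 + 4), by positivity, ?_⟩
  filter_upwards [eventually_gt_atTop 0] with u hu v hv
  rw [psiError_of_pos hu, psiError_of_pos (hu.trans_le hv.1)]
  set B := Chebyshev.psi (rexp u) * rexp (-u) with hB
  have hB0 : 0 ≤ B := mul_nonneg (Chebyshev.psi_nonneg _) (exp_pos _).le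
  have hB1 : B ≤ Real.log 4 + 4 := psi_exp_mul_exp_neg_le u
  have h1 : B * rexp (u - v) ≤ Chebyshev.psi (rexp v) * rexp (-v) := by
    rw [hB, mul_assoc, ← Real.exp_add, show -u + (u - v) = -v by ring]
    gcongr
    exact hv.1
  have h2 : u - v + 1 ≤ rexp (u - v) := Real.add_one_le_exp _
  have h3 : v - u ≤ a / (Real.log 4 + 4) := by linarith [hv.2]
  rw [le_div_iff₀ (by positivity)] at h3
  have h5 : 0 ≤ v - u := by linarith [hv.1]
  nlinarith [mul_le_mul_of_nonneg_left hB1 h5, mul_le_mul_of_nonneg_left h2 hB0]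

/-- The Tauberian theorem applied with the kernels `w ↦ l * K (l * w)`, the Fourier transforms of
`t ↦ k (t / l)`. -/
lemma tendsto_psiError : Tendsto psiError atTop (nhds 0) := by
  obtain ⟨k, K, hk, hkc, hK0, hKi, hKpos, hkK⟩ := exists_kernel
  refine tendsto_of_slowly_decreasing measurable_psiError abs_psiError_le hK0 hKi hKpos
    (fun l hl => ?_) (fun a ha => psiError_slowly_decreasing ha)
  have hscale : ∀ w : ℝ, 𝓕 (fun t => k (t / l)) w = ((l * K (l * w) : ℝ) : ℂ) := by
    intro w
    rw [Complex.ofReal_mul, ← hkK, Real.fourier_real_eq, Real.fourier_real_eq]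
    have := Measure.integral_comp_div (fun t : ℝ => 𝐞 (-(t * (l * w))) • k t) l
    rw [abs_of_pos hl, Complex.real_smul] at this
    rw [← this]
    congr 1 with t
    congr 3
    field_simp
  have hFint : Integrable (𝓕 fun t => k (t / l)) := by
    rw [show 𝓕 (fun t => k (t / l)) = fun w => ((l * K (l * w) : ℝ) : ℂ) from funext hscale]
    exact ((hKi.comp_mul_left' hl.ne').const_mul l).ofReal
  have hkc' : HasCompactSupport fun t => k (t / l) :=
    hkc.comp_homeomorph (Homeomorph.mulRight₀ l⁻¹ (inv_ne_zero hl.ne'))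
  have main := tendsto_integral_mul_fourier measurable_psiError abs_psiError_le
    (fun u hu => psiError_of_nonpos hu) continuousOn_psiErrorTransform
    (fun ε hε t => fourier_psiError hε t) (k := fun t => k (t / l)) (by fun_prop) hkc' hFint
  have hre := (Complex.continuous_re.tendsto 0).comp main
  rw [Complex.zero_re] at hre
  refine hre.congr fun y => ?_
  simp only [Function.comp, hscale, ← Complex.ofReal_mul]
  rw [integral_complex_ofReal, Complex.ofReal_re, ← integral_add_right_eq_self _ y]
  have := Measure.integral_comp_div (fun v : ℝ => psiError (v + y) * (l * K (l * v))) l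
  rw [abs_of_pos hl, smul_eq_mul, ← integral_const_mul] at this
  simp only [add_sub_cancel_right]
  rw [← mul_right_inj' hl.ne', ← integral_const_mul, ← this, ← integral_const_mul]
  congr 1 with v
  rw [mul_div_cancel₀ _ hl.ne', add_comm]
  ring

lemma tendsto_psi_div_self : Tendsto (fun x : ℝ => Chebyshev.psi x / x) atTop (nhds 1) := by
  have h := (tendsto_psiError.comp Real.tendsto_log_atTop).add_const 1
  rw [zero_add] at h
  refine h.congr' ?_
  filter_upwards [eventually_gt_atTop 1] with x hx
  have hx0 : 0 < x := zero_lt_one.trans hx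
  rw [Function.comp, psiError_of_pos (Real.log_pos hx), Real.exp_neg, Real.exp_log hx0]
  ring

lemma tendsto_theta_div_self : Tendsto (fun x : ℝ => Chebyshev.theta x / x) atTop (nhds 1) := by
  obtain ⟨C, hC⟩ := Chebyshev.psi_sub_theta_le_mul_sqrt
  have h0 : Tendsto (fun x : ℝ => (Chebyshev.psi x - Chebyshev.theta x) / x) atTop (nhds 0) := by
    have hs : Tendsto (fun x : ℝ => C * (√x)⁻¹) atTop (nhds 0) := by
      simpa using Real.tendsto_sqrt_atTop.inv_tendsto_atTop.const_mul C
    refine squeeze_zero' ?_ ?_ hs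
    · filter_upwards [eventually_gt_atTop 0] with x hx
      exact div_nonneg (sub_nonneg.2 (Chebyshev.theta_le_psi x)) hx.le
    · filter_upwards [eventually_gt_atTop 0] with x hx
      rw [div_le_iff₀ hx, mul_assoc]
      refine (hC x).trans_eq ?_
      congr 1
      rw [eq_inv_mul_iff_mul_eq₀ (Real.sqrt_pos.2 hx).ne', Real.mul_self_sqrt hx.le]
  have := tendsto_psi_div_self.sub h0
  rw [sub_zero] at this
  exact this.congr fun x => by ring

/-- `ln(p#) = p·(1+o(1))` as `p → ∞` along the primes; equivalently
`ln(p#)/p → 1` over primes (Chebyshev's theta function `θ(p)` is asymptotic to `p`). -/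
theorem log_primorial_div_self_tendsto_one :
    Tendsto (fun p : ℕ => Real.log (primorial p) / (p : ℝ))
      (atTop ⊓ Filter.principal {p : ℕ | p.Prime}) (nhds 1) := by
  refine Tendsto.mono_left ?_ inf_le_left
  refine (tendsto_theta_div_self.comp tendsto_natCast_atTop_atTop).congr fun p => ?_
  rw [Function.comp, Chebyshev.theta_eq_log_primorial, Nat.floor_natCast]
end
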